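/- arXiv:2007.12742 — 2 statements merged into one kernel-verified Lean document; each statement's English description precedes it below -/
import Mathlib

section
/- Let d ∈ ℕ. There exists a constant C(d) > 0 depending only on d such that for every n ∈ ℕ, every Gaussian random vector X in ℝⁿ, and every non-constant polynomial g on ℝⁿ of total degree at most d, the distribution of g(X) has a density ϱ_g satisfying ω(ϱ_g, ε) = sup_{|h| ≤ ε} ∫_ℝ |ϱ_g(s+h) − ϱ_g(s)| ds ≤ C(d) [𝔻g(X)]^{−1/(2d)} ε^{1/d} for all ε > 0, where 𝔻g(X) := 𝔼(g(X) − 𝔼g(X))² is the variance of g(X). In particular ϱ_g belongs to the Nikolskii–Besov space B^{1/d}_{1,∞}(ℝ). -/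
/-!
The theorem is dual to a smoothing inequality for the standard Gaussian measure on `ℝⁿ`: for a
polynomial `g` of degree at most `d`, a weight `U²` with `U` a polynomial, and a `C¹` function `φ`
with `|φ| ≤ A`, `|φ'| ≤ B`,
`|𝔼 φ'(g) U²| ≤ C A^(1/d) B^(1-1/d) (Var g)^(-1/(2d)) 𝔼 U²`,
where `C` depends only on `d` and on the degree of `U` (`MI`). It is proved by induction on `d`.

Let `x, y` be independent standard Gaussian vectors. The law of `(x, y)` is invariant under the
rotations `rot θ`, and along a rotation orbit `φ'(g(x)) ∂_y g(x)` is the exact derivative of `φ(g)`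
in `θ` (`ibp`). Polynomials become trigonometric polynomials in `θ`, so a kernel
`p / (p² + r² + δ²)` with `p = ∂_y g` is monotone between boundedly many angles and has total
variation `O(1/δ)` (`kernel_bounds`). Integrating by parts therefore gives
`|𝔼 φ'(g) U² p² / (p² + r² + δ²)| ≤ C (A/δ) 𝔼 U²`, uniformly in the dimension and in the polynomial
`r` (`term_one`). With two independent directions `y₁, y₂`, write
`1 = p₁²/q + p₂²/q + δ²/q`, where `pᵢ = ∂_{yᵢ} g` and `q = p₁² + p₂² + δ²`. The first two terms are
handled by `term_one`. The last one lives where both derivatives are small: for fixed `y`, `∂_y g`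
has degree at most `d - 1`, and the induction hypothesis with an arctangent as test function bounds
`𝔼 U² δ²/((∂_y g)² + δ²)` by a power of `δ / ‖∂_y g‖_{L²}` (`smallBall_bound`). Taking the geometric
mean of the two directions halves the exponent, so that the negative moments of `‖∂_y g‖_{L²}` in `y`
are finite (`neg_moment`); by the Poincaré inequality they are controlled by `Var g`. This gives
`|𝔼 φ'(g) U²| ≤ C (A/δ + B (δ²/Var g)^(1/(2(d-1)))) 𝔼 U²` (`MI_step_delta`), and the optimal `δ`
closes the induction (`MI_step`).

Applied to `U = 1` and `φ(s) = ∫_s^{s+h} ψ` with `ψ` continuous and `|ψ| ≤ 1`, the inequality bounds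
`𝔼 (ψ(g + h) - ψ(g))` by `C (Var g)^(-1/(2d)) |h|^(1/d)`. This extends to measurable `ψ`, forces the
law of `g` to be absolutely continuous, and, for `ψ` the sign of a difference of densities, is the
asserted bound on the `L¹` modulus (`exists_density`). A general Gaussian vector is an affine image
of a standard one, and `g (b + L x)` is again a polynomial of degree at most `d` (`affineComp`).
-/

open MeasureTheory ProbabilityTheory

/-- The `L¹` modulus of continuity `ω(ϱ, ε) = sup_{|h| ≤ ε} ∫ |ϱ(s+h) − ϱ(s)| ds`. -/
noncomputable def omegaMod (ρ : ℝ → ℝ) (ε : ℝ) : ℝ :=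
  sSup {r : ℝ | ∃ h : ℝ, |h| ≤ ε ∧ r = ∫ s : ℝ, |ρ (s + h) - ρ s|}

/-- The standard Gaussian measure on `ℝⁿ` (i.i.d. `N(0,1)` coordinates). -/
noncomputable def stdGaussian (n : ℕ) : Measure (Fin n → ℝ) :=
  Measure.pi fun _ => gaussianReal 0 1

/-- A (possibly degenerate) Gaussian distribution on `ℝⁿ`: the image of the standard
Gaussian measure under an affine map. -/
def IsGaussianVec {n : ℕ} (μ : Measure (Fin n → ℝ)) : Prop :=
  ∃ (L : (Fin n → ℝ) →ₗ[ℝ] (Fin n → ℝ)) (b : Fin n → ℝ),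
    μ = (stdGaussian n).map (fun x => b + L x)

namespace GaussPoly

/-! ### Trigonometric polynomials -/

/-- `f` is a real trigonometric polynomial of degree at most `m`. This is encoded by the requirement
that `f(θ) e^{imθ}` be a complex polynomial of degree at most `2m` in `e^{iθ}`. -/
def Trig (m : ℕ) (f : ℝ → ℝ) : Prop :=
  ∃ P : Polynomial ℂ, P.natDegree ≤ 2 * m ∧
    ∀ θ : ℝ, (f θ : ℂ) * Complex.exp (θ * Complex.I) ^ m =
      P.eval (Complex.exp (θ * Complex.I))

lemma Trig.mono {m m' : ℕ} {f : ℝ → ℝ} (h : Trig m f) (hm : m ≤ m') : Trig m' f := by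
  obtain ⟨P, hP, hf⟩ := h
  refine ⟨P * Polynomial.X ^ (m' - m), ?_, fun θ => ?_⟩
  · refine Polynomial.natDegree_mul_le.trans ?_
    rw [Polynomial.natDegree_X_pow]; omega
  · rw [Polynomial.eval_mul, Polynomial.eval_pow, Polynomial.eval_X, ← hf, mul_assoc, ← pow_add]
    congr 2; omega

lemma Trig.const (c : ℝ) : Trig 0 (fun _ => c) :=
  ⟨Polynomial.C (c : ℂ), by simp, fun θ => by simp⟩

lemma Trig.add {m : ℕ} {f g : ℝ → ℝ} (hf : Trig m f) (hg : Trig m g) :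
    Trig m (fun θ => f θ + g θ) := by
  obtain ⟨P, hP, hf⟩ := hf
  obtain ⟨Q, hQ, hg⟩ := hg
  refine ⟨P + Q, ?_, fun θ => ?_⟩
  · exact (Polynomial.natDegree_add_le _ _).trans (max_le hP hQ)
  · rw [Polynomial.eval_add, ← hf, ← hg]; push_cast; ring

lemma Trig.mul {m k : ℕ} {f g : ℝ → ℝ} (hf : Trig m f) (hg : Trig k g) :
    Trig (m + k) (fun θ => f θ * g θ) := by
  obtain ⟨P, hP, hf⟩ := hf
  obtain ⟨Q, hQ, hg⟩ := hg
  refine ⟨P * Q, ?_, fun θ => ?_⟩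
  · refine Polynomial.natDegree_mul_le.trans ?_
    omega
  · rw [Polynomial.eval_mul, ← hf, ← hg]; push_cast; ring

lemma Trig.const_mul {m : ℕ} {f : ℝ → ℝ} (c : ℝ) (hf : Trig m f) :
    Trig m (fun θ => c * f θ) := by
  simpa using (Trig.const c).mul hf

lemma Trig.pow {m : ℕ} {f : ℝ → ℝ} (hf : Trig m f) (k : ℕ) :
    Trig (k * m) (fun θ => f θ ^ k) := by
  induction k with
  | zero => simpa using Trig.const 1
  | succ k ih =>
    have := ih.mul hf
    simpa [pow_succ, Nat.succ_mul] using this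

lemma Trig.sum {ι : Type*} {m : ℕ} (s : Finset ι) {f : ι → ℝ → ℝ}
    (hf : ∀ i ∈ s, Trig m (f i)) : Trig m (fun θ => ∑ i ∈ s, f i θ) := by
  classical
  induction s using Finset.induction_on with
  | empty => simpa using (Trig.const 0).mono (Nat.zero_le m)
  | insert a s ha ih =>
    simp only [Finset.sum_insert ha]
    exact (hf a (by simp)).add (ih fun i hi => hf i (by simp [hi]))

lemma Trig.prod {ι : Type*} (s : Finset ι) {m : ι → ℕ} {f : ι → ℝ → ℝ}
    (hf : ∀ i ∈ s, Trig (m i) (f i)) : Trig (∑ i ∈ s, m i) (fun θ => ∏ i ∈ s, f i θ) := by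
  classical
  induction s using Finset.induction_on with
  | empty => simpa using Trig.const 1
  | insert a s ha ih =>
    simp only [Finset.sum_insert ha, Finset.prod_insert ha]
    exact (hf a (by simp)).mul (ih fun i hi => hf i (by simp [hi]))

lemma Trig.cos : Trig 1 Real.cos := by
  refine ⟨Polynomial.C (1 / 2) * (Polynomial.X ^ 2 + 1), by compute_degree, fun θ => ?_⟩
  have : Complex.exp (-(θ * Complex.I)) * Complex.exp (θ * Complex.I) = 1 := by
    rw [← Complex.exp_add]; simp
  simp only [Complex.ofReal_cos, Complex.cos, neg_mul, Polynomial.eval_mul, Polynomial.eval_C,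
    Polynomial.eval_add, Polynomial.eval_pow, Polynomial.eval_X, Polynomial.eval_one]
  linear_combination (1 / 2) * this

lemma Trig.sin : Trig 1 Real.sin := by
  refine ⟨Polynomial.C (Complex.I / 2) * (1 - Polynomial.X ^ 2), by compute_degree, fun θ => ?_⟩
  have : Complex.exp (-(θ * Complex.I)) * Complex.exp (θ * Complex.I) = 1 := by
    rw [← Complex.exp_add]; simp
  simp only [Complex.ofReal_sin, Complex.sin, neg_mul, Polynomial.eval_mul, Polynomial.eval_C,
    Polynomial.eval_sub, Polynomial.eval_pow, Polynomial.eval_X, Polynomial.eval_one]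
  linear_combination (Complex.I / 2) * this

lemma hasDerivAt_expI (θ : ℝ) : HasDerivAt (fun θ : ℝ => Complex.exp (θ * Complex.I))
    (Complex.exp (θ * Complex.I) * Complex.I) θ := by
  have h := ((hasDerivAt_id θ).ofReal_comp.mul_const Complex.I).cexp
  simpa using h

lemma Trig.contDiff {m : ℕ} {f : ℝ → ℝ} (hf : Trig m f) : ContDiff ℝ 2 f := by
  obtain ⟨P, hP, hf⟩ := hf
  have h1 : f = fun θ : ℝ => (P.eval (Complex.exp (θ * Complex.I)) *
      Complex.exp (-(θ * Complex.I)) ^ m).re := by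
    ext θ
    rw [← hf, mul_assoc, ← mul_pow, ← Complex.exp_add]; simp
  rw [h1]
  have he : ContDiff ℝ 2 (fun θ : ℝ => Complex.exp (θ * Complex.I)) := by
    have : ContDiff ℝ 2 (fun θ : ℝ => (θ : ℂ)) := Complex.ofRealCLM.contDiff
    fun_prop
  have he' : ContDiff ℝ 2 (fun θ : ℝ => Complex.exp (-(θ * Complex.I)) ^ m) := by
    have : ContDiff ℝ 2 (fun θ : ℝ => (θ : ℂ)) := Complex.ofRealCLM.contDiff
    fun_prop
  have hp : ContDiff ℝ 2 (fun θ : ℝ => P.eval (Complex.exp (θ * Complex.I))) := by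
    have : ∀ θ : ℝ, P.eval (Complex.exp (θ * Complex.I)) =
      Polynomial.aeval (Complex.exp (θ * Complex.I)) P := fun θ => by simp
    have h3 : ContDiff ℝ 2 (fun z : ℂ => P.eval z) := by
      have : ContDiff ℂ 2 (fun z : ℂ => Polynomial.aeval z P) := P.contDiff_aeval 2
      simpa using this.restrict_scalars ℝ
    exact h3.comp he
  exact Complex.reCLM.contDiff.comp (hp.mul he')

lemma Trig.deriv {m : ℕ} {f : ℝ → ℝ} (hf : Trig m f) : Trig m (deriv f) := by
  have hd : Differentiable ℝ f := hf.contDiff.differentiable (by norm_num)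
  obtain ⟨P, hP, hf⟩ := hf
  refine ⟨Polynomial.C Complex.I * (Polynomial.X * P.derivative - Polynomial.C (m : ℂ) * P),
    ?_, fun θ => ?_⟩
  · refine (Polynomial.natDegree_C_mul_le _ _).trans ((Polynomial.natDegree_sub_le _ _).trans
      (max_le ?_ ((Polynomial.natDegree_C_mul_le _ _).trans hP)))
    by_cases h0 : P.natDegree = 0
    · rw [Polynomial.derivative_of_natDegree_zero h0]
      simp
    · refine Polynomial.natDegree_mul_le.trans ?_
      have := Polynomial.natDegree_derivative_lt h0
      have h2 : (Polynomial.X : Polynomial ℂ).natDegree = 1 := Polynomial.natDegree_X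
      omega
  · have h1 : HasDerivAt (fun θ : ℝ => (f θ : ℂ) * Complex.exp (θ * Complex.I) ^ m) _ θ :=
      (hd θ).hasDerivAt.ofReal_comp.mul ((hasDerivAt_expI θ).pow m)
    have h2 : HasDerivAt (fun θ : ℝ => P.eval (Complex.exp (θ * Complex.I))) _ θ :=
      HasDerivAt.comp (h₂ := fun z : ℂ => P.eval z) θ
        (P.hasDerivAt (Complex.exp (θ * Complex.I))) (hasDerivAt_expI θ)
    have h3 := h1.unique ((funext hf : _ = _) ▸ h2)
    simp only [Polynomial.eval_mul, Polynomial.eval_sub, Polynomial.eval_C, Polynomial.eval_X,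
      ← hf]
    cases m with
    | zero => simp at h3 ⊢; rw [h3]; ring
    | succ k =>
      simp only [Nat.succ_sub_one] at h3
      push_cast at h3 ⊢
      linear_combination h3

lemma expI_inj {a b : ℝ} (ha : a ∈ Set.Icc (0 : ℝ) 1) (hb : b ∈ Set.Icc (0 : ℝ) 1)
    (h : Complex.exp (a * Complex.I) = Complex.exp (b * Complex.I)) : a = b := by
  have h1 := Complex.arg_exp_mul_I a
  have h2 := Complex.arg_exp_mul_I b
  have hpi := Real.pi_gt_three
  rw [toIocMod_eq_self _ |>.2 ⟨by linarith [ha.1], by linarith [ha.2]⟩] at h1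
  rw [toIocMod_eq_self _ |>.2 ⟨by linarith [hb.1], by linarith [hb.2]⟩] at h2
  rw [← h1, ← h2, h]

/-- A trigonometric polynomial of degree `m` that does not vanish identically has at most `2 m`
zeros in `(0, 1)`. -/
lemma Trig.zeros {m : ℕ} {f : ℝ → ℝ} (hf : Trig m f) :
    (∀ θ, f θ = 0) ∨ ∃ s : Finset ℝ, s.card ≤ 2 * m ∧ ∀ θ ∈ Set.Ioo (0 : ℝ) 1, f θ = 0 → θ ∈ s := by
  classical
  obtain ⟨P, hP, hf⟩ := hf
  by_cases h0 : P = 0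
  · left
    intro θ
    have := hf θ
    simpa [h0, Complex.exp_ne_zero] using this
  right
  have hfin : ({θ : ℝ | θ ∈ Set.Ioo (0 : ℝ) 1 ∧ f θ = 0}).Finite ∧
      ({θ : ℝ | θ ∈ Set.Ioo (0 : ℝ) 1 ∧ f θ = 0}).ncard ≤ 2 * m := by
    have hmap : Set.MapsTo (fun θ : ℝ => Complex.exp (θ * Complex.I))
        {θ : ℝ | θ ∈ Set.Ioo (0 : ℝ) 1 ∧ f θ = 0} (P.roots.toFinset : Set ℂ) := by
      rintro θ ⟨-, hθ⟩
      have := hf θ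
      simp only [Finset.mem_coe, Multiset.mem_toFinset, Polynomial.mem_roots h0,
        Polynomial.IsRoot]
      rw [← this, hθ]; simp
    have hinj : Set.InjOn (fun θ : ℝ => Complex.exp (θ * Complex.I))
        {θ : ℝ | θ ∈ Set.Ioo (0 : ℝ) 1 ∧ f θ = 0} := fun a ha b hb hab =>
      expI_inj ⟨ha.1.1.le, ha.1.2.le⟩ ⟨hb.1.1.le, hb.1.2.le⟩ hab
    refine ⟨Set.Finite.of_injOn hmap hinj (Finset.finite_toSet _), ?_⟩
    refine (Set.ncard_le_ncard_of_injOn _ hmap hinj (Finset.finite_toSet _)).trans ?_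
    rw [Set.ncard_coe_finset]
    exact (Multiset.toFinset_card_le _).trans ((Polynomial.card_roots' P).trans hP)
  refine ⟨hfin.1.toFinset, ?_, fun θ hθ h => by simp [hθ.1, hθ.2, h]⟩
  rw [← Set.ncard_eq_toFinset_card _ hfin.1]; exact hfin.2

/-- The interpolation nodes used for trigonometric polynomials of degree `m`. -/
noncomputable def node (m j : ℕ) : ℝ := j / (2 * m + 1)

lemma node_mem {m j : ℕ} (hj : j ∈ Finset.range (2 * m + 1)) : node m j ∈ Set.Icc (0 : ℝ) 1 := by
  have : (j : ℝ) ≤ 2 * m + 1 := by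
    have := (Finset.mem_range.1 hj).le
    exact_mod_cast this
  unfold node
  constructor
  · positivity
  · rw [div_le_one (by positivity)]; exact this

/-- Lagrange interpolation: a trigonometric polynomial and its derivative are controlled, with a
constant depending only on the degree, by the values at finitely many fixed nodes. -/
lemma Trig.interp (m : ℕ) : ∃ K : ℝ, 0 ≤ K ∧ ∀ f : ℝ → ℝ, Trig m f → ∀ θ ∈ Set.Icc (0 : ℝ) 2,
    |f θ| ≤ K * ∑ j ∈ Finset.range (2 * m + 1), |f (node m j)| ∧
    |_root_.deriv f θ| ≤ K * ∑ j ∈ Finset.range (2 * m + 1), |f (node m j)| := by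
  classical
  set s := Finset.range (2 * m + 1) with hs
  set v : ℕ → ℂ := fun j => Complex.exp ((node m j : ℝ) * Complex.I) with hv
  have hinj : Set.InjOn v s := by
    intro a ha b hb hab
    have := expI_inj (node_mem ha) (node_mem hb) hab
    unfold node at this
    have h3 : (0 : ℝ) < 2 * m + 1 := by positivity
    field_simp at this
    exact_mod_cast this
  set l : ℕ → ℝ → ℝ := fun j θ => (v j ^ m * (Lagrange.basis s v j).eval
    (Complex.exp (θ * Complex.I)) * Complex.exp (-(θ * Complex.I)) ^ m).re with hl
  have hlc : ∀ j, ContDiff ℝ 2 (l j) := by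
    intro j
    have he : ContDiff ℝ 2 (fun θ : ℝ => Complex.exp (θ * Complex.I)) := by
      have : ContDiff ℝ 2 (fun θ : ℝ => (θ : ℂ)) := Complex.ofRealCLM.contDiff
      fun_prop
    have he' : ContDiff ℝ 2 (fun θ : ℝ => Complex.exp (-(θ * Complex.I)) ^ m) := by
      have : ContDiff ℝ 2 (fun θ : ℝ => (θ : ℂ)) := Complex.ofRealCLM.contDiff
      fun_prop
    have hp : ContDiff ℝ 2 (fun θ : ℝ => (Lagrange.basis s v j).eval
        (Complex.exp (θ * Complex.I))) := by
      have h3 : ContDiff ℝ 2 (fun z : ℂ => (Lagrange.basis s v j).eval z) := by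
        have : ContDiff ℂ 2 (fun z : ℂ => Polynomial.aeval z (Lagrange.basis s v j)) :=
          (Lagrange.basis s v j).contDiff_aeval 2
        simpa using this.restrict_scalars ℝ
      exact h3.comp he
    exact Complex.reCLM.contDiff.comp ((contDiff_const.mul hp).mul he')
  have hrep : ∀ f : ℝ → ℝ, Trig m f → f = fun θ => ∑ j ∈ s, f (node m j) * l j θ := by
    rintro f ⟨P, hP, hf⟩
    ext θ
    have hdeg : P.degree < s.card := by
      rw [hs, Finset.card_range]
      refine Polynomial.degree_le_natDegree.trans_lt ?_
      exact_mod_cast Nat.lt_succ_of_le hP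
    have h1 := Lagrange.eq_interpolate hinj hdeg
    rw [Lagrange.interpolate_apply] at h1
    have h2 := hf θ
    rw [h1, Polynomial.eval_finsetSum] at h2
    have h3 : (f θ : ℂ) = ∑ j ∈ s, (f (node m j) : ℂ) * (v j ^ m * (Lagrange.basis s v j).eval
        (Complex.exp (θ * Complex.I)) * Complex.exp (-(θ * Complex.I)) ^ m) := by
      have h4 : (f θ : ℂ) = ((f θ : ℂ) * Complex.exp (θ * Complex.I) ^ m) *
          Complex.exp (-(θ * Complex.I)) ^ m := by
        rw [mul_assoc, ← mul_pow, ← Complex.exp_add]; simp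
      rw [h4, h2, Finset.sum_mul]
      refine Finset.sum_congr rfl fun j _ => ?_
      rw [Polynomial.eval_mul, Polynomial.eval_C, ← hf (node m j)]
      ring
    have h5 := congrArg Complex.re h3
    rw [Complex.re_sum] at h5
    simpa only [Complex.ofReal_re, Complex.re_ofReal_mul] using h5
  have hb : ∀ j, ∃ K : ℝ, 0 ≤ K ∧ ∀ θ ∈ Set.Icc (0 : ℝ) 2, |l j θ| ≤ K ∧
      |_root_.deriv (l j) θ| ≤ K := by
    intro j
    obtain ⟨K1, hK1⟩ := isCompact_Icc.exists_bound_of_continuousOn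
      (s := Set.Icc (0 : ℝ) 2) (hlc j).continuous.continuousOn
    obtain ⟨K2, hK2⟩ := isCompact_Icc.exists_bound_of_continuousOn
      (s := Set.Icc (0 : ℝ) 2) ((hlc j).continuous_deriv (by norm_num)).continuousOn
    refine ⟨max (max K1 K2) 0, le_max_right _ _, fun θ hθ => ⟨?_, ?_⟩⟩
    · exact (hK1 θ hθ).trans ((le_max_left _ _).trans (le_max_left _ _))
    · exact (hK2 θ hθ).trans ((le_max_right _ _).trans (le_max_left _ _))
  choose K hK0 hK using hb
  have hKs : ∀ j ∈ s, K j ≤ ∑ i ∈ s, K i := fun j hj =>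
    Finset.single_le_sum (f := K) (fun i _ => hK0 i) hj
  refine ⟨∑ j ∈ s, K j, Finset.sum_nonneg fun i _ => hK0 i, fun f hf θ hθ => ⟨?_, ?_⟩⟩
  · conv_lhs => rw [hrep f hf]
    refine (Finset.abs_sum_le_sum_abs _ _).trans ?_
    rw [Finset.mul_sum]
    refine Finset.sum_le_sum fun j hj => ?_
    rw [abs_mul, mul_comm]
    exact mul_le_mul_of_nonneg_right ((hK j θ hθ).1.trans (hKs j hj)) (abs_nonneg _)
  · have hd : HasDerivAt (fun θ => ∑ j ∈ s, f (node m j) * l j θ)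
        (∑ j ∈ s, f (node m j) * _root_.deriv (l j) θ) θ :=
      HasDerivAt.fun_sum fun j _ =>
        (((hlc j).differentiable (by norm_num)) θ).hasDerivAt.const_mul _
    rw [← hrep f hf] at hd
    rw [hd.deriv]
    refine (Finset.abs_sum_le_sum_abs _ _).trans ?_
    rw [Finset.mul_sum]
    refine Finset.sum_le_sum fun j hj => ?_
    rw [abs_mul, mul_comm]
    exact mul_le_mul_of_nonneg_right ((hK j θ hθ).2.trans (hKs j hj)) (abs_nonneg _)

/-- A function whose derivative has no zero on `(a, b)` is monotone there, so its variation on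
`[a, b]` is the increment. -/
lemma tv_le_aux {F F' : ℝ → ℝ} (hF : ∀ t, HasDerivAt F (F' t) t) (hF' : Continuous F') {M : ℝ}
    (hM : ∀ t, |F t| ≤ M) {a b : ℝ} (hab : a ≤ b) (hz : ∀ t ∈ Set.Ioo a b, F' t ≠ 0) :
    ∫ t in a..b, |F' t| ≤ 2 * M := by
  have hFTC : ∫ t in a..b, F' t = F b - F a :=
    intervalIntegral.integral_eq_sub_of_hasDerivAt (fun t _ => hF t) (hF'.intervalIntegrable _ _)
  have hbd : |F b - F a| ≤ 2 * M := by
    have h1 := abs_le.1 (hM a); have h2 := abs_le.1 (hM b)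
    rw [abs_le]; constructor <;> linarith
  have hsign : (∀ t ∈ Set.Ioo a b, 0 < F' t) ∨ (∀ t ∈ Set.Ioo a b, F' t < 0) := by
    by_contra hcon
    push Not at hcon
    obtain ⟨⟨t1, ht1, h1⟩, ⟨t2, ht2, h2⟩⟩ := hcon
    have hpre := (isPreconnected_Ioo (a := a) (b := b)).intermediate_value ht1 ht2
      hF'.continuousOn
    obtain ⟨c, hc, hc0⟩ := hpre ⟨h1, h2⟩
    exact hz c hc hc0
  have hcongr : ∫ t in a..b, |F' t| = |∫ t in a..b, F' t| := by
    rcases hsign with h | h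
    · have : ∫ t in a..b, |F' t| = ∫ t in a..b, F' t := by
        rw [intervalIntegral.integral_of_le hab, intervalIntegral.integral_of_le hab,
          integral_Ioc_eq_integral_Ioo, integral_Ioc_eq_integral_Ioo]
        exact setIntegral_congr_fun measurableSet_Ioo fun t ht => abs_of_pos (h t ht)
      rw [← this, abs_of_nonneg]
      exact intervalIntegral.integral_nonneg hab fun _ _ => abs_nonneg _
    · have : ∫ t in a..b, |F' t| = - ∫ t in a..b, F' t := by
        rw [← intervalIntegral.integral_neg, intervalIntegral.integral_of_le hab,
          intervalIntegral.integral_of_le hab,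
          integral_Ioc_eq_integral_Ioo, integral_Ioc_eq_integral_Ioo]
        exact setIntegral_congr_fun measurableSet_Ioo fun t ht => abs_of_neg (h t ht)
      rw [← abs_neg, ← this, abs_of_nonneg]
      exact intervalIntegral.integral_nonneg hab fun _ _ => abs_nonneg _
  rw [hcongr, hFTC]; exact hbd

/-- If `|F| ≤ M` and all zeros of the derivative `F'` in `(a, b)` lie in the finite set `s`, then
the total variation of `F` on `[a, b]` is at most `2 M (|s| + 1)`. -/
lemma tv_le {F F' : ℝ → ℝ} (hF : ∀ t, HasDerivAt F (F' t) t) (hF' : Continuous F') {M : ℝ}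
    (hM : ∀ t, |F t| ≤ M) (s : Finset ℝ) : ∀ (a b : ℝ), a ≤ b →
    (∀ t ∈ Set.Ioo a b, F' t = 0 → t ∈ s) → ∫ t in a..b, |F' t| ≤ 2 * M * (s.card + 1) := by
  classical
  have hM0 : 0 ≤ M := (abs_nonneg _).trans (hM 0)
  induction s using Finset.strongInduction with
  | H s ih =>
    intro a b hab hz
    by_cases h : ∃ c ∈ Set.Ioo a b, c ∈ s
    · obtain ⟨c, hc, hcs⟩ := h
      have hsplit : ∫ t in a..b, |F' t| = (∫ t in a..c, |F' t|) + ∫ t in c..b, |F' t| :=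
        (intervalIntegral.integral_add_adjacent_intervals (hF'.abs.intervalIntegrable _ _)
          (hF'.abs.intervalIntegrable _ _)).symm
      have h1 := ih (s.filter (· < c)) (Finset.filter_ssubset.2 ⟨c, hcs, lt_irrefl c⟩) a c hc.1.le
        fun t ht h0 => Finset.mem_filter.2 ⟨hz t ⟨ht.1, ht.2.trans hc.2⟩ h0, ht.2⟩
      have h2 := ih (s.filter (c < ·)) (Finset.filter_ssubset.2 ⟨c, hcs, lt_irrefl c⟩) c b hc.2.le
        fun t ht h0 => Finset.mem_filter.2 ⟨hz t ⟨hc.1.trans ht.1, ht.2⟩ h0, ht.1⟩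
      have hcard : (s.filter (· < c)).card + (s.filter (c < ·)).card + 1 ≤ s.card := by
        have hd : Disjoint (s.filter (· < c)) (s.filter (c < ·)) :=
          Finset.disjoint_filter.2 fun t _ h1 h2 => lt_asymm h1 h2
        rw [← Finset.card_union_of_disjoint hd]
        refine Nat.succ_le_of_lt (Finset.card_lt_card ?_)
        rw [Finset.ssubset_iff_of_subset
          (Finset.union_subset (Finset.filter_subset _ _) (Finset.filter_subset _ _))]
        exact ⟨c, hcs, by simp⟩
      have hcard' : ((s.filter (· < c)).card : ℝ) + (s.filter (c < ·)).card + 1 ≤ s.card := by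
        exact_mod_cast hcard
      rw [hsplit]
      nlinarith
    · refine (tv_le_aux hF hF' hM hab fun t ht h0 => h ⟨t, ht, hz t ht h0⟩).trans ?_
      have : (0 : ℝ) ≤ s.card := Nat.cast_nonneg _
      nlinarith [mul_nonneg hM0 this]

/-! ### Gaussian measure, polynomial growth, directional derivatives and rotations -/

/-- The standard Gaussian measure on `ℝⁿ`. -/
noncomputable abbrev γ (n : ℕ) : Measure (Fin n → ℝ) := _root_.stdGaussian n

instance isGaussian_γ (n : ℕ) : IsGaussian (γ n) := by
  have h := map_pi_eq_stdGaussian (ι := Fin n)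
  have h2 : γ n = (ProbabilityTheory.stdGaussian (EuclideanSpace ℝ (Fin n))).map
      (EuclideanSpace.equiv (Fin n) ℝ) := by
    rw [← h, Measure.map_map (by fun_prop) (by fun_prop)]
    have : (EuclideanSpace.equiv (Fin n) ℝ : EuclideanSpace ℝ (Fin n) → (Fin n → ℝ)) ∘
      (WithLp.toLp 2) = id := by ext x; simp
    rw [this, Measure.map_id]; rfl
  rw [h2]; infer_instance

/-- The law of `y ↦ ∑ yᵢ vᵢ` is centred Gaussian with variance `∑ vᵢ²`. -/
lemma map_linForm (n : ℕ) (v : Fin n → ℝ) :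
    (γ n).map (fun y => ∑ i, y i * v i) =
      (gaussianReal 0 1).map (fun z => √(∑ i, v i ^ 2) * z) := by
  let L : StrongDual ℝ (Fin n → ℝ) := ∑ i, v i • ContinuousLinearMap.proj (R := ℝ) i
  have hL : (fun y : Fin n → ℝ => ∑ i, y i * v i) = L := by
    ext y; simp [L, mul_comm]
  have hL' : (L : (Fin n → ℝ) → ℝ) = ∑ i, (fun x : Fin n → ℝ ↦ v i * x i) := by
    ext y; simp [L]
  rw [hL, IsGaussian.map_eq_gaussianReal L, gaussianReal_map_const_mul]
  have hvar : Var[L; γ n] = ∑ i, v i ^ 2 := by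
    rw [hL']
    change Var[_; Measure.pi fun _ => gaussianReal 0 1] = _
    rw [variance_sum_pi (X := fun i (x : ℝ) => v i * x)]
    · change ∑ i, Var[fun x ↦ _ * (id x); gaussianReal 0 1] = _
      simp_rw [variance_const_mul, variance_id_gaussianReal]
      simp
    · exact fun i ↦ IsGaussian.memLp_two_id.const_mul _
  have hmean : (γ n)[L] = 0 := by
    have : ∀ i, ∫ x, x i ∂(γ n) = 0 := by
      intro i
      change ∫ x : Fin n → ℝ, x i ∂(Measure.pi fun _ => gaussianReal 0 1) = 0
      rw [integral_eval]; simp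
    have h2 : ∀ x, L x = ∑ i, v i * x i := by intro x; simp [L]
    simp_rw [h2]
    rw [integral_finsetSum]
    · simp_rw [integral_const_mul, this]; simp
    · intro i _
      refine Integrable.const_mul ?_ _
      have h3 : Integrable (fun y : Fin n → ℝ => y) (γ n) := IsGaussian.integrable_id
      exact (ContinuousLinearMap.proj (R := ℝ) (φ := fun _ : Fin n => ℝ) i).integrable_comp h3
  rw [hmean, hvar]
  congr 1
  · simp
  · ext
    have h0 : 0 ≤ ∑ i, v i ^ 2 := Finset.sum_nonneg fun i _ => sq_nonneg _
    simp [Real.sq_sqrt h0, h0]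

lemma γ_mean (n : ℕ) : (γ n)[id] = 0 := by
  have h : ∫ x, x ∂(γ n) = 0 := by
    ext i
    have h1 := (ContinuousLinearMap.proj (R := ℝ) (φ := fun _ : Fin n => ℝ) i).integral_comp_id_comm
      (μ := γ n) IsGaussian.integrable_id
    have h2 : (ContinuousLinearMap.proj (R := ℝ) (φ := fun _ : Fin n => ℝ) i) (∫ x, x ∂(γ n)) =
      (∫ x, x ∂(γ n)) i := rfl
    rw [← h2, ← h1]
    change ∫ x : Fin n → ℝ, x i ∂(Measure.pi fun _ => gaussianReal 0 1) = 0
    rw [integral_eval]; simp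
  simpa using h

section PG
variable {E F : Type*} [NormedAddCommGroup E] [NormedAddCommGroup F]

/-- Continuous functions of at most polynomial growth. -/
def PG (f : E → ℝ) : Prop :=
  Continuous f ∧ ∃ (C : ℝ) (N : ℕ), ∀ x, |f x| ≤ C * (1 + ‖x‖) ^ N

lemma PG.continuous {f : E → ℝ} (h : PG f) : Continuous f := h.1

lemma PG.exists_bound {f : E → ℝ} (h : PG f) :
    ∃ (C : ℝ) (N : ℕ), 0 ≤ C ∧ ∀ x, |f x| ≤ C * (1 + ‖x‖) ^ N := by
  obtain ⟨_, C, N, h⟩ := h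
  refine ⟨C, N, ?_, h⟩
  have := (abs_nonneg _).trans (h 0)
  simpa using this

lemma PG.of_bdd {f : E → ℝ} (hf : Continuous f) (C : ℝ) (h : ∀ x, |f x| ≤ C) : PG f :=
  ⟨hf, C, 0, by simpa using h⟩

lemma PG.const (c : ℝ) : PG (fun _ : E => c) := PG.of_bdd continuous_const |c| fun _ => le_rfl

lemma PG.add {f g : E → ℝ} (hf : PG f) (hg : PG g) : PG (fun x => f x + g x) := by
  obtain ⟨C, N, hC, h1⟩ := hf.exists_bound
  obtain ⟨D, M, hD, h2⟩ := hg.exists_bound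
  refine ⟨hf.1.add hg.1, C + D, N + M, fun x => ?_⟩
  have h0 : (1 : ℝ) ≤ 1 + ‖x‖ := by linarith [norm_nonneg x]
  have e1 : (1 + ‖x‖) ^ N ≤ (1 + ‖x‖) ^ (N + M) := pow_le_pow_right₀ h0 (by omega)
  have e2 : (1 + ‖x‖) ^ M ≤ (1 + ‖x‖) ^ (N + M) := pow_le_pow_right₀ h0 (by omega)
  calc |f x + g x| ≤ |f x| + |g x| := abs_add_le _ _
    _ ≤ C * (1 + ‖x‖) ^ N + D * (1 + ‖x‖) ^ M := add_le_add (h1 x) (h2 x)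
    _ ≤ C * (1 + ‖x‖) ^ (N + M) + D * (1 + ‖x‖) ^ (N + M) := by gcongr
    _ = _ := by ring

lemma PG.mul {f g : E → ℝ} (hf : PG f) (hg : PG g) : PG (fun x => f x * g x) := by
  obtain ⟨C, N, hC, h1⟩ := hf.exists_bound
  obtain ⟨D, M, hD, h2⟩ := hg.exists_bound
  refine ⟨hf.1.mul hg.1, C * D, N + M, fun x => ?_⟩
  rw [abs_mul]
  calc |f x| * |g x| ≤ (C * (1 + ‖x‖) ^ N) * (D * (1 + ‖x‖) ^ M) :=
        mul_le_mul (h1 x) (h2 x) (abs_nonneg _) ((abs_nonneg _).trans (h1 x))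
    _ = _ := by rw [pow_add]; ring

lemma PG.const_mul {f : E → ℝ} (c : ℝ) (hf : PG f) : PG (fun x => c * f x) := (PG.const c).mul hf

lemma PG.sub {f g : E → ℝ} (hf : PG f) (hg : PG g) : PG (fun x => f x - g x) := by
  simpa [sub_eq_add_neg] using hf.add (hg.const_mul (-1))

lemma PG.pow {f : E → ℝ} (hf : PG f) (k : ℕ) : PG (fun x => f x ^ k) := by
  induction k with
  | zero => simpa using PG.const (E := E) 1
  | succ k ih => simpa [pow_succ] using ih.mul hf

lemma PG.abs {f : E → ℝ} (hf : PG f) : PG (fun x => |f x|) := by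
  obtain ⟨hc, C, N, h⟩ := hf
  exact ⟨hc.abs, C, N, by simpa using h⟩

lemma PG.sum {ι : Type*} (s : Finset ι) {f : ι → E → ℝ} (hf : ∀ i ∈ s, PG (f i)) :
    PG (fun x => ∑ i ∈ s, f i x) := by
  classical
  induction s using Finset.induction_on with
  | empty => simpa using PG.const (E := E) 0
  | insert a s ha ih =>
    simp only [Finset.sum_insert ha]
    exact (hf a (by simp)).add (ih fun i hi => hf i (by simp [hi]))

lemma PG.mono {f g : E → ℝ} (hg : PG g) (hf : Continuous f) (h : ∀ x, |f x| ≤ g x) : PG f := by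
  obtain ⟨_, C, N, h2⟩ := hg
  exact ⟨hf, C, N, fun x => (h x).trans ((le_abs_self _).trans (h2 x))⟩

lemma PG.comp {f : F → ℝ} (hf : PG f) {u : E → F} (hu : Continuous u) (K : ℝ)
    (h : ∀ x, ‖u x‖ ≤ K * ‖x‖) : PG (fun x => f (u x)) := by
  obtain ⟨C, N, hC, h1⟩ := hf.exists_bound
  refine ⟨hf.1.comp hu, C * (1 + |K|) ^ N, N, fun x => (h1 _).trans ?_⟩
  rw [mul_assoc, ← mul_pow]
  have h3 : K * ‖x‖ ≤ |K| * ‖x‖ := by gcongr; exact le_abs_self K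
  have : 1 + ‖u x‖ ≤ (1 + |K|) * (1 + ‖x‖) := by
    nlinarith [h x, norm_nonneg x, abs_nonneg K]
  gcongr

lemma PG.fst {f : E → ℝ} (hf : PG f) : PG (fun z : E × F => f z.1) :=
  hf.comp continuous_fst 1 fun x => by simpa using norm_fst_le x

lemma PG.snd {f : F → ℝ} (hf : PG f) : PG (fun z : E × F => f z.2) :=
  hf.comp continuous_snd 1 fun x => by simpa using norm_snd_le x

end PG

lemma PG.integrable {E : Type*} [NormedAddCommGroup E] [NormedSpace ℝ E] [CompleteSpace E]
    [SecondCountableTopology E] [MeasurableSpace E] [BorelSpace E] {μ : Measure E} [IsGaussian μ]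
    {f : E → ℝ} (hf : PG f) : Integrable f μ := by
  obtain ⟨C, N, hC, h1⟩ := hf.exists_bound
  have h2 : Integrable (fun x : E => C * (1 + ‖x‖) ^ N) μ := by
    refine Integrable.const_mul ?_ C
    have h5 : MemLp (fun x : E => x) (N : ENNReal) μ := IsGaussian.memLp_id μ N (by simp)
    have h6 : MemLp (fun _ : E => (1 : ℝ)) (N : ENNReal) μ := memLp_const 1
    have h3 : MemLp (fun x : E => 1 + ‖x‖) (N : ENNReal) μ := h6.add h5.norm
    have h4 := h3.integrable_norm_pow'
    refine h4.congr (Filter.Eventually.of_forall fun x => ?_)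
    simp only [Real.norm_eq_abs]
    rw [abs_of_nonneg (by positivity)]
  exact h2.mono' hf.1.aestronglyMeasurable (Filter.Eventually.of_forall h1)

section Poly
variable {n : ℕ}

lemma PG.apply (i : Fin n) : PG (fun x : Fin n → ℝ => x i) :=
  ⟨continuous_apply i, 1, 1, fun x => by
    have := norm_le_pi_norm x i
    rw [Real.norm_eq_abs] at this
    simp; linarith⟩

lemma PG.eval (g : MvPolynomial (Fin n) ℝ) : PG (fun x => MvPolynomial.eval x g) := by
  induction g using MvPolynomial.induction_on with
  | C a => simpa using PG.const (E := Fin n → ℝ) a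
  | add p q hp hq => simpa using hp.add hq
  | mul_X p i hp => simpa using hp.mul (PG.apply i)

/-- The directional derivative `∂_y g (x)`. -/
noncomputable def dD (g : MvPolynomial (Fin n) ℝ) (z : (Fin n → ℝ) × (Fin n → ℝ)) : ℝ :=
  ∑ i, z.2 i * MvPolynomial.eval z.1 (MvPolynomial.pderiv i g)

/-- The directional derivative `∂_y g` for fixed `y`, as a polynomial. -/
noncomputable def dirDeriv (g : MvPolynomial (Fin n) ℝ) (y : Fin n → ℝ) :
    MvPolynomial (Fin n) ℝ :=
  ∑ i, MvPolynomial.C (y i) * MvPolynomial.pderiv i g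

lemma eval_dirDeriv (g : MvPolynomial (Fin n) ℝ) (x y : Fin n → ℝ) :
    MvPolynomial.eval x (dirDeriv g y) = dD g (x, y) := by
  simp [dirDeriv, dD, map_sum]

lemma PG.dD (g : MvPolynomial (Fin n) ℝ) : PG (GaussPoly.dD g) :=
  PG.sum _ fun i _ => (PG.apply i).snd.mul (PG.eval _).fst

lemma totalDegree_pderiv_le (g : MvPolynomial (Fin n) ℝ) (i : Fin n) :
    (MvPolynomial.pderiv i g).totalDegree ≤ g.totalDegree - 1 := by
  classical
  conv_lhs => rw [g.as_sum, map_sum]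
  refine MvPolynomial.totalDegree_finsetSum_le fun s hs => ?_
  rw [MvPolynomial.pderiv_monomial]
  by_cases h0 : s i = 0
  · simp [h0]
  refine (MvPolynomial.totalDegree_monomial_le _ _).trans ?_
  have h1 := MvPolynomial.le_totalDegree hs
  have h2 : s = (s - Finsupp.single i 1) + Finsupp.single i 1 := by
    rw [tsub_add_cancel_of_le]
    rw [Finsupp.single_le_iff]; omega
  have h3 : (s.sum fun _ e => e) = ((s - Finsupp.single i 1).sum fun _ e => e) + 1 := by
    conv_lhs => rw [h2]
    rw [Finsupp.sum_add_index' (fun _ => rfl) (fun _ _ _ => rfl), Finsupp.sum_single_index rfl]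
  have h4 : ((s - Finsupp.single i 1).sum fun _ => id) =
      ((s - Finsupp.single i 1).sum fun _ e => e) := rfl
  omega

lemma totalDegree_dirDeriv_le {k : ℕ} (g : MvPolynomial (Fin n) ℝ) (hg : g.totalDegree ≤ k + 1)
    (y : Fin n → ℝ) : (dirDeriv g y).totalDegree ≤ k := by
  refine MvPolynomial.totalDegree_finsetSum_le fun i _ => ?_
  refine (MvPolynomial.totalDegree_mul _ _).trans ?_
  have := totalDegree_pderiv_le g i
  simp; omega

/-- Rotation of `ℝⁿ × ℝⁿ` by the angle `θ`. -/
noncomputable abbrev rot (θ : ℝ) (z : (Fin n → ℝ) × (Fin n → ℝ)) : (Fin n → ℝ) × (Fin n → ℝ) :=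
  ContinuousLinearMap.rotation θ z

lemma rot_fst (θ : ℝ) (z : (Fin n → ℝ) × (Fin n → ℝ)) :
    (rot θ z).1 = Real.cos θ • z.1 + Real.sin θ • z.2 := rfl

lemma rot_snd (θ : ℝ) (z : (Fin n → ℝ) × (Fin n → ℝ)) :
    (rot θ z).2 = -Real.sin θ • z.1 + Real.cos θ • z.2 := rfl

lemma rot_zero (z : (Fin n → ℝ) × (Fin n → ℝ)) : rot 0 z = z := by
  ext <;> simp [rot_fst, rot_snd]

lemma continuous_rot : Continuous (fun p : ℝ × ((Fin n → ℝ) × (Fin n → ℝ)) => rot p.1 p.2) := by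
  simp only [rot, ContinuousLinearMap.rotation_apply]
  fun_prop

lemma continuous_rot_left (z : (Fin n → ℝ) × (Fin n → ℝ)) : Continuous (fun θ => rot θ z) := by
  simp only [rot, ContinuousLinearMap.rotation_apply]
  fun_prop

lemma norm_rot_le (θ : ℝ) (z : (Fin n → ℝ) × (Fin n → ℝ)) : ‖rot θ z‖ ≤ 2 * ‖z‖ := by
  have h1 : |Real.cos θ| ≤ 1 := Real.abs_cos_le_one θ
  have h2 : |Real.sin θ| ≤ 1 := Real.abs_sin_le_one θ
  have h3 := norm_fst_le z
  have h4 := norm_snd_le z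
  refine max_le ?_ ?_
  · rw [rot_fst]
    refine (norm_add_le _ _).trans ?_
    rw [norm_smul, norm_smul, Real.norm_eq_abs, Real.norm_eq_abs]
    nlinarith [norm_nonneg z.1, norm_nonneg z.2]
  · rw [rot_snd]
    refine (norm_add_le _ _).trans ?_
    rw [norm_smul, norm_smul, norm_neg, Real.norm_eq_abs, Real.norm_eq_abs]
    nlinarith [norm_nonneg z.1, norm_nonneg z.2]

lemma PG.rot {G : (Fin n → ℝ) × (Fin n → ℝ) → ℝ} (hG : PG G) (θ : ℝ) :
    PG (fun z => G (rot θ z)) :=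
  hG.comp (ContinuousLinearMap.continuous _) 2 (norm_rot_le θ)

/-- The standard Gaussian measure on `ℝⁿ × ℝⁿ` is invariant under `rot θ`. -/
lemma integral_rot {G : (Fin n → ℝ) × (Fin n → ℝ) → ℝ} (hG : Continuous G) (θ : ℝ) :
    ∫ z, G (rot θ z) ∂((γ n).prod (γ n)) = ∫ z, G z ∂((γ n).prod (γ n)) := by
  have h := IsGaussian.map_rotation_eq_self (γ_mean n) θ
  conv_rhs => rw [← h]
  rw [integral_map]
  · exact (ContinuousLinearMap.continuous _).aemeasurable
  · exact hG.aestronglyMeasurable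

/-- The derivative of `g` along a rotation orbit is `dD g` on the same orbit. -/
lemma hasDerivAt_eval_rot (g : MvPolynomial (Fin n) ℝ) (z : (Fin n → ℝ) × (Fin n → ℝ)) (θ : ℝ) :
    HasDerivAt (fun θ => MvPolynomial.eval (rot θ z).1 g) (dD g (rot θ z)) θ := by
  induction g using MvPolynomial.induction_on with
  | C a => simpa [dD] using hasDerivAt_const θ a
  | add p q hp hq =>
    have h := hp.fun_add hq
    have e : (fun θ => MvPolynomial.eval (rot θ z).1 (p + q)) =
        fun θ => MvPolynomial.eval (rot θ z).1 p + MvPolynomial.eval (rot θ z).1 q := by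
      ext θ; rw [map_add]
    rw [e]
    refine h.congr_deriv (Eq.symm ?_)
    simp only [dD, map_add, mul_add, Finset.sum_add_distrib]
  | mul_X p i hp =>
    have hX : HasDerivAt (fun θ => (rot θ z).1 i) ((rot θ z).2 i) θ := by
      exact ((Real.hasDerivAt_cos θ).mul_const (z.1 i)).fun_add
        ((Real.hasDerivAt_sin θ).mul_const (z.2 i))
    have h := hp.fun_mul hX
    have e : (fun θ => MvPolynomial.eval (rot θ z).1 (p * MvPolynomial.X i)) =
        fun θ => MvPolynomial.eval (rot θ z).1 p * (rot θ z).1 i := by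
      ext θ; rw [map_mul, MvPolynomial.eval_X]
    rw [e]
    refine h.congr_deriv (Eq.symm ?_)
    simp only [dD, Derivation.leibniz, MvPolynomial.pderiv_X, smul_eq_mul, map_add, map_mul,
      MvPolynomial.eval_X, mul_add, Finset.sum_add_distrib]
    rw [add_comm]
    congr 1
    · rw [Finset.sum_mul]; exact Finset.sum_congr rfl fun j _ => by ring
    · rw [Finset.sum_eq_single i]
      · simp; ring
      · intro j _ hj; simp [hj.symm]
      · simp

lemma trig_eval_rot {k : ℕ} (g : MvPolynomial (Fin n) ℝ) (hg : g.totalDegree ≤ k)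
    (z : (Fin n → ℝ) × (Fin n → ℝ)) : Trig k (fun θ => MvPolynomial.eval (rot θ z).1 g) := by
  have h : (fun θ => MvPolynomial.eval (rot θ z).1 g) = fun θ => ∑ s ∈ g.support,
      g.coeff s * ∏ i ∈ s.support, (Real.cos θ * z.1 i + Real.sin θ * z.2 i) ^ s i := by
    ext θ
    rw [MvPolynomial.eval_eq]
    rfl
  rw [h]
  refine Trig.sum _ fun s hs => Trig.const_mul _ ?_
  have h1 := (MvPolynomial.le_totalDegree hs).trans hg
  refine Trig.mono (m := ∑ i ∈ s.support, s i) ?_ h1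
  refine Trig.prod _ fun i _ => ?_
  have hc : Trig 1 (fun θ => Real.cos θ * z.1 i + Real.sin θ * z.2 i) := by
    have := (Trig.cos.const_mul (z.1 i)).add (Trig.sin.const_mul (z.2 i))
    simpa [mul_comm] using this
  simpa using hc.pow (s i)

lemma trig_dD_rot {k : ℕ} (g : MvPolynomial (Fin n) ℝ) (hg : g.totalDegree ≤ k)
    (z : (Fin n → ℝ) × (Fin n → ℝ)) : Trig k (fun θ => dD g (rot θ z)) := by
  have h := (trig_eval_rot g hg z).deriv
  have h2 : deriv (fun θ => MvPolynomial.eval (rot θ z).1 g) = fun θ => dD g (rot θ z) :=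
    funext fun θ => (hasDerivAt_eval_rot g z θ).deriv
  rwa [h2] at h

end Poly

/-! ### Poincaré inequality and hypercontractivity -/

lemma sq_integral_mul_le {Ω : Type*} [MeasurableSpace Ω] {μ : Measure Ω} {f g : Ω → ℝ}
    (hf : Integrable (fun x => f x ^ 2) μ) (hg : Integrable (fun x => g x ^ 2) μ)
    (hfg : Integrable (fun x => f x * g x) μ) :
    (∫ x, f x * g x ∂μ) ^ 2 ≤ (∫ x, f x ^ 2 ∂μ) * ∫ x, g x ^ 2 ∂μ := by
  have key : ∀ t : ℝ, 0 ≤ (∫ x, f x ^ 2 ∂μ) * (t * t) + (2 * ∫ x, f x * g x ∂μ) * t +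
      ∫ x, g x ^ 2 ∂μ := by
    intro t
    have h : 0 ≤ ∫ x, (t * f x + g x) ^ 2 ∂μ := integral_nonneg fun x => sq_nonneg _
    have e : (fun x => (t * f x + g x) ^ 2) =
        fun x => (t * t) * f x ^ 2 + (2 * t) * (f x * g x) + g x ^ 2 := by ext x; ring
    rw [e, integral_add ((hf.const_mul _).fun_add (hfg.const_mul _)) hg,
      integral_add (hf.const_mul _) (hfg.const_mul _), integral_const_mul, integral_const_mul] at h
    linarith
  have := discrim_le_zero key
  unfold discrim at this
  nlinarith

lemma integral_mul_le_sqrt {Ω : Type*} [MeasurableSpace Ω] {μ : Measure Ω} {f g : Ω → ℝ}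
    (hf : Integrable (fun x => f x ^ 2) μ) (hg : Integrable (fun x => g x ^ 2) μ)
    (hfg : Integrable (fun x => f x * g x) μ) :
    ∫ x, f x * g x ∂μ ≤ √(∫ x, f x ^ 2 ∂μ) * √(∫ x, g x ^ 2 ∂μ) := by
  rw [← Real.sqrt_mul (integral_nonneg fun x => sq_nonneg _)]
  exact Real.le_sqrt_of_sq_le (sq_integral_mul_le hf hg hfg)

section
variable {n : ℕ}

/-- Expectation bounds by stationarity: all the rotated values `G (rot θ z)` have the same law, so
a pointwise bound by finitely many of them yields a moment bound. -/
lemma moment_le_of_nodes {m : ℕ} (q : ℕ) {K : ℝ} (hK : 0 ≤ K)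
    {G H : (Fin n → ℝ) × (Fin n → ℝ) → ℝ} (hG : PG G) (hH : Continuous H)
    (h : ∀ z, |H z| ≤ K * ∑ j ∈ Finset.range (2 * m + 1), |G (rot (node m j) z)|) :
    ∫ z, |H z| ^ (q + 1) ∂((γ n).prod (γ n)) ≤
      (K ^ (q + 1) * (2 * m + 1 : ℝ) ^ (q + 1)) * ∫ z, |G z| ^ (q + 1) ∂((γ n).prod (γ n)) := by
  have hpt : ∀ z, |H z| ^ (q + 1) ≤ K ^ (q + 1) * ((2 * m + 1 : ℝ) ^ q *
      ∑ j ∈ Finset.range (2 * m + 1), |G (rot (node m j) z)| ^ (q + 1)) := by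
    intro z
    refine (pow_le_pow_left₀ (abs_nonneg _) (h z) _).trans ?_
    rw [mul_pow]
    refine mul_le_mul_of_nonneg_left ?_ (by positivity)
    have := pow_sum_le_card_mul_sum_pow (s := Finset.range (2 * m + 1))
      (f := fun j => |G (rot (node m j) z)|) (fun i _ => abs_nonneg _) q
    simpa using this
  have hPG : ∀ j, PG (fun z => |G (rot (node m j) z)| ^ (q + 1)) := fun j =>
    (hG.rot _).abs.pow _
  have hR : PG (fun z => K ^ (q + 1) * ((2 * m + 1 : ℝ) ^ q *
      ∑ j ∈ Finset.range (2 * m + 1), |G (rot (node m j) z)| ^ (q + 1))) :=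
    ((PG.sum _ fun j _ => hPG j).const_mul _).const_mul _
  have hL : PG (fun z => |H z| ^ (q + 1)) :=
    hR.mono (by fun_prop) fun z => by rw [abs_of_nonneg (by positivity)]; exact hpt z
  refine (integral_mono hL.integrable hR.integrable hpt).trans (le_of_eq ?_)
  rw [integral_const_mul, integral_const_mul, integral_finsetSum _ fun j _ => (hPG j).integrable]
  have : ∀ j, ∫ z, |G (rot (node m j) z)| ^ (q + 1) ∂((γ n).prod (γ n)) =
      ∫ z, |G z| ^ (q + 1) ∂((γ n).prod (γ n)) := fun j =>
    integral_rot (G := fun z => |G z| ^ (q + 1)) (hG.continuous.abs.pow _) _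
  simp_rw [this]
  simp
  ring

lemma rot_pi_div_two_fst (z : (Fin n → ℝ) × (Fin n → ℝ)) : (rot (Real.pi / 2) z).1 = z.2 := by
  rw [rot_fst]; simp

end

/-- The rotation by `π/2` moves `z.1` to `z.2`, so `f z.1 - f z.2` is bounded by the derivative of
`f` along the orbit, hence, by interpolation, by the values of `dD f` at the nodes. -/
lemma diff_moment_le (D q : ℕ) : ∃ C : ℝ, 0 ≤ C ∧ ∀ (n : ℕ) (f : MvPolynomial (Fin n) ℝ),
    f.totalDegree ≤ D →
    ∫ z, |MvPolynomial.eval z.1 f - MvPolynomial.eval z.2 f| ^ (q + 1) ∂((γ n).prod (γ n)) ≤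
      C * ∫ z, |dD f z| ^ (q + 1) ∂((γ n).prod (γ n)) := by
  obtain ⟨K, hK, h⟩ := Trig.interp D
  refine ⟨(2 * K) ^ (q + 1) * (2 * D + 1 : ℝ) ^ (q + 1), by positivity, fun n f hf => ?_⟩
  refine moment_le_of_nodes q (by positivity) (PG.dD f)
    ((PG.eval f).fst.sub (PG.eval f).snd).continuous fun z => ?_
  have hpi : Real.pi / 2 ≤ 2 := by linarith [Real.pi_le_four]
  have hpi0 : 0 ≤ Real.pi / 2 := by positivity
  have h1 := Convex.norm_image_sub_le_of_norm_hasDerivWithin_le (s := Set.Icc (0 : ℝ) 2)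
    (f := fun θ => MvPolynomial.eval (rot θ z).1 f) (x := Real.pi / 2) (y := 0)
    (fun θ _ => (hasDerivAt_eval_rot f z θ).hasDerivWithinAt)
    (fun θ hθ => (h _ (trig_dD_rot f hf z) θ hθ).1) (convex_Icc _ _) ⟨hpi0, hpi⟩ (by simp)
  rw [rot_pi_div_two_fst, rot_zero, Real.norm_eq_abs, Real.norm_eq_abs] at h1
  refine h1.trans ?_
  have h2 : |0 - Real.pi / 2| ≤ 2 := by rw [zero_sub, abs_neg, abs_of_nonneg hpi0]; exact hpi
  have h3 : 0 ≤ K * ∑ j ∈ Finset.range (2 * D + 1), |dD f (rot (node D j) z)| := by positivity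
  nlinarith

/-- A Bernstein-type inequality: `dD f z` is the derivative at `θ = 0` of a trigonometric polynomial,
hence bounded by its values at the nodes. -/
lemma dD_moment_le (D q : ℕ) : ∃ C : ℝ, 0 ≤ C ∧ ∀ (n : ℕ) (f : MvPolynomial (Fin n) ℝ),
    f.totalDegree ≤ D →
    ∫ z, |dD f z| ^ (q + 1) ∂((γ n).prod (γ n)) ≤
      C * ∫ x, |MvPolynomial.eval x f| ^ (q + 1) ∂(γ n) := by
  obtain ⟨K, hK, h⟩ := Trig.interp D
  refine ⟨K ^ (q + 1) * (2 * D + 1 : ℝ) ^ (q + 1), by positivity, fun n f hf => ?_⟩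
  have h1 := moment_le_of_nodes q hK (PG.eval f).fst (PG.dD f).continuous fun z => by
    have := (h _ (trig_eval_rot f hf z) 0 (by simp)).2
    rwa [(hasDerivAt_eval_rot f z 0).deriv, rot_zero] at this
  refine h1.trans (le_of_eq ?_)
  rw [integral_fun_fst (fun x => |MvPolynomial.eval x f| ^ (q + 1))]
  simp

section
variable {n : ℕ}

lemma integral_linForm (v : Fin n → ℝ) {F : ℝ → ℝ} (hF : Measurable F) :
    ∫ y, F (∑ i, y i * v i) ∂(γ n) = ∫ t, F (√(∑ i, v i ^ 2) * t) ∂(gaussianReal 0 1) := by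
  have h := map_linForm n v
  have h1 : ∫ y, F (∑ i, y i * v i) ∂(γ n) = ∫ s, F s ∂((γ n).map (fun y => ∑ i, y i * v i)) := by
    rw [integral_map (Continuous.aemeasurable (by fun_prop)) hF.aestronglyMeasurable]
  rw [h1, h, integral_map (by fun_prop) hF.aestronglyMeasurable]

lemma integral_linForm_pow (v : Fin n → ℝ) (q : ℕ) :
    ∫ y, |∑ i, y i * v i| ^ q ∂(γ n) =
      √(∑ i, v i ^ 2) ^ q * ∫ t, |t| ^ q ∂(gaussianReal 0 1) := by
  rw [integral_linForm v (F := fun t => |t| ^ q) (by fun_prop), ← integral_const_mul]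
  simp [abs_mul, mul_pow, abs_of_nonneg (Real.sqrt_nonneg _)]

lemma gaussian_sq : ∫ t, |t| ^ 2 ∂(gaussianReal 0 1) = 1 := by
  have h := variance_id_gaussianReal (μ := 0) (v := 1)
  rw [variance_eq_integral (by fun_prop)] at h
  simpa using h

/-- The squared length of the gradient. -/
noncomputable def gradSq (f : MvPolynomial (Fin n) ℝ) (x : Fin n → ℝ) : ℝ :=
  ∑ i, MvPolynomial.eval x (MvPolynomial.pderiv i f) ^ 2

lemma gradSq_nonneg (f : MvPolynomial (Fin n) ℝ) (x : Fin n → ℝ) : 0 ≤ gradSq f x :=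
  Finset.sum_nonneg fun _ _ => sq_nonneg _

lemma PG.gradSq (f : MvPolynomial (Fin n) ℝ) : PG (GaussPoly.gradSq f) :=
  PG.sum _ fun _ _ => (PG.eval _).pow 2

lemma integral_dD_pow (f : MvPolynomial (Fin n) ℝ) (q : ℕ) :
    ∫ z, |dD f z| ^ q ∂((γ n).prod (γ n)) =
      (∫ t, |t| ^ q ∂(gaussianReal 0 1)) * ∫ x, √(gradSq f x) ^ q ∂(γ n) := by
  rw [integral_prod _ ((PG.dD f).abs.pow q).integrable, ← integral_const_mul]
  congr 1; ext x
  simp only [dD]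
  rw [integral_linForm_pow, mul_comm]; rfl

lemma integral_dD_sq (f : MvPolynomial (Fin n) ℝ) :
    ∫ z, |dD f z| ^ 2 ∂((γ n).prod (γ n)) = ∫ x, gradSq f x ∂(γ n) := by
  rw [integral_dD_pow, gaussian_sq, one_mul]
  simp_rw [Real.sq_sqrt (gradSq_nonneg f _)]

lemma integral_dD_four (f : MvPolynomial (Fin n) ℝ) :
    ∫ z, |dD f z| ^ 4 ∂((γ n).prod (γ n)) =
      (∫ t, |t| ^ 4 ∂(gaussianReal 0 1)) * ∫ x, gradSq f x ^ 2 ∂(γ n) := by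
  rw [integral_dD_pow]
  congr 2; ext x
  rw [show 4 = 2 * 2 from rfl, pow_mul, Real.sq_sqrt (gradSq_nonneg f _)]

/-- The mean of `f` under the standard Gaussian measure. -/
noncomputable def mn (f : MvPolynomial (Fin n) ℝ) : ℝ := ∫ x, MvPolynomial.eval x f ∂(γ n)

/-- The second moment of `f` under the standard Gaussian measure. -/
noncomputable def nrm2 (f : MvPolynomial (Fin n) ℝ) : ℝ := ∫ x, MvPolynomial.eval x f ^ 2 ∂(γ n)

/-- The variance of `f` under the standard Gaussian measure. -/
noncomputable def vr (f : MvPolynomial (Fin n) ℝ) : ℝ :=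
  ∫ x, (MvPolynomial.eval x f - mn f) ^ 2 ∂(γ n)

lemma nrm2_nonneg (f : MvPolynomial (Fin n) ℝ) : 0 ≤ nrm2 f := integral_nonneg fun _ => sq_nonneg _
lemma vr_nonneg (f : MvPolynomial (Fin n) ℝ) : 0 ≤ vr f := integral_nonneg fun _ => sq_nonneg _

lemma nrm2_eq (f : MvPolynomial (Fin n) ℝ) : nrm2 f = vr f + mn f ^ 2 := by
  have e : (fun x => (MvPolynomial.eval x f - mn f) ^ 2) = fun x =>
    MvPolynomial.eval x f ^ 2 - (2 * mn f) * MvPolynomial.eval x f + mn f ^ 2 := by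
    ext x; ring
  have h1 : Integrable (fun x => MvPolynomial.eval x f ^ 2) (γ n) := ((PG.eval f).pow 2).integrable
  have h2 : Integrable (fun x => (2 * mn f) * MvPolynomial.eval x f) (γ n) :=
    ((PG.eval f).const_mul _).integrable
  unfold vr
  rw [e, integral_add (h1.sub' h2) (integrable_const _), integral_sub h1 h2, integral_const_mul]
  simp only [nrm2]
  change _ = _ - 2 * mn f * mn f + _ + _
  simp; ring

lemma diff_sq (f : MvPolynomial (Fin n) ℝ) :
    ∫ z, |MvPolynomial.eval z.1 f - MvPolynomial.eval z.2 f| ^ 2 ∂((γ n).prod (γ n)) =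
      2 * vr f := by
  have e : (fun z : (Fin n → ℝ) × (Fin n → ℝ) =>
      |MvPolynomial.eval z.1 f - MvPolynomial.eval z.2 f| ^ 2) = fun z =>
      MvPolynomial.eval z.1 f ^ 2 + MvPolynomial.eval z.2 f ^ 2 -
        2 * (MvPolynomial.eval z.1 f * MvPolynomial.eval z.2 f) := by
    ext z; rw [sq_abs]; ring
  rw [e, integral_sub, integral_add, integral_const_mul,
    integral_fun_fst (fun x => MvPolynomial.eval x f ^ 2),
    integral_fun_snd (fun x => MvPolynomial.eval x f ^ 2),
    integral_prod_mul (fun x => MvPolynomial.eval x f) (fun x => MvPolynomial.eval x f)]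
  · have h1 : ∫ x, MvPolynomial.eval x f ^ 2 ∂(γ n) = vr f + mn f ^ 2 := nrm2_eq f
    have h2 : ∫ x, MvPolynomial.eval x f ∂(γ n) = mn f := rfl
    rw [h1, h2]; simp; ring
  · exact ((PG.eval f).pow 2).fst.integrable
  · exact ((PG.eval f).pow 2).snd.integrable
  · exact (((PG.eval f).pow 2).fst.add ((PG.eval f).pow 2).snd).integrable
  · exact (((PG.eval f).fst.mul (PG.eval f).snd).const_mul _).integrable

lemma diff_four (f : MvPolynomial (Fin n) ℝ) :
    ∫ x, (MvPolynomial.eval x f - mn f) ^ 4 ∂(γ n) ≤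
    ∫ z, |MvPolynomial.eval z.1 f - MvPolynomial.eval z.2 f| ^ 4 ∂((γ n).prod (γ n)) := by
  set h : (Fin n → ℝ) → ℝ := fun x => MvPolynomial.eval x f - mn f with hh
  have hPG : PG h := (PG.eval f).sub (PG.const _)
  have h0 : ∫ x, h x ∂(γ n) = 0 := by
    rw [hh, integral_sub (PG.eval f).integrable (integrable_const _)]
    simp [mn]
  have key : ∀ z : (Fin n → ℝ) × (Fin n → ℝ), h z.1 ^ 4 - (4 * h z.1 ^ 3) * h z.2 ≤
      |MvPolynomial.eval z.1 f - MvPolynomial.eval z.2 f| ^ 4 := by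
    intro z
    have e : MvPolynomial.eval z.1 f - MvPolynomial.eval z.2 f = h z.1 - h z.2 := by simp [hh]
    rw [e, show |h z.1 - h z.2| ^ 4 = (|h z.1 - h z.2| ^ 2) ^ 2 by ring, sq_abs]
    generalize h z.1 = a
    generalize h z.2 = b
    nlinarith [sq_nonneg (b * (b - 2 * a)), sq_nonneg (a * b), sq_nonneg b]
  have hi1 : PG (fun z : (Fin n → ℝ) × (Fin n → ℝ) => h z.1 ^ 4) := (hPG.pow 4).fst
  have hi2 : PG (fun z : (Fin n → ℝ) × (Fin n → ℝ) => (4 * h z.1 ^ 3) * h z.2) :=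
    ((hPG.pow 3).const_mul 4).fst.mul hPG.snd
  have := integral_mono (hi1.sub hi2).integrable
    (((PG.eval f).fst.sub (PG.eval f).snd).abs.pow 4).integrable key
    (μ := (γ n).prod (γ n))
  rw [integral_sub hi1.integrable hi2.integrable, integral_fun_fst (fun x => h x ^ 4),
    integral_prod_mul (fun x => 4 * h x ^ 3) h, h0] at this
  simpa using this

end

/-- Poincaré inequality for polynomials of bounded degree, uniformly in the dimension. -/
lemma poincare (D : ℕ) : ∃ C : ℝ, 0 ≤ C ∧ ∀ (n : ℕ) (f : MvPolynomial (Fin n) ℝ),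
    f.totalDegree ≤ D → vr f ≤ C * ∫ x, gradSq f x ∂(γ n) := by
  obtain ⟨C, hC, h⟩ := diff_moment_le D 1
  refine ⟨C / 2, by positivity, fun n f hf => ?_⟩
  have := h n f hf
  norm_num only at this
  rw [diff_sq, integral_dD_sq] at this
  linarith

/-- Reverse Poincaré inequality for polynomials of bounded degree. -/
lemma reverse_poincare (D : ℕ) : ∃ C : ℝ, 0 ≤ C ∧ ∀ (n : ℕ) (f : MvPolynomial (Fin n) ℝ),
    f.totalDegree ≤ D → ∫ x, gradSq f x ∂(γ n) ≤ C * nrm2 f := by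
  obtain ⟨C, hC, h⟩ := dD_moment_le D 1
  refine ⟨C, hC, fun n f hf => ?_⟩
  have := h n f hf
  norm_num only at this
  rw [integral_dD_sq] at this
  simpa [nrm2, sq_abs] using this

/-- Hypercontractivity: the fourth moment of a polynomial is controlled by its second moment, with
a constant depending only on the degree. -/
lemma hyper (D : ℕ) : ∃ C : ℝ, 0 ≤ C ∧ ∀ (n : ℕ) (f : MvPolynomial (Fin n) ℝ),
    f.totalDegree ≤ D → ∫ x, MvPolynomial.eval x f ^ 4 ∂(γ n) ≤ C * nrm2 f ^ 2 := by
  induction D with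
  | zero =>
    refine ⟨1, zero_le_one, fun n f hf => ?_⟩
    rw [MvPolynomial.totalDegree_eq_zero_iff_eq_C.1 (Nat.le_zero.1 hf)]
    simp [nrm2]; ring_nf; rfl
  | succ D ih =>
    obtain ⟨C0, hC0, h0⟩ := ih
    obtain ⟨C1, hC1, h1⟩ := diff_moment_le (D + 1) 3
    obtain ⟨C2, hC2, h2⟩ := reverse_poincare (D + 1)
    set c4 := ∫ t, |t| ^ 4 ∂(gaussianReal 0 1) with hc4
    have hc40 : 0 ≤ c4 := integral_nonneg fun _ => by positivity
    refine ⟨8 * (C1 * c4 * C0 * C2 ^ 2) + 8, by positivity, fun n f hf => ?_⟩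
    have hd : ∀ i, (MvPolynomial.pderiv i f).totalDegree ≤ D := fun i => by
      have := totalDegree_pderiv_le f i; omega
    have e1 : ∫ x, gradSq f x ^ 2 ∂(γ n) ≤ C0 * (∫ x, gradSq f x ∂(γ n)) ^ 2 := by
      have hg : ∫ x, gradSq f x ∂(γ n) = ∑ i, nrm2 (MvPolynomial.pderiv i f) := by
        unfold gradSq
        rw [integral_finsetSum _ fun i _ => ((PG.eval _).pow 2).integrable]; rfl
      have hg2 : ∫ x, gradSq f x ^ 2 ∂(γ n) = ∑ i, ∑ j, ∫ x,
          MvPolynomial.eval x (MvPolynomial.pderiv i f) ^ 2 *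
          MvPolynomial.eval x (MvPolynomial.pderiv j f) ^ 2 ∂(γ n) := by
        unfold gradSq
        simp_rw [sq (∑ i, _), Finset.sum_mul_sum]
        rw [integral_finsetSum _ fun i _ => (PG.sum _ fun j _ =>
          ((PG.eval _).pow 2).mul ((PG.eval _).pow 2)).integrable]
        refine Finset.sum_congr rfl fun i _ => ?_
        rw [integral_finsetSum _ fun j _ => (((PG.eval _).pow 2).mul ((PG.eval _).pow 2)).integrable]
      rw [hg, hg2, sq, Finset.sum_mul_sum, Finset.mul_sum]
      refine Finset.sum_le_sum fun i _ => ?_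
      rw [Finset.mul_sum]
      refine Finset.sum_le_sum fun j _ => ?_
      have hcs := sq_integral_mul_le (μ := γ n)
        (f := fun x => MvPolynomial.eval x (MvPolynomial.pderiv i f) ^ 2)
        (g := fun x => MvPolynomial.eval x (MvPolynomial.pderiv j f) ^ 2)
        (((PG.eval _).pow 2).pow 2).integrable (((PG.eval _).pow 2).pow 2).integrable
        (((PG.eval _).pow 2).mul ((PG.eval _).pow 2)).integrable
      simp_rw [← pow_mul] at hcs
      have hi := h0 n _ (hd i)
      have hj := h0 n _ (hd j)
      have hni := nrm2_nonneg (MvPolynomial.pderiv i f)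
      have hnj := nrm2_nonneg (MvPolynomial.pderiv j f)
      refine le_of_sq_le_sq (hcs.trans ?_) (by positivity)
      refine (mul_le_mul hi hj (integral_nonneg fun _ => by positivity) (by positivity)).trans
        (le_of_eq (by ring))
    have hn := nrm2_nonneg f
    have hgn : 0 ≤ ∫ x, gradSq f x ∂(γ n) := integral_nonneg fun x => gradSq_nonneg f x
    have e2 : ∫ x, (MvPolynomial.eval x f - mn f) ^ 4 ∂(γ n) ≤
        C1 * c4 * C0 * C2 ^ 2 * nrm2 f ^ 2 := by
      refine (diff_four f).trans ((h1 n f hf).trans ?_)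
      norm_num only
      rw [integral_dD_four, ← hc4]
      have h3 : (∫ x, gradSq f x ∂(γ n)) ^ 2 ≤ (C2 * nrm2 f) ^ 2 :=
        pow_le_pow_left₀ hgn (h2 n f hf) 2
      calc C1 * (c4 * ∫ x, gradSq f x ^ 2 ∂(γ n)) ≤ C1 * (c4 * (C0 * (C2 * nrm2 f) ^ 2)) := by
            gcongr; exact e1.trans (by gcongr)
        _ = _ := by ring
    have e3 : ∫ x, MvPolynomial.eval x f ^ 4 ∂(γ n) ≤
        8 * ∫ x, (MvPolynomial.eval x f - mn f) ^ 4 ∂(γ n) + 8 * mn f ^ 4 := by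
      have hI : PG (fun x => 8 * (MvPolynomial.eval x f - mn f) ^ 4) :=
        (((PG.eval f).sub (PG.const _)).pow 4).const_mul 8
      have := integral_mono (μ := γ n) ((PG.eval f).pow 4).integrable
        (hI.add (PG.const (8 * mn f ^ 4))).integrable (fun x => by
          show MvPolynomial.eval x f ^ 4 ≤ 8 * (MvPolynomial.eval x f - mn f) ^ 4 + 8 * mn f ^ 4
          generalize MvPolynomial.eval x f = a
          generalize mn f = b
          have h5 : a ^ 2 ≤ 2 * (a - b) ^ 2 + 2 * b ^ 2 := by nlinarith [sq_nonneg (a - 2 * b)]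
          have h6 : (a ^ 2) ^ 2 ≤ (2 * (a - b) ^ 2 + 2 * b ^ 2) ^ 2 :=
            pow_le_pow_left₀ (sq_nonneg _) h5 2
          nlinarith [sq_nonneg ((a - b) ^ 2 - b ^ 2)])
      rw [integral_add hI.integrable (integrable_const _), integral_const_mul] at this
      simpa using this
    have e4 : mn f ^ 4 ≤ nrm2 f ^ 2 := by
      have : mn f ^ 2 ≤ nrm2 f := by rw [nrm2_eq]; linarith [vr_nonneg f]
      have := pow_le_pow_left₀ (sq_nonneg _) this 2
      nlinarith
    nlinarith

/-! ### Integration by parts along rotations and the case of degree one -/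

/-- A `C¹` test function `φ` with derivative `φ'`, `|φ| ≤ A` and `|φ'| ≤ B`. -/
structure IsTest (φ φ' : ℝ → ℝ) (A B : ℝ) : Prop where
  hasDeriv : ∀ s, HasDerivAt φ (φ' s) s
  cont : Continuous φ'
  bdd : ∀ s, |φ s| ≤ A
  bdd' : ∀ s, |φ' s| ≤ B

section
variable {n : ℕ}

/-- An integral over `ℝⁿ × ℝⁿ` may be averaged over rotations by angles in `[0, 1]`. -/
lemma integral_eq_average_rot {H : (Fin n → ℝ) × (Fin n → ℝ) → ℝ} (hH : PG H) :
    ∫ z, H z ∂((γ n).prod (γ n)) =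
      ∫ z, (∫ θ in (0 : ℝ)..1, H (rot θ z)) ∂((γ n).prod (γ n)) := by
  rw [← intervalIntegral_integral_swap]
  · simp_rw [integral_rot hH.continuous]; simp
  · obtain ⟨C, N, hC, hb⟩ := hH.exists_bound
    have hPG : PG (fun z : (Fin n → ℝ) × (Fin n → ℝ) => C * (1 + 2 * ‖z‖) ^ N) := by
      refine ((PG.const C).mul ((PG.const 1).add (PG.const_mul 2 ?_) |>.pow N))
      exact ⟨continuous_norm, 1, 1, fun x => by simp⟩
    have : IsFiniteMeasure (volume.restrict (Set.uIoc (0 : ℝ) 1)) := by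
      rw [Set.uIoc_of_le zero_le_one]; infer_instance
    refine ((hPG.integrable (μ := (γ n).prod (γ n))).comp_snd
      (volume.restrict (Set.uIoc (0 : ℝ) 1))).mono'
      (hH.continuous.comp continuous_rot).aestronglyMeasurable
      (Filter.Eventually.of_forall fun p => (hb _).trans ?_)
    have := norm_rot_le p.1 p.2
    gcongr

/-- Integration by parts along the rotation: `φ'(g) ∂g` is an exact derivative in the angle. -/
lemma ibp {φ φ' : ℝ → ℝ} {A B : ℝ} (hφ : IsTest φ φ' A B) (g : MvPolynomial (Fin n) ℝ)
    {G R : (Fin n → ℝ) × (Fin n → ℝ) → ℝ} (hG : PG G)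
    (hd : ∀ z, ContDiff ℝ 1 (fun θ => G (rot θ z))) (hR : Integrable R ((γ n).prod (γ n)))
    (hb : ∀ z, |G (rot 0 z)| + |G (rot 1 z)| +
      ∫ θ in (0 : ℝ)..1, |deriv (fun θ => G (rot θ z)) θ| ≤ R z) :
    |∫ z, φ' (MvPolynomial.eval z.1 g) * dD g z * G z ∂((γ n).prod (γ n))| ≤
      A * ∫ z, R z ∂((γ n).prod (γ n)) := by
  have hA : 0 ≤ A := (abs_nonneg _).trans (hφ.bdd 0)
  have hPG : PG (fun z : (Fin n → ℝ) × (Fin n → ℝ) =>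
      φ' (MvPolynomial.eval z.1 g) * dD g z * G z) :=
    ((PG.of_bdd (hφ.cont.comp (PG.eval g).fst.continuous) B fun z => hφ.bdd' _).mul (PG.dD g)).mul hG
  rw [integral_eq_average_rot hPG, ← integral_const_mul, ← Real.norm_eq_abs]
  refine norm_integral_le_of_norm_le (hR.const_mul A) (Filter.Eventually.of_forall fun z => ?_)
  have hp : ∀ θ, HasDerivAt (fun θ => φ (MvPolynomial.eval (rot θ z).1 g))
      (φ' (MvPolynomial.eval (rot θ z).1 g) * dD g (rot θ z)) θ := by
    intro θ
    have e1 := hasDerivAt_eval_rot g z θ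
    have e2 := hφ.hasDeriv (MvPolynomial.eval (rot θ z).1 g)
    exact HasDerivAt.comp (h := fun θ => MvPolynomial.eval (rot θ z).1 g) (h₂ := φ) θ e2 e1
  have hF : ∀ θ, HasDerivAt (fun θ => G (rot θ z)) (deriv (fun θ => G (rot θ z)) θ) θ := fun θ =>
    ((hd z).differentiable (by norm_num) θ).hasDerivAt
  have hFc : Continuous (deriv (fun θ => G (rot θ z))) := (hd z).continuous_deriv le_rfl
  have hrc : Continuous (fun θ => rot θ z) := continuous_rot_left z
  have hpc : Continuous (fun θ => φ' (MvPolynomial.eval (rot θ z).1 g) * dD g (rot θ z)) :=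
by
    have e1 : Continuous (fun θ => MvPolynomial.eval (rot θ z).1 g) :=
      (PG.eval g).fst.continuous.comp hrc
    have e2 : Continuous (fun θ => dD g (rot θ z)) := (PG.dD g).continuous.comp hrc
    exact (hφ.cont.comp e1).mul e2
  have h1 := intervalIntegral.integral_mul_deriv_eq_deriv_mul (a := 0) (b := 1)
    (fun θ _ => hF θ) (fun θ _ => hp θ) (hFc.intervalIntegrable _ _) (hpc.intervalIntegrable _ _)
  have h2 : ∫ θ in (0 : ℝ)..1, φ' (MvPolynomial.eval (rot θ z).1 g) * dD g (rot θ z) * G (rot θ z) =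
      ∫ θ in (0 : ℝ)..1, G (rot θ z) * (φ' (MvPolynomial.eval (rot θ z).1 g) * dD g (rot θ z)) := by
    congr 1; ext θ; ring
  rw [h2, h1]
  have h3 : ‖∫ θ in (0 : ℝ)..1, deriv (fun θ => G (rot θ z)) θ * φ (MvPolynomial.eval (rot θ z).1 g)‖
      ≤ ∫ θ in (0 : ℝ)..1, A * |deriv (fun θ => G (rot θ z)) θ| := by
    refine intervalIntegral.norm_integral_le_of_norm_le zero_le_one
      (Filter.Eventually.of_forall fun θ _ => ?_)
      ((continuous_const.mul hFc.abs).intervalIntegrable _ _)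
    rw [Real.norm_eq_abs, abs_mul, mul_comm]
    gcongr
    exact hφ.bdd _
  rw [intervalIntegral.integral_const_mul] at h3
  have h4 : ∀ θ, |G (rot θ z) * φ (MvPolynomial.eval (rot θ z).1 g)| ≤ A * |G (rot θ z)| := by
    intro θ
    rw [abs_mul, mul_comm]
    gcongr
    exact hφ.bdd _
  have h5 := mul_le_mul_of_nonneg_left (hb z) hA
  rw [Real.norm_eq_abs] at h3 ⊢
  refine le_trans ?_ h5
  have h6 := h4 0
  have h7 := h4 1
  rw [mul_add, mul_add]
  refine (abs_sub _ _).trans ?_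
  have h8 := abs_sub (G (rot 1 z) * φ (MvPolynomial.eval (rot 1 z).1 g))
    (G (rot 0 z) * φ (MvPolynomial.eval (rot 0 z).1 g))
  linarith

end

/-- The kernel `q = p / (p² + r² + δ²)` built from trigonometric polynomials is bounded by `1/δ`, and
so, up to a constant depending on the degree, is its total variation, since the numerator of `q'` is
a trigonometric polynomial. -/
lemma kernel_bounds {m : ℕ} {p r : ℝ → ℝ} (hp : Trig m p) (hr : Trig m r) {δ : ℝ} (hδ : 0 < δ) :
    ContDiff ℝ 1 (fun θ => p θ / (p θ ^ 2 + r θ ^ 2 + δ ^ 2)) ∧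
    (∀ θ, |p θ / (p θ ^ 2 + r θ ^ 2 + δ ^ 2)| ≤ 1 / δ) ∧
    ∫ θ in (0 : ℝ)..1, |deriv (fun θ => p θ / (p θ ^ 2 + r θ ^ 2 + δ ^ 2)) θ| ≤
      2 * (1 / δ) * (6 * m + 1) := by
  have hpos : ∀ θ, 0 < p θ ^ 2 + r θ ^ 2 + δ ^ 2 := fun θ => by positivity
  have hpc : ContDiff ℝ 1 p := hp.contDiff.of_le (by norm_num)
  have hrc : ContDiff ℝ 1 r := hr.contDiff.of_le (by norm_num)
  have hc : ContDiff ℝ 1 (fun θ => p θ / (p θ ^ 2 + r θ ^ 2 + δ ^ 2)) :=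
    hpc.div (((hpc.pow 2).add (hrc.pow 2)).add contDiff_const) fun θ => (hpos θ).ne'
  have hb : ∀ θ, |p θ / (p θ ^ 2 + r θ ^ 2 + δ ^ 2)| ≤ 1 / δ := by
    intro θ
    rw [abs_div, abs_of_pos (hpos θ), div_le_div_iff₀ (hpos θ) hδ]
    have : |p θ| ^ 2 = p θ ^ 2 := sq_abs _
    nlinarith [sq_nonneg (|p θ| - δ), sq_nonneg (r θ), sq_nonneg (|p θ|), sq_nonneg δ,
      abs_nonneg (p θ)]
  refine ⟨hc, hb, ?_⟩
  set N : ℝ → ℝ := fun θ => deriv p θ * (p θ ^ 2 + r θ ^ 2 + δ ^ 2) +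
    -1 * (p θ * (2 * (p θ * deriv p θ) + 2 * (r θ * deriv r θ))) with hN
  have hNt : Trig (m + 2 * m) N := by
    have h1 : Trig (2 * m) (fun θ => p θ ^ 2 + r θ ^ 2 + δ ^ 2) := by
      refine ((Trig.mono (hp.pow 2) ?_).add (Trig.mono (hr.pow 2) ?_)).add
        ((Trig.const (δ ^ 2)).mono (by omega)) <;> nlinarith
    have h2 : Trig (2 * m) (fun θ => 2 * (p θ * deriv p θ) + 2 * (r θ * deriv r θ)) := by
      refine Trig.add (((hp.mul hp.deriv).const_mul 2).mono (by omega))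
        (((hr.mul hr.deriv).const_mul 2).mono (by omega))
    exact (hp.deriv.mul h1).add ((hp.mul h2).const_mul (-1))
  have hder : ∀ θ, HasDerivAt (fun θ => p θ / (p θ ^ 2 + r θ ^ 2 + δ ^ 2))
      (N θ / (p θ ^ 2 + r θ ^ 2 + δ ^ 2) ^ 2) θ := by
    intro θ
    have h1 : HasDerivAt p (deriv p θ) θ := (hpc.differentiable (by norm_num) θ).hasDerivAt
    have h2 : HasDerivAt r (deriv r θ) θ := (hrc.differentiable (by norm_num) θ).hasDerivAt
    refine (h1.fun_div (((h1.fun_pow 2).fun_add (h2.fun_pow 2)).add_const (δ ^ 2))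
      (hpos θ).ne').congr_deriv ?_
    congr 1
    simp only [hN]
    norm_num
    ring
  have hdeq : deriv (fun θ => p θ / (p θ ^ 2 + r θ ^ 2 + δ ^ 2)) =
      fun θ => N θ / (p θ ^ 2 + r θ ^ 2 + δ ^ 2) ^ 2 := funext fun θ => (hder θ).deriv
  have hcd := hc.continuous_deriv le_rfl
  rw [hdeq] at hcd ⊢
  rcases hNt.zeros with h0 | ⟨s, hs, hz⟩
  · simp only [h0]
    simp
    positivity
  · refine (tv_le hder hcd hb s 0 1 zero_le_one fun t ht h => hz t ht ?_).trans ?_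
    · have := (hpos t).ne'
      simpa [this] using h
    · have : (s.card : ℝ) ≤ 6 * m := by
        have : s.card ≤ 6 * m := by omega
        exact_mod_cast this
      gcongr

/-- The boundary terms and the total variation in the integration by parts, for the kernel of
`kernel_bounds` multiplied by a weight `W` that is bounded together with its derivative. -/
lemma kernel_mul_bounds {m : ℕ} {p r W : ℝ → ℝ} (hp : Trig m p) (hr : Trig m r)
    (hW : ContDiff ℝ 1 W) {δ S : ℝ} (hδ : 0 < δ)
    (hS : ∀ θ ∈ Set.Icc (0 : ℝ) 2, |W θ| ≤ S ∧ |deriv W θ| ≤ S) :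
    |p 0 / (p 0 ^ 2 + r 0 ^ 2 + δ ^ 2) * W 0| + |p 1 / (p 1 ^ 2 + r 1 ^ 2 + δ ^ 2) * W 1| +
    ∫ θ in (0 : ℝ)..1, |deriv (fun θ => p θ / (p θ ^ 2 + r θ ^ 2 + δ ^ 2) * W θ) θ| ≤
      (12 * m + 5) * (1 / δ) * S := by
  obtain ⟨hc, hb, htv⟩ := kernel_bounds hp hr hδ
  set q : ℝ → ℝ := fun θ => p θ / (p θ ^ 2 + r θ ^ 2 + δ ^ 2) with hq
  have hS0 : 0 ≤ S := (abs_nonneg _).trans (hS 0 (by simp)).1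
  have h1 : ∀ θ ∈ Set.Icc (0 : ℝ) 2, |q θ * W θ| ≤ (1 / δ) * S := by
    intro θ hθ
    rw [abs_mul]
    exact mul_le_mul (hb θ) (hS θ hθ).1 (abs_nonneg _) (by positivity)
  have h2 : ∫ θ in (0 : ℝ)..1, |deriv (fun θ => q θ * W θ) θ| ≤
      ∫ θ in (0 : ℝ)..1, (|deriv q θ| * S + (1 / δ) * S) := by
    have hqc := hc.continuous_deriv le_rfl
    refine intervalIntegral.integral_mono_on zero_le_one
      (((hc.mul hW).continuous_deriv le_rfl).abs.intervalIntegrable _ _)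
      (((hqc.abs.mul continuous_const).add continuous_const).intervalIntegrable _ _) fun θ hθ => ?_
    have hθ' : θ ∈ Set.Icc (0 : ℝ) 2 := ⟨hθ.1, hθ.2.trans (by norm_num)⟩
    rw [deriv_fun_mul (hc.differentiable (by norm_num) θ) (hW.differentiable (by norm_num) θ)]
    refine (abs_add_le _ _).trans ?_
    rw [abs_mul, abs_mul]
    have := hS θ hθ'
    exact add_le_add (mul_le_mul_of_nonneg_left this.1 (abs_nonneg _))
      (mul_le_mul (hb θ) this.2 (abs_nonneg _) (by positivity))
  have hqc := hc.continuous_deriv le_rfl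
  have hqi : IntervalIntegrable (fun θ => |deriv q θ| * S) volume 0 1 :=
    (hqc.abs.mul continuous_const).intervalIntegrable _ _
  rw [intervalIntegral.integral_add hqi
    (continuous_const.intervalIntegrable _ _), intervalIntegral.integral_mul_const] at h2
  simp only [intervalIntegral.integral_const, sub_zero, one_smul] at h2
  have h3 := mul_le_mul_of_nonneg_right htv hS0
  have h4 := h1 0 (by simp)
  have h5 := h1 1 (by norm_num)
  calc _ ≤ 1 / δ * S + 1 / δ * S + (2 * (1 / δ) * (6 * m + 1) * S + 1 / δ * S) := by
        refine add_le_add (add_le_add h4 h5) (h2.trans (by linarith))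
    _ = _ := by ring

/-- Integration by parts with the kernel `p / (p² + r² + δ²)`, `p = ∂_y g`. The total variation bound
of `kernel_bounds` makes the estimate uniform in the dimension and in the polynomial `r`. -/
lemma term_one (d D : ℕ) : ∃ C : ℝ, 0 ≤ C ∧ ∀ (n : ℕ) (g r U : MvPolynomial (Fin n) ℝ)
    (φ φ' : ℝ → ℝ) (A B δ : ℝ), g.totalDegree ≤ d → r.totalDegree ≤ d → U.totalDegree ≤ D →
    IsTest φ φ' A B → 0 < δ →
    |∫ z, φ' (MvPolynomial.eval z.1 g) * dD g z * (dD g z /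
      (dD g z ^ 2 + MvPolynomial.eval z.1 r ^ 2 + δ ^ 2) * MvPolynomial.eval z.1 U ^ 2)
      ∂((γ n).prod (γ n))| ≤ C * A * (1 / δ) * nrm2 U := by
  obtain ⟨K, hK, hinterp⟩ := Trig.interp (2 * D)
  refine ⟨(12 * d + 5) * K * (2 * ((2 * D : ℕ) : ℝ) + 1), by positivity,
    fun n g r U φ φ' A B δ hg hr hU hφ hδ => ?_⟩
  have hW : ∀ z, Trig (2 * D) (fun θ => MvPolynomial.eval (rot θ z).1 U ^ 2) := fun z =>
    ((trig_eval_rot U hU z).pow 2).mono (by nlinarith)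
  have hUPG : PG (fun z : (Fin n → ℝ) × (Fin n → ℝ) => MvPolynomial.eval z.1 U ^ 2) :=
    ((PG.eval U).pow 2).fst
  have hq : PG (fun z : (Fin n → ℝ) × (Fin n → ℝ) =>
      dD g z / (dD g z ^ 2 + MvPolynomial.eval z.1 r ^ 2 + δ ^ 2)) := by
    have hc : Continuous (fun z : (Fin n → ℝ) × (Fin n → ℝ) =>
      dD g z / (dD g z ^ 2 + MvPolynomial.eval z.1 r ^ 2 + δ ^ 2)) :=
      (PG.dD g).continuous.div ((((PG.dD g).pow 2).add ((PG.eval r).fst.pow 2)).add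
        (PG.const (δ ^ 2))).continuous fun z => by positivity
    refine PG.of_bdd hc (1 / δ) fun z => ?_
    have := (kernel_bounds (trig_dD_rot g hg z) (trig_eval_rot r hr z) hδ).2.1 0
    simpa only [rot_zero] using this
  set R : (Fin n → ℝ) × (Fin n → ℝ) → ℝ := fun z => (12 * d + 5) * (1 / δ) *
    (K * ∑ j ∈ Finset.range (2 * (2 * D) + 1), |MvPolynomial.eval (rot (node (2 * D) j) z).1 U ^ 2|)
    with hR
  have hPGj : ∀ j, PG (fun z : (Fin n → ℝ) × (Fin n → ℝ) =>
      |MvPolynomial.eval (rot (node (2 * D) j) z).1 U ^ 2|) := fun j => (hUPG.rot _).abs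
  have hRPG : PG R := ((PG.sum _ fun j _ => hPGj j).const_mul _).const_mul _
  have h := ibp hφ g (hq.mul hUPG) (fun z =>
    (kernel_bounds (trig_dD_rot g hg z) (trig_eval_rot r hr z) hδ).1.mul
      ((hW z).contDiff.of_le (by norm_num))) hRPG.integrable (fun z =>
    kernel_mul_bounds (trig_dD_rot g hg z) (trig_eval_rot r hr z)
      ((hW z).contDiff.of_le (by norm_num)) hδ (fun θ hθ => hinterp _ (hW z) θ hθ))
  refine h.trans (le_of_eq ?_)
  have hj : ∀ j, ∫ z, |MvPolynomial.eval (rot (node (2 * D) j) z).1 U ^ 2| ∂((γ n).prod (γ n)) =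
      nrm2 U := by
    intro j
    rw [integral_rot (G := fun z => |MvPolynomial.eval z.1 U ^ 2|) hUPG.continuous.abs,
      integral_fun_fst (fun x => |MvPolynomial.eval x U ^ 2|)]
    simp [nrm2]
  rw [hR, integral_const_mul, integral_const_mul,
    integral_finsetSum _ fun j _ => (hPGj j).integrable]
  simp_rw [hj]
  simp
  ring

/-- The multiplicative smoothing inequality for polynomials `g` of degree at most `d` and weights
`U²` with `U` of degree at most `D`. -/
def MI (d D : ℕ) : Prop :=
  ∃ C : ℝ, 0 ≤ C ∧ ∀ (n : ℕ) (g U : MvPolynomial (Fin n) ℝ) (φ φ' : ℝ → ℝ) (A B : ℝ),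
    g.totalDegree ≤ d → U.totalDegree ≤ D → 0 < A → 0 < B → IsTest φ φ' A B → 0 < vr g →
    |∫ x, φ' (MvPolynomial.eval x g) * MvPolynomial.eval x U ^ 2 ∂(γ n)| ≤
      C * A ^ (1 / d : ℝ) * B ^ (1 - 1 / d : ℝ) * vr g ^ (-1 / (2 * d) : ℝ) * nrm2 U

/-- In degree one `∂_y g` depends on `y` only and is Gaussian with variance `|∇g|²`. Integrating by
parts with the factor `∂_y g` itself as kernel gives the inequality, since `𝔼 (∂_y g)² = |∇g|²`. -/
lemma MI_one (D : ℕ) : MI 1 D := by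
  obtain ⟨K, hK, hinterp⟩ := Trig.interp (1 + 2 * D)
  obtain ⟨P, hP, hpoin⟩ := poincare 1
  set c1 := ∫ t, |t| ^ 1 ∂(gaussianReal 0 1) with hc1
  have hc10 : 0 ≤ c1 := integral_nonneg fun _ => by positivity
  refine ⟨3 * K * (2 * ((1 + 2 * D : ℕ) : ℝ) + 1) * c1 * √P, by positivity,
    fun n g U φ φ' A B hg hU hA hB hφ hv => ?_⟩
  have hconst : ∀ i, ∃ v : ℝ, MvPolynomial.pderiv i g = MvPolynomial.C v := fun i => by
    have := totalDegree_pderiv_le g i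
    exact ⟨_, MvPolynomial.totalDegree_eq_zero_iff_eq_C.1 (by omega)⟩
  choose v hv' using hconst
  have hdD : ∀ z, dD g z = ∑ i, z.2 i * v i := fun z => by simp [dD, hv']
  set Q := ∑ i, v i ^ 2 with hQ
  have hgrad : ∀ x, gradSq g x = Q := fun x => by simp [gradSq, hv', hQ]
  have hvQ : vr g ≤ P * Q := by simpa [hgrad] using hpoin n g hg
  have hQ0 : 0 ≤ Q := Finset.sum_nonneg fun _ _ => sq_nonneg _
  have hQpos : 0 < Q := by
    rcases hQ0.eq_or_lt with h | h
    · rw [← h] at hvQ; linarith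
    · exact h
  set G : (Fin n → ℝ) × (Fin n → ℝ) → ℝ := fun z => dD g z * MvPolynomial.eval z.1 U ^ 2 with hG
  have hGPG : PG G := (PG.dD g).mul ((PG.eval U).pow 2).fst
  have hGt : ∀ z, Trig (1 + 2 * D) (fun θ => G (rot θ z)) := fun z =>
    ((trig_dD_rot g hg z).mul ((trig_eval_rot U hU z).pow 2)).mono (by nlinarith)
  set R : (Fin n → ℝ) × (Fin n → ℝ) → ℝ := fun z => 3 *
    (K * ∑ j ∈ Finset.range (2 * (1 + 2 * D) + 1), |G (rot (node (1 + 2 * D) j) z)|) with hR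
  have hRPG : PG R := ((PG.sum _ fun j _ => (hGPG.rot _).abs).const_mul _).const_mul _
  have h := ibp hφ g hGPG (fun z => (hGt z).contDiff.of_le (by norm_num)) hRPG.integrable
    (fun z => by
      have h0 := (hinterp _ (hGt z) 0 (by simp)).1
      have h1 := (hinterp _ (hGt z) 1 (by norm_num)).1
      have h2 := intervalIntegral.integral_mono_on (a := 0) (b := 1) (μ := volume) zero_le_one
        (f := fun θ => |deriv (fun θ => G (rot θ z)) θ|)
        (g := fun _ => K * ∑ j ∈ Finset.range (2 * (1 + 2 * D) + 1),
          |G (rot (node (1 + 2 * D) j) z)|)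
        (((hGt z).contDiff.continuous_deriv (by norm_num)).abs.intervalIntegrable _ _)
        (continuous_const.intervalIntegrable _ _)
        (fun θ hθ => (hinterp _ (hGt z) θ ⟨hθ.1, hθ.2.trans (by norm_num)⟩).2)
      simp only [intervalIntegral.integral_const, sub_zero, one_smul] at h2
      rw [hR]
      linarith)
  have hGint : ∫ z, |G z| ∂((γ n).prod (γ n)) = nrm2 U * (√Q * c1) := by
    have e : (fun z => |G z|) = fun z : (Fin n → ℝ) × (Fin n → ℝ) =>
        MvPolynomial.eval z.1 U ^ 2 * |∑ i, z.2 i * v i| ^ 1 := by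
      ext z; rw [hG]; simp only [hdD]; rw [abs_mul, abs_of_nonneg (sq_nonneg (MvPolynomial.eval z.1 U)), pow_one, mul_comm]
    rw [e, integral_prod_mul (fun x => MvPolynomial.eval x U ^ 2) (fun y : Fin n → ℝ => |∑ i, y i * v i| ^ 1),
      integral_linForm_pow, pow_one]
    rfl
  have hRint : ∫ z, R z ∂((γ n).prod (γ n)) =
      3 * K * (2 * ((1 + 2 * D : ℕ) : ℝ) + 1) * (nrm2 U * (√Q * c1)) := by
    rw [hR, integral_const_mul, integral_const_mul,
      integral_finsetSum _ fun j _ => (hGPG.rot _).abs.integrable]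
    simp_rw [integral_rot (G := fun z => |G z|) hGPG.continuous.abs, hGint]
    simp
    ring
  have hlhs : ∫ z, φ' (MvPolynomial.eval z.1 g) * dD g z * G z ∂((γ n).prod (γ n)) =
      (∫ x, φ' (MvPolynomial.eval x g) * MvPolynomial.eval x U ^ 2 ∂(γ n)) * Q := by
    have e : (fun z => φ' (MvPolynomial.eval z.1 g) * dD g z * G z) =
        fun z : (Fin n → ℝ) × (Fin n → ℝ) =>
        (φ' (MvPolynomial.eval z.1 g) * MvPolynomial.eval z.1 U ^ 2) *
          |∑ i, z.2 i * v i| ^ 2 := by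
      ext z; rw [hG]; simp only [hdD]; rw [sq_abs]; ring
    rw [e, integral_prod_mul (fun x => φ' (MvPolynomial.eval x g) * MvPolynomial.eval x U ^ 2)
      (fun y : Fin n → ℝ => |∑ i, y i * v i| ^ 2), integral_linForm_pow, gaussian_sq, Real.sq_sqrt hQ0, mul_one]
  rw [hlhs, hRint, abs_mul, abs_of_pos hQpos] at h
  set I := |∫ x, φ' (MvPolynomial.eval x g) * MvPolynomial.eval x U ^ 2 ∂(γ n)| with hI
  have hU0 := nrm2_nonneg U
  have hsQ : 0 < √Q := Real.sqrt_pos.2 hQpos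
  have hsv : 0 < √(vr g) := Real.sqrt_pos.2 hv
  have e1 : I * √Q ≤ A * (3 * K * (2 * ((1 + 2 * D : ℕ) : ℝ) + 1) * (nrm2 U * c1)) := by
    have hQQ : Q = √Q * √Q := (Real.mul_self_sqrt hQ0).symm
    have : I * √Q * √Q ≤ A * (3 * K * (2 * ((1 + 2 * D : ℕ) : ℝ) + 1) * (nrm2 U * c1)) * √Q := by
      calc I * √Q * √Q = I * Q := by rw [mul_assoc, ← hQQ]
        _ ≤ _ := h
        _ = _ := by ring
    exact le_of_mul_le_mul_right this hsQ
  have e2 : √(vr g) ≤ √P * √Q := by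
    rw [← Real.sqrt_mul hP]; exact Real.sqrt_le_sqrt hvQ
  have e3 : vr g ^ (-1 / (2 * (1 : ℕ)) : ℝ) = (√(vr g))⁻¹ := by
    rw [Real.sqrt_eq_rpow, ← Real.rpow_neg hv.le]; norm_num
  rw [e3]
  simp only [Nat.cast_one, div_one, Real.rpow_one, sub_self, Real.rpow_zero, mul_one]
  rw [show ∀ a b c d : ℝ, a * b * c⁻¹ * d = (a * b * d) / c from fun a b c d => by
    rw [div_eq_mul_inv]; ring, le_div_iff₀ hsv]
  calc I * √(vr g) ≤ I * (√P * √Q) := by gcongr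
    _ = √P * (I * √Q) := by ring
    _ ≤ √P * (A * (3 * K * (2 * ((1 + 2 * D : ℕ) : ℝ) + 1) * (nrm2 U * c1))) := by gcongr
    _ = _ := by ring

/-! ### Weighted small-ball estimates -/

/-- The test function whose derivative is the weight in `smallBall`. -/
lemma isTest_arctan {δ : ℝ} (hδ : 0 < δ) :
    IsTest (fun s => δ * Real.arctan (s / δ)) (fun s => δ ^ 2 / (s ^ 2 + δ ^ 2)) (2 * δ) 1 where
  hasDeriv s := by
    have h := ((hasDerivAt_id s).div_const δ).arctan.const_mul δ
    refine h.congr_deriv ?_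
    simp only [id]
    field_simp
    ring
  cont := continuous_const.div (by fun_prop) fun s => by positivity
  bdd s := by
    rw [abs_mul, abs_of_pos hδ, mul_comm]
    gcongr
    rw [abs_le]
    constructor <;> linarith [Real.neg_pi_div_two_lt_arctan (s / δ),
      Real.arctan_lt_pi_div_two (s / δ), Real.pi_le_four]
  bdd' s := by
    rw [abs_of_nonneg (by positivity), div_le_one (by positivity)]
    nlinarith [sq_nonneg s]

/-- The small-ball type functional `𝔼 U² δ² / (f² + δ²)`. -/
noncomputable def smallBall {n : ℕ} (f U : MvPolynomial (Fin n) ℝ) (δ : ℝ) : ℝ :=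
  ∫ x, δ ^ 2 / (MvPolynomial.eval x f ^ 2 + δ ^ 2) * MvPolynomial.eval x U ^ 2 ∂(γ n)

section
variable {n : ℕ}

lemma PG.resolvent (f : MvPolynomial (Fin n) ℝ) {δ : ℝ} (hδ : 0 < δ) :
    PG (fun x => δ ^ 2 / (MvPolynomial.eval x f ^ 2 + δ ^ 2)) :=
  PG.of_bdd ((isTest_arctan hδ).cont.comp (PG.eval f).continuous) 1
    fun _ => (isTest_arctan hδ).bdd' _

lemma smallBall_nonneg (f U : MvPolynomial (Fin n) ℝ) (δ : ℝ) : 0 ≤ smallBall f U δ :=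
  integral_nonneg fun x => by positivity

lemma smallBall_le (f U : MvPolynomial (Fin n) ℝ) {δ : ℝ} (hδ : 0 < δ) :
    smallBall f U δ ≤ nrm2 U := by
  refine integral_mono ((PG.resolvent f hδ).mul ((PG.eval U).pow 2)).integrable
    ((PG.eval U).pow 2).integrable fun x => ?_
  have := (le_abs_self _).trans ((isTest_arctan hδ).bdd' (MvPolynomial.eval x f))
  exact mul_le_of_le_one_left (sq_nonneg _) this

/-- The centred polynomial `f - 𝔼 f`. -/
noncomputable def ctr (f : MvPolynomial (Fin n) ℝ) : MvPolynomial (Fin n) ℝ :=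
  f - MvPolynomial.C (mn f)

lemma eval_ctr (f : MvPolynomial (Fin n) ℝ) (x : Fin n → ℝ) :
    MvPolynomial.eval x (ctr f) = MvPolynomial.eval x f - mn f := by simp [ctr]

lemma totalDegree_ctr_le {k : ℕ} {f : MvPolynomial (Fin n) ℝ} (hf : f.totalDegree ≤ k) :
    (ctr f).totalDegree ≤ k := by
  refine (MvPolynomial.totalDegree_sub _ _).trans ?_
  simpa using hf

lemma nrm2_ctr (f : MvPolynomial (Fin n) ℝ) : nrm2 (ctr f) = vr f := by
  simp [nrm2, vr, eval_ctr]

/-- Pointwise, `(𝔼 f)² ≤ 2 f² + 2 (f - 𝔼 f)²`, and the factor `f²` cancels the denominator. -/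
lemma mn_smallBall_le (f U : MvPolynomial (Fin n) ℝ) {δ : ℝ} (hδ : 0 < δ) :
    mn f ^ 2 * smallBall f U δ ≤ 4 * δ ^ 2 * nrm2 U + 4 * smallBall f (ctr f * U) δ := by
  have h1 : PG (fun x => 4 * δ ^ 2 * MvPolynomial.eval x U ^ 2) :=
    ((PG.eval U).pow 2).const_mul _
  have h2 : PG (fun x => 4 * (δ ^ 2 / (MvPolynomial.eval x f ^ 2 + δ ^ 2) *
      MvPolynomial.eval x (ctr f * U) ^ 2)) :=
    ((PG.resolvent f hδ).mul ((PG.eval _).pow 2)).const_mul _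
  have h := integral_mono (μ := γ n)
    (((PG.resolvent f hδ).mul ((PG.eval U).pow 2)).const_mul (mn f ^ 2)).integrable
    (h1.add h2).integrable (fun x => by
      simp only [map_mul, eval_ctr]
      generalize MvPolynomial.eval x f = a
      generalize MvPolynomial.eval x U = u
      generalize mn f = m
      have hpos : 0 < a ^ 2 + δ ^ 2 := by positivity
      rw [show m ^ 2 * (δ ^ 2 / (a ^ 2 + δ ^ 2) * u ^ 2) =
          (m ^ 2 * (δ ^ 2 * u ^ 2)) / (a ^ 2 + δ ^ 2) by ring,
        show 4 * δ ^ 2 * u ^ 2 + 4 * (δ ^ 2 / (a ^ 2 + δ ^ 2) * ((a - m) * u) ^ 2) =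
          ((4 * (a ^ 2 + δ ^ 2) + 4 * (a - m) ^ 2) * (δ ^ 2 * u ^ 2)) / (a ^ 2 + δ ^ 2) by
          field_simp]
      gcongr
      nlinarith [sq_nonneg (2 * a - m), sq_nonneg δ])
  rw [integral_const_mul, integral_add h1.integrable h2.integrable, integral_const_mul,
    integral_const_mul] at h
  exact h

end

/-- By Cauchy–Schwarz and hypercontractivity, `L²` norms of polynomials of bounded degree are
submultiplicative up to a constant. -/
lemma nrm2_mul_le (D : ℕ) : ∃ C : ℝ, 0 ≤ C ∧ ∀ (n : ℕ) (f U : MvPolynomial (Fin n) ℝ),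
    f.totalDegree ≤ D → U.totalDegree ≤ D → nrm2 (f * U) ≤ C * nrm2 f * nrm2 U := by
  obtain ⟨C, hC, h⟩ := hyper D
  refine ⟨C, hC, fun n f U hf hU => ?_⟩
  have hcs := sq_integral_mul_le (μ := γ n)
    (f := fun x => MvPolynomial.eval x f ^ 2) (g := fun x => MvPolynomial.eval x U ^ 2)
    (((PG.eval _).pow 2).pow 2).integrable (((PG.eval _).pow 2).pow 2).integrable
    (((PG.eval _).pow 2).mul ((PG.eval _).pow 2)).integrable
  simp_rw [← pow_mul] at hcs
  have hni := nrm2_nonneg f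
  have hnj := nrm2_nonneg U
  have e : nrm2 (f * U) = ∫ x, MvPolynomial.eval x f ^ 2 * MvPolynomial.eval x U ^ 2 ∂(γ n) := by
    simp [nrm2, mul_pow]
  rw [e]
  refine le_of_sq_le_sq (hcs.trans ?_) (by positivity)
  refine (mul_le_mul (h n f hf) (h n U hU) (integral_nonneg fun _ => by positivity)
    (by positivity)).trans (le_of_eq (by ring))

/-- Weighted small-ball estimate in terms of the full second moment `Var f + (𝔼 f)²`: the variance
is covered by the smoothing inequality with an arctangent as test function, the mean by
`mn_smallBall_le`. -/
lemma smallBall_bound {k : ℕ} (hk : 1 ≤ k) (D : ℕ) (hMI : MI k (k + D)) :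
    ∃ C : ℝ, 0 ≤ C ∧ ∀ (n : ℕ) (f U : MvPolynomial (Fin n) ℝ) (δ : ℝ),
      f.totalDegree ≤ k → U.totalDegree ≤ D → 0 < δ →
      smallBall f U δ * nrm2 f ^ (1 / (2 * k) : ℝ) ≤
        C * (δ ^ 2) ^ (1 / (2 * k) : ℝ) * nrm2 U := by
  obtain ⟨C, hC, h⟩ := hMI
  obtain ⟨H, hH, hh⟩ := nrm2_mul_le (k + D)
  have hk' : (1 : ℝ) ≤ k := by exact_mod_cast hk
  set s : ℝ := 1 / (2 * k) with hs
  have hs0 : 0 < s := by positivity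
  have hs1 : s ≤ 1 := by
    rw [hs, div_le_one (by positivity)]; linarith
  set C1 : ℝ := C * 2 ^ (1 / k : ℝ) with hC1
  have hC10 : 0 ≤ C1 := by positivity
  refine ⟨C1 + (C1 + 1 + 4 + 4 * (C1 * H)), by positivity, fun n f U δ hf hU hδ => ?_⟩
  have star : ∀ W : MvPolynomial (Fin n) ℝ, W.totalDegree ≤ k + D →
      smallBall f W δ * vr f ^ s ≤ C1 * (δ ^ 2) ^ s * nrm2 W := by
    intro W hW
    rcases (vr_nonneg f).eq_or_lt with h0 | h0
    · rw [← h0, Real.zero_rpow hs0.ne', mul_zero]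
      have := nrm2_nonneg W
      positivity
    have h1 := h n f W _ _ (2 * δ) 1 hf hW (by positivity) one_pos (isTest_arctan hδ) h0
    have h2 := (le_abs_self _).trans h1
    change smallBall f W δ ≤ _ at h2
    rw [Real.one_rpow, mul_one, Real.mul_rpow (by norm_num) hδ.le] at h2
    have e1 : (δ ^ 2) ^ s = δ ^ (1 / k : ℝ) := by
      rw [← Real.rpow_natCast, ← Real.rpow_mul hδ.le, hs]; congr 1; push_cast; field_simp
    have e2 : vr f ^ (-1 / (2 * k) : ℝ) = (vr f ^ s)⁻¹ := by
      rw [← Real.rpow_neg h0.le, hs]; congr 1; ring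
    rw [e2] at h2
    rw [e1]
    have h3 : 0 < vr f ^ s := Real.rpow_pos_of_pos h0 _
    calc smallBall f W δ * vr f ^ s ≤ (C * (2 ^ (1 / k : ℝ) * δ ^ (1 / k : ℝ)) * (vr f ^ s)⁻¹ *
          nrm2 W) * vr f ^ s := by gcongr
      _ = _ := by rw [hC1]; field_simp
  have hI0 := smallBall_nonneg f U δ
  have hI1 := smallBall_le f U hδ
  have hN := nrm2_nonneg U
  have hv := vr_nonneg f
  have hΔ : 0 < δ ^ 2 := by positivity
  have hΔs : 0 < (δ ^ 2) ^ s := Real.rpow_pos_of_pos hΔ _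
  have hX : 0 ≤ (δ ^ 2) ^ s * nrm2 U := by positivity
  have e0 := star U (by omega)
  have main : smallBall f U δ * (mn f ^ 2) ^ s ≤
      (C1 + 1 + 4 + 4 * (C1 * H)) * ((δ ^ 2) ^ s * nrm2 U) := by
    have hCH : 0 ≤ C1 * H := by positivity
    by_cases c1 : mn f ^ 2 ≤ vr f
    · have : (mn f ^ 2) ^ s ≤ vr f ^ s := Real.rpow_le_rpow (sq_nonneg _) c1 hs0.le
      have := mul_le_mul_of_nonneg_left this hI0
      nlinarith
    by_cases c2 : mn f ^ 2 ≤ δ ^ 2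
    · have : (mn f ^ 2) ^ s ≤ (δ ^ 2) ^ s := Real.rpow_le_rpow (sq_nonneg _) c2 hs0.le
      have := mul_le_mul hI1 this (by positivity) hN
      nlinarith
    push Not at c1 c2
    set M := mn f ^ 2 with hM
    have hM0 : 0 < M := hΔ.trans c2
    have hMs : 0 < M ^ s := Real.rpow_pos_of_pos hM0 _
    have hMs1 : M ^ s * M ^ (1 - s) = M := by
      rw [← Real.rpow_add hM0]; simp
    have hMs' : 0 < M ^ (1 - s) := Real.rpow_pos_of_pos hM0 _
    have hDs1 : (δ ^ 2) ^ s * (δ ^ 2) ^ (1 - s) = δ ^ 2 := by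
      rw [← Real.rpow_add hΔ]; simp
    have hDM : (δ ^ 2) ^ (1 - s) ≤ M ^ (1 - s) := Real.rpow_le_rpow hΔ.le c2.le (by linarith)
    have hd : (ctr f * U).totalDegree ≤ k + D :=
      (MvPolynomial.totalDegree_mul _ _).trans (add_le_add (totalDegree_ctr_le hf) hU)
    have e1 : nrm2 (ctr f * U) ≤ H * vr f * nrm2 U := by
      rw [← nrm2_ctr]
      exact hh n _ _ ((totalDegree_ctr_le hf).trans (by omega)) (hU.trans (by omega))
    have e2 : smallBall f (ctr f * U) δ ≤ (C1 * H) * (δ ^ 2) ^ s * M ^ (1 - s) * nrm2 U := by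
      rcases hv.eq_or_lt with h0 | h0
      · rw [← h0] at e1
        have := smallBall_le f (ctr f * U) hδ
        refine this.trans (e1.trans ?_)
        simp only [mul_zero, zero_mul]
        positivity
      · have h3 : 0 < vr f ^ s := Real.rpow_pos_of_pos h0 _
        have h4 : vr f ^ s * vr f ^ (1 - s) = vr f := by rw [← Real.rpow_add h0]; simp
        have h5 : vr f ^ (1 - s) ≤ M ^ (1 - s) := Real.rpow_le_rpow hv c1.le (by linarith)
        have h6 := star _ hd
        refine le_of_mul_le_mul_right ?_ h3
        calc smallBall f (ctr f * U) δ * vr f ^ s ≤ C1 * (δ ^ 2) ^ s * (H * vr f * nrm2 U) :=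
              h6.trans (by gcongr)
          _ = C1 * (δ ^ 2) ^ s * (H * (vr f ^ s * vr f ^ (1 - s)) * nrm2 U) := by rw [h4]
          _ ≤ C1 * (δ ^ 2) ^ s * (H * (vr f ^ s * M ^ (1 - s)) * nrm2 U) := by gcongr
          _ = _ := by ring
    have e3 := mn_smallBall_le f U hδ
    rw [← hM] at e3
    have e4 : (smallBall f U δ * M ^ s) * M ^ (1 - s) ≤
        ((4 + 4 * (C1 * H)) * ((δ ^ 2) ^ s * nrm2 U)) * M ^ (1 - s) := by
      calc (smallBall f U δ * M ^ s) * M ^ (1 - s) = M * smallBall f U δ := by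
            rw [mul_assoc, hMs1, mul_comm]
        _ ≤ 4 * δ ^ 2 * nrm2 U + 4 * smallBall f (ctr f * U) δ := e3
        _ = 4 * ((δ ^ 2) ^ s * (δ ^ 2) ^ (1 - s)) * nrm2 U + 4 * smallBall f (ctr f * U) δ := by
            rw [hDs1]
        _ ≤ 4 * ((δ ^ 2) ^ s * M ^ (1 - s)) * nrm2 U +
            4 * ((C1 * H) * (δ ^ 2) ^ s * M ^ (1 - s) * nrm2 U) := by gcongr
        _ = _ := by ring
    have e5 := le_of_mul_le_mul_right e4 hMs'
    nlinarith
  rw [nrm2_eq]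
  have hsub : (vr f + mn f ^ 2) ^ s ≤ vr f ^ s + (mn f ^ 2) ^ s :=
    Real.rpow_add_le_add_rpow hv (sq_nonneg _) hs0.le hs1
  calc smallBall f U δ * (vr f + mn f ^ 2) ^ s ≤
        smallBall f U δ * (vr f ^ s + (mn f ^ 2) ^ s) := by gcongr
    _ = smallBall f U δ * vr f ^ s + smallBall f U δ * (mn f ^ 2) ^ s := by ring
    _ ≤ C1 * (δ ^ 2) ^ s * nrm2 U + (C1 + 1 + 4 + 4 * (C1 * H)) * ((δ ^ 2) ^ s * nrm2 U) :=
        add_le_add e0 main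
    _ = _ := by ring

/-! ### Negative moments of directional derivatives -/

/-- The negative moment `𝔼 |t|^(-1/2)` of a standard Gaussian variable is finite. -/
lemma integrable_inv_sqrt_gaussian :
    Integrable (fun t : ℝ => (√|t|)⁻¹) (gaussianReal 0 1) := by
  have h1 := integrable_rpow_mul_exp_neg_mul_sq (b := 1 / 2) (by norm_num) (s := -(1 / 2))
    (by norm_num)
  have h2 := h1.comp_neg
  rw [gaussianReal_of_var_ne_zero _ one_ne_zero]
  rw [integrable_withDensity_iff_integrable_smul' (measurable_gaussianPDF 0 1)
    (Filter.Eventually.of_forall fun x => by simp [gaussianPDF])]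
  refine ((h1.add h2).const_mul ((√(2 * Real.pi))⁻¹)).congr ?_
  have h0 : ∀ᵐ t : ℝ, t ≠ 0 := by
    simp [ae_iff]
  filter_upwards [h0] with t ht
  have hh : (1 / 2 : ℝ) ≠ 0 := by norm_num
  have e1 : (√|t|)⁻¹ = |t| ^ (-(1 / 2) : ℝ) := by
    rw [Real.sqrt_eq_rpow, Real.rpow_neg (abs_nonneg t)]
  have e2 : t ^ (-(1 / 2) : ℝ) + (-t) ^ (-(1 / 2) : ℝ) = |t| ^ (-(1 / 2) : ℝ) := by
    have hc : Real.cos (-(1 / 2) * Real.pi) = 0 := by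
      rw [show -(1 / 2) * Real.pi = -(Real.pi / 2) by ring, Real.cos_neg, Real.cos_pi_div_two]
    rcases lt_or_gt_of_ne ht with h | h
    · rw [Real.rpow_def_of_neg h, hc, abs_of_neg h]; simp
    · rw [Real.rpow_def_of_neg (x := -t) (by linarith), hc, abs_of_pos h]; simp
  rw [e1, ← e2]
  simp only [gaussianPDF, Pi.add_apply, smul_eq_mul]
  rw [ENNReal.toReal_ofReal (gaussianPDFReal_nonneg _ _ _)]
  simp only [gaussianPDFReal, NNReal.coe_one, mul_one, sub_zero]
  rw [show -t ^ 2 / 2 = -(1 / 2) * t ^ 2 by ring, show -(1 / 2) * (-t) ^ 2 = -(1 / 2) * t ^ 2 by ring]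
  ring

/-- The tangent line inequality for the convex function `t ↦ t ^ (-1/4)`. -/
lemma tangent_line {t s : ℝ} (ht : 0 < t) (hs : 0 < s) :
    5 / 4 * (√√s)⁻¹ - t * (1 / 4 * (√√s)⁻¹ ^ 5) ≤ (√√t)⁻¹ := by
  have hb : 0 < √√t := by positivity
  have hc : 0 < √√s := by positivity
  have e : t = (√√t) ^ 4 := by
    rw [show (4 : ℕ) = 2 * 2 by norm_num, pow_mul, Real.sq_sqrt (by positivity),
      Real.sq_sqrt ht.le]
  set b := √√t
  set c := √√s
  rw [e]
  have key : 0 ≤ (b - c) ^ 2 * (b ^ 3 + 2 * b ^ 2 * c + 3 * b * c ^ 2 + 4 * c ^ 3) / (4 * b * c ^ 5) := by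
    positivity
  have : b⁻¹ - (5 / 4 * c⁻¹ - b ^ 4 * (1 / 4 * c⁻¹ ^ 5)) =
    (b - c) ^ 2 * (b ^ 3 + 2 * b ^ 2 * c + 3 * b * c ^ 2 + 4 * c ^ 3) / (4 * b * c ^ 5) := by
    field_simp
    ring
  linarith

lemma inv_sqrt_sqrt_le {G Δ t : ℝ} (hG : 0 < G) (hΔ : 0 < Δ) (ht : t ≠ 0) :
    (√√(G * t ^ 2 + Δ))⁻¹ ≤ (√|t|)⁻¹ * (√√G)⁻¹ := by
  rw [← mul_inv, ← Real.sqrt_mul (abs_nonneg t), ← Real.sqrt_sq_eq_abs,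
    ← Real.sqrt_mul (sq_nonneg t)]
  have : 0 < t ^ 2 := by positivity
  refine inv_anti₀ (by positivity) (Real.sqrt_le_sqrt (Real.sqrt_le_sqrt ?_))
  linarith

section
variable {n : ℕ}

lemma measurable_nrm2_dirDeriv (g : MvPolynomial (Fin n) ℝ) :
    Measurable (fun y => nrm2 (dirDeriv g y)) := by
  have h : StronglyMeasurable (fun z : (Fin n → ℝ) × (Fin n → ℝ) => dD g (z.2, z.1) ^ 2) :=
    (((PG.dD g).continuous.comp continuous_swap).pow 2).stronglyMeasurable
  have := h.integral_prod_right' (ν := γ n)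
  simpa [nrm2, eval_dirDeriv] using this.measurable

lemma dD_eq_zero (g : MvPolynomial (Fin n) ℝ) {x : Fin n → ℝ} (hx : gradSq g x = 0)
    (y : Fin n → ℝ) : dD g (x, y) = 0 := by
  unfold gradSq at hx
  rw [Finset.sum_eq_zero_iff_of_nonneg (fun i _ => sq_nonneg _)] at hx
  refine Finset.sum_eq_zero fun i hi => ?_
  have := hx i hi
  simp only [sq_eq_zero_iff] at this
  simp [this]

/-- For fixed `x`, `∂_y g (x) / |∇g (x)|` is a standard Gaussian variable in `y`. -/
lemma integral_inv_dD_le (g : MvPolynomial (Fin n) ℝ) {x : Fin n → ℝ} (h : 0 < gradSq g x)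
    {G Δ : ℝ} (hG : 0 < G) (hΔ : 0 < Δ) :
    ∫ y, (√√(G * dD g (x, y) ^ 2 / gradSq g x + Δ))⁻¹ ∂(γ n) ≤
      (∫ t, (√|t|)⁻¹ ∂(gaussianReal 0 1)) * (√√G)⁻¹ := by
  have e := integral_linForm (fun i => MvPolynomial.eval x (MvPolynomial.pderiv i g))
    (F := fun s => (√√(G * s ^ 2 / gradSq g x + Δ))⁻¹) (by fun_prop)
  simp only [dD]
  rw [e, ← integral_mul_const]
  have h0 : ∀ᵐ t ∂(gaussianReal 0 1), t ≠ (0 : ℝ) := by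
    have := nullSingletonClass_gaussianReal (μ := 0) (v := 1) one_ne_zero
    simp [ae_iff]
  have hb : ∀ t : ℝ, t ≠ 0 → (√√(G * (√(∑ i, MvPolynomial.eval x (MvPolynomial.pderiv i g) ^ 2) *
      t) ^ 2 / gradSq g x + Δ))⁻¹ ≤ (√|t|)⁻¹ * (√√G)⁻¹ := fun t ht => by
    have e1 : G * (√(∑ i, MvPolynomial.eval x (MvPolynomial.pderiv i g) ^ 2) * t) ^ 2 /
        gradSq g x = G * t ^ 2 := by
      rw [mul_pow, Real.sq_sqrt (Finset.sum_nonneg fun i _ => sq_nonneg _)]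
      change G * (gradSq g x * t ^ 2) / gradSq g x = _
      field_simp
    rw [e1]
    exact inv_sqrt_sqrt_le hG hΔ ht
  refine integral_mono_of_nonneg (Filter.Eventually.of_forall fun t => inv_nonneg.2 (Real.sqrt_nonneg _))
    (integrable_inv_sqrt_gaussian.mul_const _) ?_
  filter_upwards [h0] with t ht using hb t ht

/-- Averaging the pointwise bound `𝔼 |∂_y g (x)|^(-1/2) ≤ κ |∇g(x)|^(-1/2)` against the weight
`|∇g|² / 𝔼|∇g|²`, with Jensen's inequality in `x`, bounds negative moments of `‖∂_y g‖_{L²}`. -/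
lemma neg_moment : ∃ κ : ℝ, 0 ≤ κ ∧ ∀ (n : ℕ) (g : MvPolynomial (Fin n) ℝ) (Δ : ℝ), 0 < Δ →
    0 < ∫ x, gradSq g x ∂(γ n) →
    ∫ y, (√√(nrm2 (dirDeriv g y) + Δ))⁻¹ ∂(γ n) ≤ κ * (√√(∫ x, gradSq g x ∂(γ n)))⁻¹ := by
  refine ⟨∫ t, (√|t|)⁻¹ ∂(gaussianReal 0 1), integral_nonneg fun t => by positivity,
    fun n g Δ hΔ hG => ?_⟩
  set G := ∫ x, gradSq g x ∂(γ n) with hGdef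
  set κ := ∫ t, (√|t|)⁻¹ ∂(gaussianReal 0 1)
  let w : (Fin n → ℝ) → ℝ := fun x => gradSq g x / G
  have hw0 : ∀ x, 0 ≤ w x := fun x => div_nonneg (gradSq_nonneg g x) hG.le
  have hwi : Integrable w (γ n) := (PG.gradSq g).integrable.div_const G
  have hw1 : ∫ x, w x ∂(γ n) = 1 := by
    simp only [w]; rw [integral_div, ← hGdef, div_self hG.ne']
  let t : (Fin n → ℝ) → (Fin n → ℝ) → ℝ := fun x y => G * dD g (x, y) ^ 2 / gradSq g x + Δ
  have htΔ : ∀ x y, Δ ≤ t x y := fun x y => by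
    have : 0 ≤ G * dD g (x, y) ^ 2 / gradSq g x :=
      div_nonneg (by positivity) (gradSq_nonneg g x)
    simp only [t]; linarith
  have htpos : ∀ x y, 0 < t x y := fun x y => hΔ.trans_le (htΔ x y)
  have hwt : ∀ x y, w x * t x y = dD g (x, y) ^ 2 + w x * Δ := fun x y => by
    simp only [w, t]
    by_cases h : gradSq g x = 0
    · simp [h, dD_eq_zero g h y]
    · field_simp
  let H : (Fin n → ℝ) × (Fin n → ℝ) → ℝ := fun z => w z.1 * (√√(t z.1 z.2))⁻¹
  have hHm : Measurable H := by
    have h1 : Measurable (fun z : (Fin n → ℝ) × (Fin n → ℝ) => dD g (z.1, z.2)) :=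
      (PG.dD g).continuous.measurable
    have h2 : Measurable (gradSq g) := (PG.gradSq g).continuous.measurable
    simp only [H, w, t]
    fun_prop
  have hinv : ∀ x y, (√√(t x y))⁻¹ ≤ (√√Δ)⁻¹ := fun x y =>
    inv_anti₀ (by positivity) (Real.sqrt_le_sqrt (Real.sqrt_le_sqrt (htΔ x y)))
  have hHi : Integrable H ((γ n).prod (γ n)) := by
    refine Integrable.mono' ((hwi.mul_const (√√Δ)⁻¹).comp_fst (γ n)) hHm.aestronglyMeasurable
      (Filter.Eventually.of_forall fun z => ?_)
    have h0 : 0 ≤ H z := mul_nonneg (hw0 _) (by positivity)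
    rw [Real.norm_eq_abs, abs_of_nonneg h0]
    exact mul_le_mul_of_nonneg_left (hinv _ _) (hw0 _)
  have hHxi : ∀ y, Integrable (fun x => H (x, y)) (γ n) := fun y => by
    refine Integrable.mono' (hwi.mul_const (√√Δ)⁻¹)
      (hHm.comp measurable_prodMk_right).aestronglyMeasurable
      (Filter.Eventually.of_forall fun x => ?_)
    have h0 : 0 ≤ H (x, y) := mul_nonneg (hw0 _) (by positivity)
    rw [Real.norm_eq_abs, abs_of_nonneg h0]
    exact mul_le_mul_of_nonneg_left (hinv _ _) (hw0 _)
  -- Jensen's inequality in `x` for the probability density `w`: the tangent line at `s` is integrated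
  -- instead of invoking convexity.
  have hJ : ∀ y, (√√(nrm2 (dirDeriv g y) + Δ))⁻¹ ≤ ∫ x, H (x, y) ∂(γ n) := fun y => by
    have hq : 0 < nrm2 (dirDeriv g y) + Δ := by linarith [nrm2_nonneg (dirDeriv g y)]
    set s := nrm2 (dirDeriv g y) + Δ with hs
    have hdi : Integrable (fun x => dD g (x, y) ^ 2) (γ n) := by
      simpa [eval_dirDeriv] using ((PG.eval (dirDeriv g y)).pow 2).integrable (μ := γ n)
    have hQ : ∫ x, dD g (x, y) ^ 2 ∂(γ n) = nrm2 (dirDeriv g y) := by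
      simp [nrm2, eval_dirDeriv]
    have hi2 : Integrable (fun x => w x * (5 / 4 * (√√s)⁻¹)) (γ n) := hwi.mul_const _
    have hi3 : Integrable (fun x => (dD g (x, y) ^ 2 + w x * Δ) * (1 / 4 * (√√s)⁻¹ ^ 5)) (γ n) :=
      (hdi.add (hwi.mul_const Δ)).mul_const _
    have e : ∫ x, (w x * (5 / 4 * (√√s)⁻¹) -
        (dD g (x, y) ^ 2 + w x * Δ) * (1 / 4 * (√√s)⁻¹ ^ 5)) ∂(γ n) = (√√s)⁻¹ := by
      rw [integral_sub hi2 hi3, integral_mul_const, integral_mul_const,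
        integral_add hdi (hwi.mul_const Δ), integral_mul_const, hw1, hQ, one_mul, one_mul, ← hs]
      have e4 : s = (√√s) ^ 4 := by
        rw [show (4 : ℕ) = 2 * 2 by norm_num, pow_mul, Real.sq_sqrt (by positivity),
          Real.sq_sqrt hq.le]
      have hc : 0 < √√s := by positivity
      generalize √√s = c at *
      rw [e4]
      field_simp
      norm_num
    rw [← e]
    refine integral_mono (hi2.sub hi3) (hHxi y) fun x => ?_
    simp only [H]
    rw [← hwt]
    have := mul_le_mul_of_nonneg_left (tangent_line (htpos x y) hq) (hw0 x)
    linarith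
  have hci : Integrable (fun y => (√√(nrm2 (dirDeriv g y) + Δ))⁻¹) (γ n) := by
    have hm := measurable_nrm2_dirDeriv g
    refine Integrable.mono' (integrable_const (√√Δ)⁻¹)
      (hm.add_const Δ).sqrt.sqrt.inv.aestronglyMeasurable (Filter.Eventually.of_forall fun y => ?_)
    rw [Real.norm_eq_abs, abs_of_nonneg (by positivity)]
    refine inv_anti₀ (by positivity) (Real.sqrt_le_sqrt (Real.sqrt_le_sqrt ?_))
    linarith [nrm2_nonneg (dirDeriv g y)]
  have hin : ∀ x, ∫ y, H (x, y) ∂(γ n) ≤ w x * (κ * (√√G)⁻¹) := fun x => by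
    simp only [H]
    rw [integral_const_mul]
    rcases (gradSq_nonneg g x).eq_or_lt with h | h
    · simp [w, ← h]
    refine mul_le_mul_of_nonneg_left ?_ (hw0 x)
    exact integral_inv_dD_le g h hG hΔ
  calc ∫ y, (√√(nrm2 (dirDeriv g y) + Δ))⁻¹ ∂(γ n)
      ≤ ∫ y, ∫ x, H (x, y) ∂(γ n) ∂(γ n) := integral_mono hci hHi.integral_prod_right hJ
    _ = ∫ x, ∫ y, H (x, y) ∂(γ n) ∂(γ n) :=
        (integral_integral_swap (f := fun x y => H (x, y)) hHi).symm
    _ ≤ ∫ x, w x * (κ * (√√G)⁻¹) ∂(γ n) :=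
        integral_mono hHi.integral_prod_left (hwi.mul_const _) hin
    _ = _ := by rw [integral_mul_const, hw1, one_mul]

end

lemma rpow_le_one_add {v a : ℝ} (hv : 0 ≤ v) (ha0 : 0 ≤ a) (ha1 : a ≤ 1) : v ^ a ≤ 1 + v := by
  rcases le_total v 1 with h | h
  · linarith [Real.rpow_le_one hv h ha0]
  · have := Real.rpow_le_rpow_of_exponent_le h ha1
    rw [Real.rpow_one] at this
    linarith

lemma sqrt_sqrt_eq {u : ℝ} (hu : 0 ≤ u) : √√u = u ^ (1 / 4 : ℝ) := by
  rw [Real.sqrt_eq_rpow, Real.sqrt_eq_rpow, ← Real.rpow_mul hu]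
  norm_num

lemma integrable_nrm2_rpow {n : ℕ} (g : MvPolynomial (Fin n) ℝ) {Δ a : ℝ} (hΔ : 0 < Δ)
    (ha : 0 ≤ a) : Integrable (fun y => (nrm2 (dirDeriv g y) + Δ) ^ (-a)) (γ n) := by
  refine Integrable.mono' (integrable_const (Δ ^ (-a)))
    (((measurable_nrm2_dirDeriv g).add_const Δ).pow_const _).aestronglyMeasurable
    (Filter.Eventually.of_forall fun y => ?_)
  have h0 := nrm2_nonneg (dirDeriv g y)
  rw [Real.norm_eq_abs, abs_of_nonneg (by positivity)]
  exact Real.rpow_le_rpow_of_nonpos hΔ (by linarith) (by linarith)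

/-- The negative moments of `‖∂_y g‖_{L²}` of the orders needed in the induction, in terms of the
variance of `g`. They follow from `neg_moment`, the bound `v ^ (1 / k) ≤ 1 + v`
and the Poincaré inequality. -/
lemma neg_moment_rpow {k : ℕ} (hk : 1 ≤ k) (d : ℕ) : ∃ K : ℝ, 0 ≤ K ∧
    ∀ (n : ℕ) (g : MvPolynomial (Fin n) ℝ) (Δ : ℝ), g.totalDegree ≤ d → 0 < Δ → 0 < vr g →
    ∫ y, (nrm2 (dirDeriv g y) + Δ) ^ (-(1 / (4 * k)) : ℝ) ∂(γ n) ≤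
      K * vr g ^ (-(1 / (4 * k)) : ℝ) := by
  obtain ⟨κ, hκ, hneg⟩ := neg_moment
  obtain ⟨P, hP, hpoin⟩ := poincare d
  have hk' : (0 : ℝ) < k := by exact_mod_cast hk
  refine ⟨(1 + κ) * (P + 1) ^ (1 / (4 * k) : ℝ), by positivity, fun n g Δ hg hΔ hv => ?_⟩
  set a : ℝ := 1 / (4 * k) with ha
  have ha0 : 0 ≤ a := by positivity
  set G := ∫ x, gradSq g x ∂(γ n) with hGdef
  have hvG : vr g ≤ (P + 1) * G := by
    have h1 := hpoin n g hg
    have h2 : 0 ≤ G := integral_nonneg fun x => gradSq_nonneg g x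
    linarith
  have hG : 0 < G := by
    by_contra h
    nlinarith
  have hX := hneg n g Δ hΔ hG
  have hpt : ∀ y, (nrm2 (dirDeriv g y) + Δ) ^ (-a) ≤
      G ^ (-a) * (1 + √√G * (√√(nrm2 (dirDeriv g y) + Δ))⁻¹) := fun y => by
    have hu : 0 < nrm2 (dirDeriv g y) + Δ := by linarith [nrm2_nonneg (dirDeriv g y)]
    set u := nrm2 (dirDeriv g y) + Δ
    have h1 := rpow_le_one_add (v := √√G * (√√u)⁻¹) (a := 1 / k) (by positivity) (by positivity)
      (by rw [div_le_one hk']; exact_mod_cast hk)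
    have h2 : (√√G * (√√u)⁻¹) ^ (1 / k : ℝ) = G ^ a * u ^ (-a) := by
      rw [Real.mul_rpow (by positivity) (by positivity), Real.inv_rpow (by positivity),
        sqrt_sqrt_eq hG.le, sqrt_sqrt_eq hu.le, ← Real.rpow_mul hG.le, ← Real.rpow_mul hu.le,
        ← Real.rpow_neg hu.le, show (1 / 4 * (1 / k) : ℝ) = a by rw [ha]; field_simp]
    rw [h2] at h1
    calc u ^ (-a) = G ^ (-a) * (G ^ a * u ^ (-a)) := by
          rw [← mul_assoc, ← Real.rpow_add hG]; simp
      _ ≤ _ := by gcongr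
  have hci : Integrable (fun y => (√√(nrm2 (dirDeriv g y) + Δ))⁻¹) (γ n) := by
    refine (integrable_nrm2_rpow g hΔ (a := 1 / 4) (by norm_num)).congr
      (Filter.Eventually.of_forall fun y => ?_)
    have hu : 0 < nrm2 (dirDeriv g y) + Δ := by linarith [nrm2_nonneg (dirDeriv g y)]
    simp only
    rw [sqrt_sqrt_eq hu.le, Real.rpow_neg hu.le]
  have hGs : 0 < √√G := by positivity
  calc ∫ y, (nrm2 (dirDeriv g y) + Δ) ^ (-a) ∂(γ n)
      ≤ ∫ y, G ^ (-a) * (1 + √√G * (√√(nrm2 (dirDeriv g y) + Δ))⁻¹) ∂(γ n) :=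
        integral_mono (integrable_nrm2_rpow g hΔ ha0)
          (((integrable_const 1).add (hci.const_mul _)).const_mul _) hpt
    _ = G ^ (-a) * (1 + √√G * ∫ y, (√√(nrm2 (dirDeriv g y) + Δ))⁻¹ ∂(γ n)) := by
        rw [integral_const_mul, integral_add (integrable_const 1) (hci.const_mul _),
          integral_const_mul]
        simp
    _ ≤ G ^ (-a) * (1 + √√G * (κ * (√√G)⁻¹)) := by gcongr
    _ = (1 + κ) * G ^ (-a) := by field_simp
    _ ≤ (1 + κ) * (vr g / (P + 1)) ^ (-a) := by
        gcongr 1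
        refine Real.rpow_le_rpow_of_nonpos (by positivity) ?_ (by linarith)
        rw [div_le_iff₀ (by positivity)]
        linarith
    _ = _ := by
        rw [Real.div_rpow hv.le (by positivity), Real.rpow_neg (by positivity : 0 ≤ P + 1), div_inv_eq_mul]
        ring

/-! ### Induction on the degree -/

set_option maxHeartbeats 800000 in
/-- The part where the derivatives in two independent directions are both small. The integral in `x`
is at most the geometric mean of the bounds for the two directions, so only half of the exponent is
spent in each of the two independent integrations in `y`. -/
lemma pair_smallBall {k : ℕ} (hk : 1 ≤ k) (D : ℕ) (hMI : MI k (k + D)) :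
    ∃ C : ℝ, 0 ≤ C ∧ ∀ (n : ℕ) (g U : MvPolynomial (Fin n) ℝ) (δ : ℝ),
      g.totalDegree ≤ k + 1 → U.totalDegree ≤ D → 0 < δ → 0 < vr g →
      ∫ q, ∫ x, δ ^ 2 / (dD g (x, q.1) ^ 2 + dD g (x, q.2) ^ 2 + δ ^ 2) *
          MvPolynomial.eval x U ^ 2 ∂(γ n) ∂((γ n).prod (γ n)) ≤
        C * ((δ ^ 2) / vr g) ^ (1 / (2 * k) : ℝ) * nrm2 U := by
  obtain ⟨C, hC, hsb⟩ := smallBall_bound hk D hMI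
  obtain ⟨K, hK, hneg⟩ := neg_moment_rpow hk (k + 1)
  have hk' : (1 : ℝ) ≤ k := by exact_mod_cast hk
  refine ⟨(C + 1) * K ^ 2, by positivity, fun n g U δ hg hU hδ hv => ?_⟩
  set s : ℝ := 1 / (2 * k) with hs
  have hs0 : 0 ≤ s := by positivity
  have hs1 : s ≤ 1 := by rw [hs, div_le_one (by positivity)]; linarith
  have hs4 : (1 / (4 * k) : ℝ) = s / 2 := by rw [hs]; field_simp; norm_num
  have hneg' := hneg n g (δ ^ 2) hg (by positivity) hv
  rw [hs4] at hneg'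
  set N := nrm2 U with hN
  have hN0 : 0 ≤ N := nrm2_nonneg U
  set M := (C + 1) * (δ ^ 2) ^ s * N with hM
  have hM0 : 0 ≤ M := by positivity
  set Y : (Fin n → ℝ) → ℝ := fun y => (nrm2 (dirDeriv g y) + δ ^ 2) ^ (-(s / 2)) with hY
  have hYi : Integrable Y (γ n) := integrable_nrm2_rpow g (by positivity) (by positivity)
  have hQ : ∀ y, 0 < nrm2 (dirDeriv g y) + δ ^ 2 := fun y => by
    have := nrm2_nonneg (dirDeriv g y); positivity
  have hY0 : ∀ y, 0 ≤ Y y := fun y => (Real.rpow_pos_of_pos (hQ y) _).le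
  have hT : ∀ y, smallBall (dirDeriv g y) U δ ≤ M * Y y ^ 2 := fun y => by
    have h1 := hsb n (dirDeriv g y) U δ (totalDegree_dirDeriv_le g hg y) hU hδ
    have h2 := smallBall_le (dirDeriv g y) U hδ
    have h3 := smallBall_nonneg (dirDeriv g y) U δ
    have h4 := Real.rpow_add_le_add_rpow (nrm2_nonneg (dirDeriv g y)) (sq_nonneg δ) hs0 hs1
    have h5 : Y y ^ 2 = ((nrm2 (dirDeriv g y) + δ ^ 2) ^ s)⁻¹ := by
      rw [hY]
      simp only
      rw [← Real.rpow_natCast, ← Real.rpow_mul (hQ y).le, ← Real.rpow_neg (hQ y).le]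
      congr 1; push_cast; ring
    have h6 : 0 < (nrm2 (dirDeriv g y) + δ ^ 2) ^ s := Real.rpow_pos_of_pos (hQ y) _
    rw [h5, ← div_eq_mul_inv, le_div_iff₀ h6]
    have h7 : 0 ≤ (δ ^ 2) ^ s := by positivity
    calc smallBall (dirDeriv g y) U δ * (nrm2 (dirDeriv g y) + δ ^ 2) ^ s
        ≤ smallBall (dirDeriv g y) U δ * (nrm2 (dirDeriv g y) ^ s + (δ ^ 2) ^ s) := by gcongr
      _ ≤ C * (δ ^ 2) ^ s * N + N * (δ ^ 2) ^ s := by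
          rw [mul_add]
          exact add_le_add h1 (by gcongr)
      _ = M := by rw [hM]; ring
  have hin : ∀ q : (Fin n → ℝ) × (Fin n → ℝ),
      ∫ x, δ ^ 2 / (dD g (x, q.1) ^ 2 + dD g (x, q.2) ^ 2 + δ ^ 2) *
          MvPolynomial.eval x U ^ 2 ∂(γ n) ≤ M * (Y q.1 * Y q.2) := fun q => by
    set J := ∫ x, δ ^ 2 / (dD g (x, q.1) ^ 2 + dD g (x, q.2) ^ 2 + δ ^ 2) *
          MvPolynomial.eval x U ^ 2 ∂(γ n) with hJ
    have hJ0 : 0 ≤ J := integral_nonneg fun x => by positivity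
    have hj1 : J ≤ smallBall (dirDeriv g q.1) U δ := by
      refine integral_mono_of_nonneg (Filter.Eventually.of_forall fun x => by positivity)
        ((PG.resolvent _ hδ).mul ((PG.eval U).pow 2)).integrable
        (Filter.Eventually.of_forall fun x => ?_)
      simp only [eval_dirDeriv]
      gcongr
      linarith [sq_nonneg (dD g (x, q.2))]
    have hj2 : J ≤ smallBall (dirDeriv g q.2) U δ := by
      refine integral_mono_of_nonneg (Filter.Eventually.of_forall fun x => by positivity)
        ((PG.resolvent _ hδ).mul ((PG.eval U).pow 2)).integrable
        (Filter.Eventually.of_forall fun x => ?_)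
      simp only [eval_dirDeriv]
      gcongr
      linarith [sq_nonneg (dD g (x, q.1))]
    have h1 := hj1.trans (hT q.1)
    have h2 := hj2.trans (hT q.2)
    refine le_of_sq_le_sq ?_ (mul_nonneg hM0 (mul_nonneg (hY0 _) (hY0 _)))
    calc J ^ 2 = J * J := sq J
      _ ≤ (M * Y q.1 ^ 2) * (M * Y q.2 ^ 2) := mul_le_mul h1 h2 hJ0 (by positivity)
      _ = _ := by ring
  calc _ ≤ ∫ q, M * (Y q.1 * Y q.2) ∂((γ n).prod (γ n)) := by
        refine integral_mono_of_nonneg (Filter.Eventually.of_forall fun q =>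
          integral_nonneg fun x => by positivity) ((hYi.mul_prod hYi).const_mul M)
          (Filter.Eventually.of_forall hin)
    _ = M * (∫ y, Y y ∂(γ n)) ^ 2 := by
        rw [integral_const_mul, integral_prod_mul, sq]
    _ ≤ M * (K * vr g ^ (-(s / 2))) ^ 2 :=
        mul_le_mul_of_nonneg_left (pow_le_pow_left₀ (integral_nonneg hY0) hneg' 2) hM0
    _ = _ := by
        have : (vr g ^ (-(s / 2))) ^ 2 = (vr g ^ s)⁻¹ := by
          rw [← Real.rpow_natCast, ← Real.rpow_mul hv.le, ← Real.rpow_neg hv.le]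
          congr 1; push_cast; ring
        rw [mul_pow, this, Real.div_rpow (sq_nonneg δ) hv.le, hM]
        ring

section
variable {n : ℕ}

/-- Exchange of the two independent directions. -/
lemma integral_exchange {W : ((Fin n → ℝ) × (Fin n → ℝ)) × (Fin n → ℝ) → ℝ} (hW : Continuous W) :
    ∫ p, W ((p.1.1, p.2), p.1.2) ∂(((γ n).prod (γ n)).prod (γ n)) =
      ∫ p, W p ∂(((γ n).prod (γ n)).prod (γ n)) := by
  have h1 := measurePreserving_prodAssoc (γ n) (γ n) (γ n)
  have h2 := (MeasurePreserving.id (γ n)).prod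
    (Measure.measurePreserving_swap (μ := γ n) (ν := γ n))
  have h3 := h1.symm.comp (h2.comp h1)
  rw [← h3.map_eq, integral_map h3.measurable.aemeasurable hW.aestronglyMeasurable]
  rw [h3.map_eq]
  rfl

/-- Integrate first in `x` and then in the two directions. -/
lemma integral_assoc {W : ((Fin n → ℝ) × (Fin n → ℝ)) × (Fin n → ℝ) → ℝ} (hW : PG W) :
    ∫ p, W p ∂(((γ n).prod (γ n)).prod (γ n)) =
      ∫ q, ∫ x, W ((x, q.1), q.2) ∂(γ n) ∂((γ n).prod (γ n)) := by
  have h1 := (measurePreserving_prodAssoc (γ n) (γ n) (γ n)).symm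
  have hW' : PG (fun p : (Fin n → ℝ) × ((Fin n → ℝ) × (Fin n → ℝ)) => W ((p.1, p.2.1), p.2.2)) :=
    hW.comp (by fun_prop) 1 fun p => by
      rw [one_mul]
      exact max_le (max_le (norm_fst_le p) ((norm_fst_le p.2).trans (norm_snd_le p)))
        ((norm_snd_le p.2).trans (norm_snd_le p))
  rw [← integral_prod_symm _ hW'.integrable, ← h1.map_eq,
    integral_map h1.measurable.aemeasurable hW.continuous.aestronglyMeasurable]
  rfl
end

set_option maxHeartbeats 800000 in
/-- The induction step before optimising in `δ`: with `f₁, f₂` the derivatives of `g` in two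
independent directions and `den = f₁² + f₂² + δ²`, split `1 = f₁²/den + f₂²/den + δ²/den`. The first
two terms are equal by symmetry and bounded by `term_one`, the third one by `pair_smallBall`. -/
lemma MI_step_delta {k : ℕ} (hk : 1 ≤ k) (D : ℕ) (hMI : MI k (k + D)) :
    ∃ C : ℝ, 0 ≤ C ∧ ∀ (n : ℕ) (g U : MvPolynomial (Fin n) ℝ) (φ φ' : ℝ → ℝ) (A B δ : ℝ),
      g.totalDegree ≤ k + 1 → U.totalDegree ≤ D → 0 < A → 0 < B → IsTest φ φ' A B → 0 < vr g →
      0 < δ →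
      |∫ x, φ' (MvPolynomial.eval x g) * MvPolynomial.eval x U ^ 2 ∂(γ n)| ≤
        C * (A / δ + B * ((δ ^ 2) / vr g) ^ (1 / (2 * k) : ℝ)) * nrm2 U := by
  obtain ⟨C₁, hC₁, ht⟩ := term_one (k + 1) D
  obtain ⟨C₂, hC₂, hp⟩ := pair_smallBall hk D hMI
  refine ⟨2 * C₁ + C₂, by positivity, fun n g U φ φ' A B δ hg hU hA hB hφ hv hδ => ?_⟩
  have hN0 : 0 ≤ nrm2 U := nrm2_nonneg U
  let f₁ : ((Fin n → ℝ) × (Fin n → ℝ)) × (Fin n → ℝ) → ℝ := fun p => dD g p.1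
  let f₂ : ((Fin n → ℝ) × (Fin n → ℝ)) × (Fin n → ℝ) → ℝ := fun p => dD g (p.1.1, p.2)
  let κ : ((Fin n → ℝ) × (Fin n → ℝ)) × (Fin n → ℝ) → ℝ := fun p =>
    φ' (MvPolynomial.eval p.1.1 g) * MvPolynomial.eval p.1.1 U ^ 2
  let den : ((Fin n → ℝ) × (Fin n → ℝ)) × (Fin n → ℝ) → ℝ := fun p =>
    f₁ p ^ 2 + f₂ p ^ 2 + δ ^ 2
  have hden : ∀ p, 0 < den p := fun p => by simp only [den]; positivity
  have hf₁ : Continuous f₁ := (PG.dD g).fst.continuous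
  have hf₂ : Continuous f₂ := (PG.dD g).continuous.comp
    ((continuous_fst.comp continuous_fst).prodMk continuous_snd)
  have hdenc : Continuous den := ((hf₁.pow 2).add (hf₂.pow 2)).add continuous_const
  have hκx : PG (fun x => φ' (MvPolynomial.eval x g) * MvPolynomial.eval x U ^ 2) :=
    (PG.of_bdd (hφ.cont.comp (PG.eval g).continuous) B fun x => hφ.bdd' _).mul
      ((PG.eval U).pow 2)
  have hκ : PG κ := hκx.fst.fst
  have hPGκ : ∀ {a : ((Fin n → ℝ) × (Fin n → ℝ)) × (Fin n → ℝ) → ℝ}, Continuous a →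
      (∀ p, |a p| ≤ den p) → PG (fun p => a p / den p * κ p) := fun {a} ha hab =>
    PG.mul (PG.of_bdd (ha.div hdenc fun p => (hden p).ne') 1 fun p => by
      rw [abs_div, abs_of_pos (hden p), div_le_one (hden p)]; exact hab p) hκ
  have hW₁ : PG (fun p => f₁ p ^ 2 / den p * κ p) := hPGκ (hf₁.pow 2) fun p => by
    rw [abs_of_nonneg (sq_nonneg _)]; simp only [den]; nlinarith [sq_nonneg (f₂ p), sq_nonneg δ]
  have hW₂ : PG (fun p => f₂ p ^ 2 / den p * κ p) := hPGκ (hf₂.pow 2) fun p => by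
    rw [abs_of_nonneg (sq_nonneg _)]; simp only [den]; nlinarith [sq_nonneg (f₁ p), sq_nonneg δ]
  have hW₃ : PG (fun p => δ ^ 2 / den p * κ p) := hPGκ continuous_const fun p => by
    rw [abs_of_nonneg (sq_nonneg _)]; simp only [den]
    nlinarith [sq_nonneg (f₁ p), sq_nonneg (f₂ p)]
  have hE : ∫ x, φ' (MvPolynomial.eval x g) * MvPolynomial.eval x U ^ 2 ∂(γ n) =
      ∫ p, κ p ∂(((γ n).prod (γ n)).prod (γ n)) := by
    simp only [κ]
    rw [integral_fun_fst (fun z : (Fin n → ℝ) × (Fin n → ℝ) =>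
      φ' (MvPolynomial.eval z.1 g) * MvPolynomial.eval z.1 U ^ 2),
      integral_fun_fst (fun x : Fin n → ℝ =>
      φ' (MvPolynomial.eval x g) * MvPolynomial.eval x U ^ 2)]
    simp
  have hsplit : ∫ p, κ p ∂(((γ n).prod (γ n)).prod (γ n)) =
      ∫ p, f₁ p ^ 2 / den p * κ p ∂(((γ n).prod (γ n)).prod (γ n)) +
      ∫ p, f₂ p ^ 2 / den p * κ p ∂(((γ n).prod (γ n)).prod (γ n)) +
      ∫ p, δ ^ 2 / den p * κ p ∂(((γ n).prod (γ n)).prod (γ n)) := by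
    rw [← integral_add hW₁.integrable hW₂.integrable,
      ← integral_add (hW₁.add hW₂).integrable hW₃.integrable]
    congr 1
    ext p
    have := (hden p).ne'
    field_simp
    simp only [den]
  have hexch : ∫ p, f₂ p ^ 2 / den p * κ p ∂(((γ n).prod (γ n)).prod (γ n)) =
      ∫ p, f₁ p ^ 2 / den p * κ p ∂(((γ n).prod (γ n)).prod (γ n)) := by
    rw [← integral_exchange hW₁.continuous]
    congr 1
    ext p
    simp only [den, f₁, f₂, κ]
    rw [add_comm (dD g p.1 ^ 2)]
  have hI₁ : |∫ p, f₁ p ^ 2 / den p * κ p ∂(((γ n).prod (γ n)).prod (γ n))| ≤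
      C₁ * A * (1 / δ) * nrm2 U := by
    rw [integral_prod_symm _ hW₁.integrable]
    have hb : ∀ y₂, ‖∫ z, f₁ (z, y₂) ^ 2 / den (z, y₂) * κ (z, y₂) ∂((γ n).prod (γ n))‖ ≤
        C₁ * A * (1 / δ) * nrm2 U := fun y₂ => by
      have := ht n g (dirDeriv g y₂) U φ φ' A B δ hg
        ((totalDegree_dirDeriv_le g hg y₂).trans (by omega)) hU hφ hδ
      rw [Real.norm_eq_abs]
      refine le_trans (le_of_eq ?_) this
      congr 2
      ext z
      simp only [f₁, f₂, den, κ, eval_dirDeriv]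
      ring
    have := norm_integral_le_of_norm_le_const (μ := γ n) (Filter.Eventually.of_forall hb)
    simpa using this
  have hI₃ : |∫ p, δ ^ 2 / den p * κ p ∂(((γ n).prod (γ n)).prod (γ n))| ≤
      B * (C₂ * ((δ ^ 2) / vr g) ^ (1 / (2 * k) : ℝ) * nrm2 U) := by
    have hb := hp n g U δ hg hU hδ hv
    have hR : PG (fun p : ((Fin n → ℝ) × (Fin n → ℝ)) × (Fin n → ℝ) =>
        δ ^ 2 / den p * MvPolynomial.eval p.1.1 U ^ 2) :=
      PG.mul (PG.of_bdd (continuous_const.div hdenc fun p => (hden p).ne') 1 fun p => by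
        rw [abs_div, abs_of_pos (hden p), div_le_one (hden p), abs_of_nonneg (sq_nonneg _)]
        simp only [den]
        nlinarith [sq_nonneg (f₁ p), sq_nonneg (f₂ p)]) ((PG.eval U).pow 2).fst.fst
    have h1 := integral_assoc hR
    rw [← Real.norm_eq_abs]
    refine (norm_integral_le_of_norm_le (hR.const_mul B).integrable
      (Filter.Eventually.of_forall fun p => ?_)).trans ?_
    · simp only [κ]
      rw [Real.norm_eq_abs, abs_mul, abs_mul, abs_of_nonneg (div_nonneg (sq_nonneg δ) (hden p).le),
        abs_of_nonneg (sq_nonneg (MvPolynomial.eval p.1.1 U))]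
      have h2 := hφ.bdd' (MvPolynomial.eval p.1.1 g)
      have h3 : 0 ≤ δ ^ 2 / den p := div_nonneg (sq_nonneg δ) (hden p).le
      have h4 := sq_nonneg (MvPolynomial.eval p.1.1 U)
      calc _ = |φ' (MvPolynomial.eval p.1.1 g)| *
            (δ ^ 2 / den p * MvPolynomial.eval p.1.1 U ^ 2) := by ring
        _ ≤ _ := mul_le_mul_of_nonneg_right h2 (mul_nonneg h3 h4)
    · rw [integral_const_mul, h1]
      exact mul_le_mul_of_nonneg_left hb hB.le
  rw [hE, hsplit, hexch]
  have hx : 0 ≤ A / δ * nrm2 U := by positivity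
  have hy : 0 ≤ B * ((δ ^ 2) / vr g) ^ (1 / (2 * k) : ℝ) * nrm2 U := by positivity
  generalize ∫ p, f₁ p ^ 2 / den p * κ p ∂(((γ n).prod (γ n)).prod (γ n)) = a at *
  generalize ∫ p, δ ^ 2 / den p * κ p ∂(((γ n).prod (γ n)).prod (γ n)) = b at *
  calc |a + a + b| ≤ |a| + |a| + |b| := abs_add_three a a b
    _ ≤ 2 * (C₁ * A * (1 / δ) * nrm2 U) +
        B * (C₂ * ((δ ^ 2) / vr g) ^ (1 / (2 * k) : ℝ) * nrm2 U) := by linarith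
    _ = 2 * C₁ * (A / δ * nrm2 U) +
        C₂ * (B * ((δ ^ 2) / vr g) ^ (1 / (2 * k) : ℝ) * nrm2 U) := by ring
    _ ≤ (2 * C₁ + C₂) * (A / δ * nrm2 U) + (2 * C₁ + C₂) *
        (B * ((δ ^ 2) / vr g) ^ (1 / (2 * k) : ℝ) * nrm2 U) := by
        gcongr <;> linarith
    _ = _ := by ring

/-- The choice of `δ` balances the two terms of `MI_step_delta`. The degree of the weight drops by `k`,
which costs nothing because the induction runs over all degrees of the weight at once. -/
lemma MI_step {k : ℕ} (hk : 1 ≤ k) (D : ℕ) (hMI : MI k (k + D)) : MI (k + 1) D := by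
  obtain ⟨C, hC, h⟩ := MI_step_delta hk D hMI
  refine ⟨2 * C, by positivity, fun n g U φ φ' A B hg hU hA hB hφ hv => ?_⟩
  have hk0 : (0 : ℝ) < k := by exact_mod_cast hk
  set δ : ℝ := (A / B) ^ (k / (k + 1) : ℝ) * vr g ^ (1 / (2 * (k + 1)) : ℝ) with hδ
  have hδ0 : 0 < δ := by positivity
  refine (h n g U φ φ' A B δ hg hU hA hB hφ hv hδ0).trans (le_of_eq ?_)
  generalize vr g = v at *
  push_cast
  -- the choice of `δ` makes both terms equal to the same product of powers
  obtain ⟨a, rfl⟩ : ∃ a, A = Real.exp a := ⟨_, (Real.exp_log hA).symm⟩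
  obtain ⟨b, rfl⟩ : ∃ b, B = Real.exp b := ⟨_, (Real.exp_log hB).symm⟩
  obtain ⟨c, rfl⟩ : ∃ c, v = Real.exp c := ⟨_, (Real.exp_log hv).symm⟩
  have e0 : δ = Real.exp ((a - b) * (k / (k + 1)) + c * (1 / (2 * (k + 1)))) := by
    rw [hδ, ← Real.exp_sub, ← Real.exp_mul, ← Real.exp_mul, ← Real.exp_add]
  have e1 : Real.exp a / δ = Real.exp (a * (1 / (k + 1)) + b * (1 - 1 / (k + 1)) +
      c * (-1 / (2 * (k + 1)))) := by
    rw [e0, ← Real.exp_sub]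
    congr 1
    field_simp
    ring
  have e2 : Real.exp b * (δ ^ 2 / Real.exp c) ^ (1 / (2 * k) : ℝ) =
      Real.exp (a * (1 / (k + 1)) + b * (1 - 1 / (k + 1)) + c * (-1 / (2 * (k + 1)))) := by
    rw [e0, ← Real.exp_nat_mul, ← Real.exp_sub, ← Real.exp_mul, ← Real.exp_add]
    congr 1
    push_cast
    field_simp
    ring
  rw [e1, e2, ← Real.exp_mul, ← Real.exp_mul, ← Real.exp_mul, Real.exp_add, Real.exp_add]
  ring

lemma MI_all {d : ℕ} (hd : 1 ≤ d) : ∀ D, MI d D := by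
  induction d, hd using Nat.le_induction with
  | base => exact MI_one
  | succ k hk ih => exact fun D => MI_step hk D (ih _)

/-! ### From translation regularity to a density -/

/-- Passage from continuous to measurable test functions, by density of bounded continuous
functions in `L¹` of the sum of `ν` and its translate. -/
lemma measurable_test {ν : Measure ℝ} [IsProbabilityMeasure ν] {h K : ℝ}
    (hc : ∀ ψ : ℝ → ℝ, Continuous ψ → (∀ s, |ψ s| ≤ 1) →
      |∫ s, (ψ (s + h) - ψ s) ∂ν| ≤ K)
    {ψ : ℝ → ℝ} (hψ : Measurable ψ) (hψ1 : ∀ s, |ψ s| ≤ 1) :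
    |∫ s, (ψ (s + h) - ψ s) ∂ν| ≤ K := by
  refine le_of_forall_pos_le_add fun η hη => ?_
  have hm : Measurable (fun s : ℝ => s + h) := measurable_add_const h
  set ν' := ν.map (fun s => s + h) with hν'
  have : IsProbabilityMeasure ν' := Measure.isProbabilityMeasure_map hm.aemeasurable
  have hi : ∀ {m : Measure ℝ} [IsFiniteMeasure m] {f : ℝ → ℝ}, Measurable f → (∀ s, |f s| ≤ 1) →
      Integrable f m := fun {m} _ {f} hf hf1 =>
    Integrable.mono' (integrable_const 1) hf.aestronglyMeasurable (Filter.Eventually.of_forall hf1)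
  obtain ⟨u, hu, hui⟩ := (hi (m := ν + ν') hψ hψ1).exists_boundedContinuous_integral_sub_le hη
  let c : ℝ → ℝ := fun s => max (-1) (min 1 (u s))
  have hcc : Continuous c := continuous_const.max (continuous_const.min u.continuous)
  have hc1 : ∀ s, |c s| ≤ 1 := fun s =>
    abs_le.2 ⟨le_max_left _ _, max_le (by norm_num) (min_le_left _ _)⟩
  have hcu : ∀ s, |ψ s - c s| ≤ ‖ψ s - u s‖ := fun s => by
    have h1 := abs_le.1 (hψ1 s)
    have e : ψ s = max (-1) (min 1 (ψ s)) := by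
      rw [min_eq_right h1.2, max_eq_right h1.1]
    rw [Real.norm_eq_abs]
    conv_lhs => rw [e]
    refine (abs_max_sub_max_le_max _ _ _ _).trans ?_
    simp only [sub_self, abs_zero]
    refine max_le (abs_nonneg _) ((abs_min_sub_min_le_max _ _ _ _).trans ?_)
    simp
  have hdm : Measurable (fun s => ψ s - c s) := hψ.sub hcc.measurable
  have hdi : ∀ {m : Measure ℝ} [IsFiniteMeasure m], Integrable (fun s => ψ s - c s) m :=
    fun {m} _ => (hi hψ hψ1).sub (hi hcc.measurable hc1)
  have hb : ∫ s, |ψ s - c s| ∂ν + ∫ s, |ψ (s + h) - c (s + h)| ∂ν ≤ η := by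
    have e : ∫ s, |ψ (s + h) - c (s + h)| ∂ν = ∫ s, |ψ s - c s| ∂ν' := by
      rw [hν', integral_map hm.aemeasurable hdm.abs.aestronglyMeasurable]
    rw [e, ← integral_add_measure hdi.abs hdi.abs]
    refine le_trans (integral_mono hdi.abs ?_ hcu) hu
    exact ((hi hψ hψ1).sub hui).norm
  have hψi : Integrable (fun s => ψ s) ν := hi hψ hψ1
  have hci : Integrable (fun s => c s) ν := hi hcc.measurable hc1
  have hψhi : Integrable (fun s => ψ (s + h)) ν := hi (hψ.comp hm) fun s => hψ1 _
  have hchi : Integrable (fun s => c (s + h)) ν := hi (hcc.measurable.comp hm) fun s => hc1 _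
  have e : ∫ s, (ψ (s + h) - ψ s) ∂ν = ∫ s, (c (s + h) - c s) ∂ν +
      ((∫ s, (ψ (s + h) - c (s + h)) ∂ν) - ∫ s, (ψ s - c s) ∂ν) := by
    rw [integral_sub hψhi hψi, integral_sub hchi hci, integral_sub hψhi hchi,
      integral_sub hψi hci]
    ring
  rw [e]
  have h1 := hc c hcc hc1
  have h2 := abs_integral_le_integral_abs (f := fun s => ψ (s + h) - c (s + h)) (μ := ν)
  have h3 := abs_integral_le_integral_abs (f := fun s => ψ s - c s) (μ := ν)
  have h4 := abs_add_le (∫ s, (c (s + h) - c s) ∂ν)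
    ((∫ s, (ψ (s + h) - c (s + h)) ∂ν) - ∫ s, (ψ s - c s) ∂ν)
  have h5 := abs_sub (∫ s, (ψ (s + h) - c (s + h)) ∂ν) (∫ s, (ψ s - c s) ∂ν)
  linarith

/-- A probability measure on the line which is Hölder continuous under translations in total
variation is absolutely continuous: almost every translate of a Lebesgue null set is `ν`-null. -/
lemma absolutelyContinuous_of_test {ν : Measure ℝ} [IsProbabilityMeasure ν] {K α : ℝ}
    (hα : 0 < α)
    (hm : ∀ (h : ℝ) (ψ : ℝ → ℝ), Measurable ψ → (∀ s, |ψ s| ≤ 1) →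
      |∫ s, (ψ (s + h) - ψ s) ∂ν| ≤ K * |h| ^ α) : ν ≪ volume := by
  refine Measure.AbsolutelyContinuous.mk fun N hN hN0 => ?_
  have h1 : ∀ᵐ h : ℝ, ν ((fun s => s + h) ⁻¹' N) = 0 := by
    have hmeas : MeasurableSet {z : ℝ × ℝ | z.2 + z.1 ∈ N} :=
      (measurable_snd.add measurable_fst) hN
    have h2 : (volume.prod ν) {z : ℝ × ℝ | z.2 + z.1 ∈ N} = 0 := by
      rw [Measure.prod_apply_symm hmeas]
      simp only [Set.preimage_ofPred_eq]
      have : ∀ s : ℝ, volume {h : ℝ | s + h ∈ N} = 0 := fun s => by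
        have := measure_preimage_add (volume : Measure ℝ) s N
        rw [hN0] at this
        exact this
      simp [this]
    have h3 := (Measure.measure_prod_null hmeas).1 h2
    filter_upwards [h3] with h hh
    exact hh
  have h2 : ∀ h : ℝ, ν ((fun s => s + h) ⁻¹' N) = 0 → ν.real N ≤ K * |h| ^ α := fun h hh => by
    have hψ := hm h (N.indicator fun _ => 1) (measurable_const.indicator hN) fun s => by
      by_cases hs : s ∈ N <;> simp [hs]
    have hN' : MeasurableSet ((fun s => s + h) ⁻¹' N) := (measurable_add_const h) hN
    have e1 : (fun s => N.indicator (fun _ => (1 : ℝ)) (s + h)) =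
        ((fun s => s + h) ⁻¹' N).indicator fun _ => 1 := by
      ext s; rfl
    have i1 : Integrable (fun s => N.indicator (fun _ => (1 : ℝ)) (s + h)) ν := by
      rw [e1]; exact (integrable_const 1).indicator hN'
    have i2 : Integrable (fun s => N.indicator (fun _ => (1 : ℝ)) s) ν :=
      (integrable_const 1).indicator hN
    rw [integral_sub i1 i2, e1, integral_indicator_const _ hN', integral_indicator_const _ hN] at hψ
    have : ν.real ((fun s => s + h) ⁻¹' N) = 0 := by simp [Measure.real, hh]
    rw [this] at hψ
    rw [smul_eq_mul, smul_eq_mul, zero_mul, mul_one, zero_sub, abs_neg] at hψ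
    exact (le_abs_self _).trans hψ
  have h3 : Filter.Tendsto (fun h : ℝ => K * |h| ^ α) (nhds 0) (nhds 0) := by
    have : Continuous (fun h : ℝ => K * |h| ^ α) :=
      continuous_const.mul (continuous_abs.rpow_const fun _ => Or.inr hα.le)
    have h4 := this.tendsto 0
    simpa [Real.zero_rpow hα.ne'] using h4
  have h4 : ∃ᶠ h in nhds (0 : ℝ), ν ((fun s => s + h) ⁻¹' N) = 0 := by
    have hd := Measure.dense_of_ae h1
    exact mem_closure_iff_frequently.1 (hd 0)
  have h5 : ν.real N ≤ 0 := by
    by_contra hpos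
    push Not at hpos
    have h6 := h3.eventually (gt_mem_nhds hpos)
    obtain ⟨h, ha, hb⟩ := (h4.and_eventually h6).exists
    linarith [h2 h ha]
  have h6 : ν.real N = 0 := le_antisymm h5 measureReal_nonneg
  simpa [Measure.real, ENNReal.toReal_eq_zero_iff] using h6

/-- Translation regularity against continuous test functions yields a density whose `L¹`
modulus of continuity satisfies the same bound. -/
lemma exists_density {ν : Measure ℝ} [IsProbabilityMeasure ν] {K α : ℝ} (hα : 0 < α)
    (hc : ∀ (h : ℝ) (ψ : ℝ → ℝ), Continuous ψ → (∀ s, |ψ s| ≤ 1) →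
      |∫ s, (ψ (s + h) - ψ s) ∂ν| ≤ K * |h| ^ α) :
    ∃ ρ : ℝ → ℝ, Integrable ρ ∧ ν = volume.withDensity (fun s => ENNReal.ofReal (ρ s)) ∧
      ∀ h, ∫ s, |ρ (s + h) - ρ s| ≤ K * |h| ^ α := by
  have hm : ∀ (h : ℝ) (ψ : ℝ → ℝ), Measurable ψ → (∀ s, |ψ s| ≤ 1) →
      |∫ s, (ψ (s + h) - ψ s) ∂ν| ≤ K * |h| ^ α := fun h ψ h1 h2 =>
    measurable_test (hc h) h1 h2
  have hac := absolutelyContinuous_of_test hα hm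
  set ρ : ℝ → ℝ := fun s => (ν.rnDeriv volume s).toReal with hρ
  have hρm : Measurable ρ := (Measure.measurable_rnDeriv ν volume).ennreal_toReal
  have hρi : Integrable ρ := Measure.integrable_toReal_rnDeriv
  refine ⟨ρ, hρi, ?_, fun h => ?_⟩
  · conv_lhs => rw [← Measure.withDensity_rnDeriv_eq ν volume hac]
    refine withDensity_congr_ae ?_
    filter_upwards [Measure.rnDeriv_lt_top ν volume] with s hs
    rw [ENNReal.ofReal_toReal hs.ne]
  -- test with the sign of `ρ (s + h) - ρ s`, translating by `-h`
  let ψ : ℝ → ℝ := fun s => if 0 ≤ ρ (s + h) - ρ s then 1 else -1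
  have hψm : Measurable ψ := by
    refine Measurable.ite ?_ measurable_const measurable_const
    exact measurableSet_le measurable_const
      ((hρm.comp (measurable_add_const h)).sub hρm)
  have hψ1 : ∀ s, |ψ s| ≤ 1 := fun s => by simp only [ψ]; split_ifs <;> simp
  have hψ := hm (-h) ψ hψm hψ1
  rw [abs_neg] at hψ
  have hψhm : Measurable (fun s => ψ (s + -h)) := hψm.comp (measurable_add_const _)
  have e1 : ∫ s, (ψ (s + -h) - ψ s) ∂ν = ∫ s, ρ s * ψ (s + -h) - ρ s * ψ s := by
    rw [← integral_rnDeriv_smul hac]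
    simp only [smul_eq_mul, mul_sub, hρ]
  have i1 : Integrable (fun s => ρ s * ψ (s + -h)) :=
    hρi.mul_bdd (c := 1) hψhm.aestronglyMeasurable (Filter.Eventually.of_forall fun s => hψ1 _)
  have i2 : Integrable (fun s => ρ s * ψ s) :=
    hρi.mul_bdd (c := 1) hψm.aestronglyMeasurable (Filter.Eventually.of_forall fun s => hψ1 _)
  have i3 : Integrable (fun s => ρ (s + h) * ψ s) := by
    simpa using i1.comp_add_right h
  have e2 : ∫ s, ρ s * ψ (s + -h) = ∫ s, ρ (s + h) * ψ s := by
    rw [← integral_add_right_eq_self (fun s => ρ s * ψ (s + -h)) h]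
    simp
  rw [e1, integral_sub i1 i2, e2, ← integral_sub i3 i2] at hψ
  refine le_trans (le_of_eq ?_) ((le_abs_self _).trans hψ)
  congr 1
  ext s
  simp only [ψ]
  split_ifs with h0
  · rw [abs_of_nonneg h0]; ring
  · rw [abs_of_neg (not_le.1 h0)]; ring

/-! ### Standard and general Gaussian vectors -/

/-- The primitive difference `s ↦ ∫_s^{s+h} ψ` of a bounded continuous `ψ` is a test function. -/
lemma isTest_primitive {ψ : ℝ → ℝ} (hψ : Continuous ψ) (hψ1 : ∀ s, |ψ s| ≤ 1) (h : ℝ) :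
    IsTest (fun s => ∫ t in s..(s + h), ψ t) (fun s => ψ (s + h) - ψ s) |h| 2 where
  hasDeriv s := by
    have hF : ∀ u, HasDerivAt (fun u => ∫ t in (0 : ℝ)..u, ψ t) (ψ u) u := fun u =>
      intervalIntegral.integral_hasDerivAt_right (hψ.intervalIntegrable _ _)
        hψ.stronglyMeasurable.stronglyMeasurableAtFilter hψ.continuousAt
    have h1 := ((hF (s + h)).comp_add_const s h).fun_sub (hF s)
    refine h1.congr_of_eventuallyEq (Filter.Eventually.of_forall fun u => ?_)
    exact (intervalIntegral.integral_interval_sub_left (hψ.intervalIntegrable _ _)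
      (hψ.intervalIntegrable _ _)).symm
  cont := (hψ.comp (continuous_add_const h)).sub hψ
  bdd s := by
    have := intervalIntegral.norm_integral_le_of_norm_le_const (a := s) (b := s + h) (f := ψ)
      (C := 1) fun t _ => hψ1 t
    simpa using this
  bdd' s := by
    have := abs_sub (ψ (s + h)) (ψ s)
    linarith [hψ1 s, hψ1 (s + h)]

/-- The theorem for the standard Gaussian vector. -/
lemma density_standard {d : ℕ} (hd : 1 ≤ d) : ∃ C : ℝ, 0 < C ∧
    ∀ (n : ℕ) (g : MvPolynomial (Fin n) ℝ), g.totalDegree ≤ d → 0 < vr g →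
      ∃ ρ : ℝ → ℝ, Integrable ρ ∧
        (γ n).map (fun x => MvPolynomial.eval x g) =
          volume.withDensity (fun s => ENNReal.ofReal (ρ s)) ∧
        ∀ h, ∫ s, |ρ (s + h) - ρ s| ≤
          C * vr g ^ (-(1 : ℝ) / (2 * d)) * |h| ^ ((1 : ℝ) / d) := by
  obtain ⟨C, hC, hMI⟩ := MI_all hd 0
  have hd0 : (0 : ℝ) < d := by exact_mod_cast hd
  refine ⟨2 * C + 1, by positivity, fun n g hg hv => ?_⟩
  have hgm : Measurable (fun x => MvPolynomial.eval x g) := (PG.eval g).continuous.measurable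
  have : IsProbabilityMeasure ((γ n).map (fun x => MvPolynomial.eval x g)) :=
    Measure.isProbabilityMeasure_map hgm.aemeasurable
  refine exists_density (by positivity) fun h ψ hψ hψ1 => ?_
  have hK : 0 ≤ vr g ^ (-(1 : ℝ) / (2 * d)) * |h| ^ ((1 : ℝ) / d) := by positivity
  rcases eq_or_ne h 0 with rfl | hh
  · simp only [add_zero, sub_self, integral_zero, abs_zero]
    positivity
  have h1 := hMI n g 1 _ _ |h| 2 hg (by simp) (abs_pos.2 hh) two_pos
    (isTest_primitive hψ hψ1 h) hv
  have h2 : nrm2 (1 : MvPolynomial (Fin n) ℝ) = 1 := by simp [nrm2]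
  have h3 : (2 : ℝ) ^ (1 - 1 / d : ℝ) ≤ 2 := by
    calc (2 : ℝ) ^ (1 - 1 / d : ℝ) ≤ 2 ^ (1 : ℝ) :=
          Real.rpow_le_rpow_of_exponent_le (by norm_num) (by
            have : (0 : ℝ) ≤ 1 / d := by positivity
            linarith)
      _ = 2 := Real.rpow_one 2
  rw [integral_map hgm.aemeasurable
    (isTest_primitive hψ hψ1 h).cont.aestronglyMeasurable]
  simp only [map_one, one_pow, mul_one, h2] at h1
  refine h1.trans ?_
  calc C * |h| ^ (1 / d : ℝ) * 2 ^ (1 - 1 / d : ℝ) * vr g ^ (-1 / (2 * d) : ℝ)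
      = C * 2 ^ (1 - 1 / d : ℝ) * (vr g ^ (-(1 : ℝ) / (2 * d)) * |h| ^ ((1 : ℝ) / d)) := by ring
    _ ≤ (2 * C + 1) * (vr g ^ (-(1 : ℝ) / (2 * d)) * |h| ^ ((1 : ℝ) / d)) := by
        refine mul_le_mul_of_nonneg_right ?_ hK
        nlinarith
    _ = _ := by ring

section
variable {n : ℕ}

/-- The polynomial `x ↦ g (b + L x)`. -/
noncomputable def affineComp (g : MvPolynomial (Fin n) ℝ) (L : (Fin n → ℝ) →ₗ[ℝ] (Fin n → ℝ))
    (b : Fin n → ℝ) : MvPolynomial (Fin n) ℝ :=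
  MvPolynomial.bind₁ (fun i => MvPolynomial.C (b i) +
    ∑ j, MvPolynomial.C (L (Pi.single j 1) i) * MvPolynomial.X j) g

lemma eval_affineComp (g : MvPolynomial (Fin n) ℝ) (L : (Fin n → ℝ) →ₗ[ℝ] (Fin n → ℝ))
    (b x : Fin n → ℝ) :
    MvPolynomial.eval x (affineComp g L b) = MvPolynomial.eval (b + L x) g := by
  have hL : ∀ i, L x i = ∑ j, L (Pi.single j 1) i * x j := fun i => by
    conv_lhs => rw [LinearMap.pi_apply_eq_sum_univ L x]
    have hs : ∀ j : Fin n, (Pi.single j 1 : Fin n → ℝ) = fun i => if j = i then 1 else 0 :=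
      fun j => by ext i; simp [Pi.single_apply, eq_comm]
    simp [hs, mul_comm]
  simp only [affineComp, MvPolynomial.eval, MvPolynomial.eval₂Hom_bind₁]
  congr 2
  ext i
  simp [hL]

lemma totalDegree_affineComp_le (g : MvPolynomial (Fin n) ℝ)
    (L : (Fin n → ℝ) →ₗ[ℝ] (Fin n → ℝ)) (b : Fin n → ℝ) :
    (affineComp g L b).totalDegree ≤ g.totalDegree := by
  have hlin : ∀ i, (MvPolynomial.C (b i) +
      ∑ j, MvPolynomial.C (L (Pi.single j 1) i) * MvPolynomial.X j :
      MvPolynomial (Fin n) ℝ).totalDegree ≤ 1 := fun i => by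
    refine (MvPolynomial.totalDegree_add _ _).trans (max_le (by simp) ?_)
    refine MvPolynomial.totalDegree_finsetSum_le fun j _ => ?_
    refine (MvPolynomial.totalDegree_mul _ _).trans ?_
    simp
  unfold affineComp
  conv_lhs => rw [g.as_sum, map_sum]
  refine MvPolynomial.totalDegree_finsetSum_le fun s hs => ?_
  rw [MvPolynomial.bind₁_monomial]
  refine (MvPolynomial.totalDegree_mul _ _).trans ?_
  rw [MvPolynomial.totalDegree_C, zero_add]
  refine (MvPolynomial.totalDegree_finsetProd _ _).trans ?_
  refine le_trans ?_ (MvPolynomial.le_totalDegree hs)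
  refine Finset.sum_le_sum fun i _ => ?_
  refine (MvPolynomial.totalDegree_pow _ _).trans ?_
  exact (Nat.mul_le_mul_left _ (hlin i)).trans (by simp)

end

end GaussPoly

/-- For every `d` there is `C(d) > 0` such that for every Gaussian random vector `X` in `ℝⁿ`
and every non-constant (as a random variable) polynomial `g` of total degree at most `d`,
the distribution of `g(X)` has a density `ϱ_g` with
`ω(ϱ_g, ε) ≤ C(d) (𝔻g(X))^{-1/(2d)} ε^{1/d}`; in particular `ϱ_g ∈ B^{1/d}_{1,∞}(ℝ)`. -/
theorem density_regularity_gaussian_polynomial (d : ℕ) (hd : 1 ≤ d) :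
    ∃ C : ℝ, 0 < C ∧
      ∀ (n : ℕ) (μ : Measure (Fin n → ℝ)), IsGaussianVec μ →
        ∀ g : MvPolynomial (Fin n) ℝ, g.totalDegree ≤ d →
          0 < variance (fun x => MvPolynomial.eval x g) μ →
          ∃ ρ : ℝ → ℝ, Integrable ρ ∧
            μ.map (fun x => MvPolynomial.eval x g)
              = volume.withDensity (fun s => ENNReal.ofReal (ρ s)) ∧
            (∀ ε : ℝ, 0 < ε →
              omegaMod ρ ε ≤
                C * (variance (fun x => MvPolynomial.eval x g) μ) ^ (-(1 : ℝ) / (2 * d)) *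
                  ε ^ ((1 : ℝ) / d)) ∧
            ∃ C' : ℝ, 0 < C' ∧
              ∀ h : ℝ, (∫ t : ℝ, |ρ (t + h) - ρ t|) ≤ C' * |h| ^ ((1 : ℝ) / d) := by
  obtain ⟨C, hC, hmain⟩ := GaussPoly.density_standard hd
  refine ⟨C, hC, ?_⟩
  rintro n μ ⟨L, b, rfl⟩ g hg hv
  have hA : Measurable (fun x : Fin n → ℝ => b + L x) :=
    (continuous_const.add L.continuous_of_finiteDimensional).measurable
  have hgm : Measurable (fun x => MvPolynomial.eval x g) :=
    (GaussPoly.PG.eval g).continuous.measurable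
  have hcomp : (fun x => MvPolynomial.eval x g) ∘ (fun x : Fin n → ℝ => b + L x) =
      fun x => MvPolynomial.eval x (GaussPoly.affineComp g L b) := by
    ext x
    simp [GaussPoly.eval_affineComp]
  have hvar : variance (fun x => MvPolynomial.eval x g)
      ((_root_.stdGaussian n).map (fun x => b + L x)) =
      GaussPoly.vr (GaussPoly.affineComp g L b) := by
    rw [variance_map hgm.aemeasurable hA.aemeasurable, hcomp,
      variance_eq_integral (GaussPoly.PG.eval _).continuous.measurable.aemeasurable]
    rfl
  rw [hvar] at hv ⊢
  rw [Measure.map_map hgm hA, hcomp]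
  obtain ⟨ρ, hρ, hmap, hbd⟩ := hmain n (GaussPoly.affineComp g L b)
    ((GaussPoly.totalDegree_affineComp_le g L b).trans hg) hv
  refine ⟨ρ, hρ, hmap, fun ε hε => ?_, _, by positivity, hbd⟩
  refine csSup_le ⟨_, 0, by simpa using hε.le, rfl⟩ ?_
  rintro r ⟨h, hh, rfl⟩
  refine (hbd h).trans ?_
  gcongr
end

section
/- For every function ϱ ∈ L¹(ℝ) and every ε > 0, one has 2^{−1} ω(ϱ, 2ε) ≤ σ(ϱ, ε) ≤ 6 ω(ϱ, ε). -/
/-!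
Both inequalities rest on the translation identity
`∫ g(s) (ρ(s+h) - ρ(s)) ds = ∫ (g(s-h) - g(s)) ρ(s) ds` for bounded continuous `g`.

Lower bound: the `L¹` norm of `ρ(· + h) - ρ` is the supremum of its pairings with test functions
`g` satisfying `|g| ≤ 1` (`exists_test_pairing`). For such a `g` and `|h| ≤ 2ε`, the function
`φ(s) = -½ ∫_{s-h}^s g` is a test function with `φ' = ½ (g(· - h) - g)`, so `|φ'| ≤ 1` and
`|φ| ≤ |h| / 2 ≤ ε`, and by the identity `∫ φ' ρ` is half of the pairing (`exists_primitive`).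

Upper bound: for admissible `φ` and `0 ≤ t ≤ ε` the identity with `g = φ'` gives
`∫ φ' ρ ≤ ω(ρ, ε) + ∫ φ'(s-t) ρ(s) ds`. Averaging over `t ∈ [0, ε]` turns the last term into
`ε⁻¹ ∫ (φ(s) - φ(s-ε)) ρ(s) ds = ε⁻¹ ∫ φ(s) (ρ(s) - ρ(s+ε)) ds ≤ ω(ρ, ε)`.
Thus even `σ(ρ, ε) ≤ 2 ω(ρ, ε)` holds (`pairing_le`).
-/

open MeasureTheory

/-- The modulus `σ(ϱ, ε) = sup { ∫ φ' ϱ : φ ∈ C₀^∞(ℝ), ‖φ‖_∞ ≤ ε, ‖φ'‖_∞ ≤ 1 }`. -/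
noncomputable def sigmaMod (ρ : ℝ → ℝ) (ε : ℝ) : ℝ :=
  sSup {r : ℝ | ∃ φ : ℝ → ℝ, ContDiff ℝ (⊤ : ℕ∞) φ ∧ HasCompactSupport φ ∧
    (∀ x, |φ x| ≤ ε) ∧ (∀ x, |deriv φ x| ≤ 1) ∧ r = ∫ s : ℝ, deriv φ s * ρ s}

lemma integrable_cont_mul {f g : ℝ → ℝ} (hf : Integrable f) (hg : Continuous g) {c : ℝ}
    (hc : ∀ x, |g x| ≤ c) : Integrable (fun s => g s * f s) :=
  hf.bdd_mul hg.aestronglyMeasurable (Filter.Eventually.of_forall hc)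

lemma integral_mul_translate {ρ g : ℝ → ℝ} (hρ : Integrable ρ) (hg : Continuous g) {c : ℝ}
    (hc : ∀ x, |g x| ≤ c) (h : ℝ) :
    ∫ s, g s * (ρ (s + h) - ρ s) = ∫ s, (g (s - h) - g s) * ρ s := by
  have h1 : ∫ s, g s * ρ (s + h) = ∫ s, g (s - h) * ρ s := by
    rw [← integral_add_right_eq_self (fun s => g (s - h) * ρ s) h]
    simp
  have i1 : Integrable (fun s => g s * ρ (s + h)) :=
    integrable_cont_mul (hρ.comp_add_right h) hg hc
  have i2 : Integrable (fun s => g s * ρ s) := integrable_cont_mul hρ hg hc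
  have i3 : Integrable (fun s => g (s - h) * ρ s) :=
    integrable_cont_mul hρ (by fun_prop) (fun x => hc (x - h))
  simp only [mul_sub, sub_mul]
  rw [integral_sub i1 i2, integral_sub i3 i2, h1]

lemma integral_mul_le {f g : ℝ → ℝ} (hf : Integrable f) (hg : Continuous g) {c : ℝ}
    (hc : ∀ x, |g x| ≤ c) : ∫ s, g s * f s ≤ c * ∫ s, |f s| := by
  rw [← integral_const_mul]
  refine integral_mono (integrable_cont_mul hf hg hc) (hf.abs.const_mul c) fun s => ?_
  calc g s * f s ≤ |g s * f s| := le_abs_self _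
    _ = |g s| * |f s| := abs_mul _ _
    _ ≤ c * |f s| := by gcongr; exact hc s

lemma le_omegaMod {ρ : ℝ → ℝ} (hρ : Integrable ρ) {ε h : ℝ} (hh : |h| ≤ ε) :
    ∫ s, |ρ (s + h) - ρ s| ≤ omegaMod ρ ε := by
  refine le_csSup ⟨2 * ∫ s, |ρ s|, ?_⟩ ⟨h, hh, rfl⟩
  rintro r ⟨k, -, rfl⟩
  have hk := hρ.comp_add_right k
  calc ∫ s, |ρ (s + k) - ρ s| ≤ ∫ s, (|ρ (s + k)| + |ρ s|) :=
        integral_mono (hk.sub hρ).abs (hk.abs.add hρ.abs) fun s => abs_sub _ _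
    _ = 2 * ∫ s, |ρ s| := by
        rw [integral_add hk.abs hρ.abs, integral_add_right_eq_self (fun s => |ρ s|) k]
        ring

lemma le_sigmaMod {ρ φ : ℝ → ℝ} (hρ : Integrable ρ) {ε : ℝ} (h1 : ContDiff ℝ (⊤ : ℕ∞) φ)
    (h2 : HasCompactSupport φ) (h3 : ∀ x, |φ x| ≤ ε) (h4 : ∀ x, |deriv φ x| ≤ 1) :
    ∫ s, deriv φ s * ρ s ≤ sigmaMod ρ ε := by
  refine le_csSup ⟨1 * ∫ s, |ρ s|, ?_⟩ ⟨φ, h1, h2, h3, h4, rfl⟩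
  rintro r ⟨ψ, p1, -, -, p4, rfl⟩
  exact integral_mul_le hρ (p1.continuous_deriv (by simp)) p4

/-- Test functions bounded by `1` almost realize the `L¹` norm: approximate `f` in `L¹` by a
compactly supported continuous `k`, and smooth the continuous substitute `k / (|k| + η)` for
the sign of `k`, where `η` is a small positive integrable weight. -/
lemma exists_test_pairing {f : ℝ → ℝ} (hf : Integrable f) {δ : ℝ} (hδ : 0 < δ) :
    ∃ g : ℝ → ℝ, ContDiff ℝ (⊤ : ℕ∞) g ∧ HasCompactSupport g ∧ (∀ x, |g x| ≤ 1) ∧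
      ∫ s, |f s| ≤ (∫ s, g s * f s) + (2 + 2 * Real.pi) * δ := by
  obtain ⟨k, ksupp, kf, kcont, kint⟩ := hf.exists_hasCompactSupport_integral_sub_le hδ
  set η : ℝ → ℝ := fun x => δ * (1 + x ^ 2)⁻¹ with hη
  have ηpos : ∀ x, 0 < η x := fun x => by positivity
  have ηcont : Continuous η :=
    continuous_const.mul ((by fun_prop : Continuous fun x : ℝ => 1 + x ^ 2).inv₀
      fun x => by positivity)
  have dpos : ∀ x, 0 < |k x| + η x := fun x => add_pos_of_nonneg_of_pos (abs_nonneg _) (ηpos x)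
  have dcont : Continuous fun x => |k x| + η x := kcont.abs.add ηcont
  -- The tolerance `η / (|k| + η) = 1 - |k / (|k| + η)|` keeps the smoothing bounded by `1`.
  obtain ⟨g, gs, gd, gsupp⟩ := Continuous.exists_contDiff_approx (⊤ : ℕ∞)
    (f := fun x => k x / (|k x| + η x)) (ε := fun x => η x / (|k x| + η x))
    (kcont.div dcont fun x => (dpos x).ne') (ηcont.div dcont fun x => (dpos x).ne')
    (fun x => div_pos (ηpos x) (dpos x))
  have gsupp' : Function.support g ⊆ Function.support k := by
    intro x hx hk
    exact gsupp hx (by simp [hk])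
  have gb : ∀ x, |g x| ≤ 1 := by
    intro x
    have h1 := gd x
    rw [Real.dist_eq] at h1
    have h2 : |k x / (|k x| + η x)| = |k x| / (|k x| + η x) := by
      rw [abs_div, abs_of_pos (dpos x)]
    have h3 : |k x| / (|k x| + η x) + η x / (|k x| + η x) = 1 := by
      rw [← add_div, div_self (dpos x).ne']
    have h4 := abs_sub_abs_le_abs_sub (g x) (k x / (|k x| + η x))
    linarith
  have key : ∀ x, |f x| ≤ g x * f x + (2 * ‖f x - k x‖ + 2 * η x) := by
    intro x
    have h1 := (gd x).le
    rw [Real.dist_eq] at h1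
    have hd := dpos x
    have hn := ηpos x
    have e1 : |k x| - η x ≤ k x / (|k x| + η x) * k x := by
      rw [div_mul_eq_mul_div, le_div_iff₀ hd, ← abs_mul_abs_self (k x)]
      nlinarith
    have e2 : (k x / (|k x| + η x) - g x) * k x ≤ η x := by
      calc _ ≤ |(k x / (|k x| + η x) - g x) * k x| := le_abs_self _
        _ = |g x - k x / (|k x| + η x)| * |k x| := by rw [abs_mul, abs_sub_comm]
        _ ≤ η x / (|k x| + η x) * |k x| := by gcongr
        _ ≤ η x := by
          rw [div_mul_eq_mul_div, div_le_iff₀ hd]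
          nlinarith
    have e3 : g x * (k x - f x) ≤ ‖f x - k x‖ := by
      calc _ ≤ |g x * (k x - f x)| := le_abs_self _
        _ = |g x| * |f x - k x| := by rw [abs_mul, abs_sub_comm (k x)]
        _ ≤ 1 * |f x - k x| := by gcongr; exact gb x
        _ = _ := by rw [one_mul, Real.norm_eq_abs]
    have e4 : |f x| - |k x| ≤ ‖f x - k x‖ := abs_sub_abs_le_abs_sub _ _
    linarith
  refine ⟨g, gs, ksupp.mono gsupp', gb, ?_⟩
  have i1 := integrable_cont_mul hf gs.continuous gb
  have i2 : Integrable (fun x => 2 * ‖f x - k x‖) := (hf.sub kint).norm.const_mul 2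
  have i3 : Integrable η := integrable_inv_one_add_sq.const_mul δ
  have i4 : Integrable (fun x => 2 * ‖f x - k x‖ + 2 * η x) := i2.add (i3.const_mul 2)
  have e : ∫ x, η x = δ * Real.pi := by
    rw [hη, integral_const_mul, integral_univ_inv_one_add_sq]
  calc ∫ s, |f s| ≤ ∫ x, (g x * f x + (2 * ‖f x - k x‖ + 2 * η x)) :=
        integral_mono hf.abs (i1.add i4) key
    _ = (∫ x, g x * f x) + (2 * (∫ x, ‖f x - k x‖) + 2 * (δ * Real.pi)) := by
        rw [integral_add i1 i4, integral_add i2 (i3.const_mul 2),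
          integral_const_mul, integral_const_mul, e]
    _ ≤ _ := by linarith

/-- The function `φ(s) = -½ ∫_{s-h}^s g` is a test function with derivative
`½ (g(· - h) - g)` and `|φ| ≤ |h| / 2`. -/
lemma exists_primitive {g : ℝ → ℝ} (gs : ContDiff ℝ (⊤ : ℕ∞) g) (gc : HasCompactSupport g)
    (gb : ∀ x, |g x| ≤ 1) (h : ℝ) :
    ∃ φ : ℝ → ℝ, ContDiff ℝ (⊤ : ℕ∞) φ ∧ HasCompactSupport φ ∧ (∀ x, |φ x| ≤ |h| / 2) ∧
      ∀ x, deriv φ x = 2⁻¹ * (g (x - h) - g x) := by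
  have gcont := gs.continuous
  have gii : ∀ a b, IntervalIntegrable g volume a b := fun a b => gcont.intervalIntegrable a b
  set G : ℝ → ℝ := fun x => ∫ t in (0 : ℝ)..x, g t with hG
  have Gd : ∀ x, HasDerivAt G (g x) x := fun x => gcont.integral_hasStrictDerivAt 0 x |>.hasDerivAt
  have φd : ∀ x, HasDerivAt (fun s => 2⁻¹ * (G (s - h) - G s)) (2⁻¹ * (g (x - h) - g x)) x :=
    fun x => (((Gd (x - h)).comp_sub_const x h).sub (Gd x)).const_mul _
  have φeq : ∀ x, G (x - h) - G x = -∫ t in (x - h)..x, g t := by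
    intro x
    rw [← intervalIntegral.integral_interval_sub_left (gii 0 x) (gii 0 (x - h))]
    ring
  refine ⟨fun s => 2⁻¹ * (G (s - h) - G s), ?_, ?_, ?_, fun x => (φd x).deriv⟩
  · refine contDiff_infty_iff_deriv.2 ⟨fun x => (φd x).differentiableAt, ?_⟩
    rw [show deriv (fun s => 2⁻¹ * (G (s - h) - G s)) = fun x => 2⁻¹ * (g (x - h) - g x) from
      funext fun x => (φd x).deriv]
    exact contDiff_const.mul ((gs.comp (contDiff_id.sub contDiff_const)).sub gs)
  · obtain ⟨R, hR⟩ := gc.isCompact.isBounded.subset_closedBall 0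
    have gz : ∀ t, R < |t| → g t = 0 := by
      intro t ht
      by_contra hne
      have := hR (subset_tsupport g hne)
      rw [mem_closedBall_zero_iff, Real.norm_eq_abs] at this
      linarith
    refine HasCompactSupport.of_support_subset_isCompact
      (isCompact_closedBall (0 : ℝ) (R + |h|)) fun x hx => ?_
    rw [mem_closedBall_zero_iff, Real.norm_eq_abs]
    by_contra! hlt
    refine hx ?_
    -- Every point between `x - h` and `x` is within `|h|` of `x`, hence outside `[-R, R]`.
    have hz : ∫ t in (x - h)..x, g t = 0 := by
      rw [intervalIntegral.integral_congr (g := fun _ => (0 : ℝ))]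
      · simp
      · intro t ht
        refine gz t ?_
        have h1 := Set.abs_sub_right_of_mem_uIcc ht
        have h2 : |x - (x - h)| = |h| := by congr 1; ring
        have h3 := abs_sub_abs_le_abs_sub x t
        linarith
    simp only [φeq, hz]
    simp
  · intro x
    have h1 : ‖∫ t in (x - h)..x, g t‖ ≤ 1 * |x - (x - h)| :=
      intervalIntegral.norm_integral_le_of_norm_le_const fun t _ => gb t
    have h2 : |x - (x - h)| = |h| := by congr 1; ring
    rw [Real.norm_eq_abs, h2] at h1
    simp only [φeq]
    rw [abs_mul, abs_neg, abs_of_pos (by norm_num : (0 : ℝ) < 2⁻¹)]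
    linarith

lemma translate_le_sigmaMod {ρ : ℝ → ℝ} (hρ : Integrable ρ) {ε h : ℝ} (hh : |h| ≤ 2 * ε) :
    ∫ s, |ρ (s + h) - ρ s| ≤ 2 * sigmaMod ρ ε := by
  have hpi := Real.pi_pos
  refine le_of_forall_pos_le_add fun δ hδ => ?_
  obtain ⟨g, gs, gc, gb, hg⟩ := exists_test_pairing ((hρ.comp_add_right h).sub hρ)
    (div_pos hδ (by positivity : 0 < 2 + 2 * Real.pi))
  rw [mul_div_cancel₀ _ (by positivity)] at hg
  obtain ⟨φ, φs, φc, φb, φd⟩ := exists_primitive gs gc gb h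
  have hσ := le_sigmaMod hρ φs φc (ε := ε) (fun x => (φb x).trans (by linarith)) (fun x => by
    rw [φd, abs_mul, abs_of_pos (by norm_num : (0 : ℝ) < 2⁻¹)]
    have := abs_sub (g (x - h)) (g x)
    linarith [gb x, gb (x - h)])
  simp only [φd, mul_assoc] at hσ
  rw [integral_const_mul, ← integral_mul_translate hρ gs.continuous gb h] at hσ
  simp only [Pi.sub_apply] at hg
  linarith

lemma pairing_le {ρ φ : ℝ → ℝ} (hρ : Integrable ρ) {ε : ℝ} (hε : 0 < ε)
    (h1 : ContDiff ℝ (⊤ : ℕ∞) φ) (h3 : ∀ x, |φ x| ≤ ε) (h4 : ∀ x, |deriv φ x| ≤ 1) :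
    ∫ s, deriv φ s * ρ s ≤ 2 * omegaMod ρ ε := by
  have dc : Continuous (deriv φ) := h1.continuous_deriv (by simp)
  have hdiff : Differentiable ℝ φ := h1.differentiable (by simp)
  have step : ∀ t ∈ Set.Icc 0 ε,
      (∫ s, deriv φ s * ρ s) - omegaMod ρ ε ≤ ∫ s, deriv φ (s - t) * ρ s := by
    intro t ht
    have e := integral_mul_translate hρ dc.neg (c := 1) (fun x => by simpa using h4 x) t
    have b := integral_mul_le ((hρ.comp_add_right t).sub hρ) dc.neg (c := 1)
      (fun x => by simpa using h4 x)
    have o := le_omegaMod hρ (ε := ε) (h := t) (by rw [abs_of_nonneg ht.1]; exact ht.2)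
    have i1 := integrable_cont_mul hρ dc h4
    have i2 : Integrable (fun s => deriv φ (s - t) * ρ s) :=
      integrable_cont_mul hρ (by fun_prop) (fun x => h4 (x - t))
    have e2 : ∫ s, (-deriv φ (s - t) - -deriv φ s) * ρ s
        = (∫ s, deriv φ s * ρ s) - ∫ s, deriv φ (s - t) * ρ s := by
      rw [← integral_sub i1 i2]
      congr 1 with s
      ring
    simp only [Pi.sub_apply, Pi.neg_apply] at e b
    linarith
  have hint : Integrable (Function.uncurry fun t s : ℝ => deriv φ (s - t) * ρ s)
      ((volume.restrict (Set.uIoc 0 ε)).prod volume) := by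
    have : IsFiniteMeasure (volume.restrict (Set.uIoc 0 ε)) := by
      rw [Set.uIoc_of_le hε.le]
      infer_instance
    have i0 : Integrable (fun z : ℝ × ℝ => ρ z.2)
        ((volume.restrict (Set.uIoc 0 ε)).prod volume) := hρ.comp_snd _
    exact i0.bdd_mul (c := 1) (f := fun z : ℝ × ℝ => deriv φ (z.2 - z.1))
      (by fun_prop : Continuous fun z : ℝ × ℝ => deriv φ (z.2 - z.1)).aestronglyMeasurable
      (Filter.Eventually.of_forall fun z => h4 _)
  have swap := intervalIntegral_integral_swap hint
  have inner : ∀ s, ∫ t in (0 : ℝ)..ε, deriv φ (s - t) * ρ s = (φ s - φ (s - ε)) * ρ s := by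
    intro s
    rw [intervalIntegral.integral_mul_const, intervalIntegral.integral_comp_sub_left (deriv φ) s,
      intervalIntegral.integral_deriv_eq_sub (fun x _ => hdiff x) (dc.intervalIntegrable _ _)]
    simp
  have hii : IntervalIntegrable (fun t => ∫ s, deriv φ (s - t) * ρ s) volume 0 ε := by
    rw [intervalIntegrable_iff]
    exact hint.integral_prod_left
  have avg : ε * ((∫ s, deriv φ s * ρ s) - omegaMod ρ ε)
      ≤ ∫ t in (0 : ℝ)..ε, ∫ s, deriv φ (s - t) * ρ s := by
    have := intervalIntegral.integral_mono_on hε.le intervalIntegrable_const hii step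
    rwa [intervalIntegral.integral_const, sub_zero, smul_eq_mul] at this
  have last : ∫ s, (φ s - φ (s - ε)) * ρ s ≤ ε * omegaMod ρ ε := by
    have e := integral_mul_translate hρ h1.continuous.neg (c := ε)
      (fun x => by simpa using h3 x) ε
    have b := integral_mul_le ((hρ.comp_add_right ε).sub hρ) h1.continuous.neg (c := ε)
      (fun x => by simpa using h3 x)
    have o := le_omegaMod hρ (ε := ε) (h := ε) (abs_of_pos hε).le
    have e2 : ∫ s, (-φ (s - ε) - -φ s) * ρ s = ∫ s, (φ s - φ (s - ε)) * ρ s := by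
      congr 1 with s
      ring
    simp only [Pi.sub_apply, Pi.neg_apply] at e b
    have := mul_le_mul_of_nonneg_left o hε.le
    linarith
  rw [swap] at avg
  simp only [inner] at avg
  have : ε * ((∫ s, deriv φ s * ρ s) - omegaMod ρ ε) ≤ ε * omegaMod ρ ε := avg.trans last
  linarith [le_of_mul_le_mul_left this hε]

/-- Proposition 2 (equivalence of the two moduli of continuity):
`2⁻¹ ω(ϱ, 2ε) ≤ σ(ϱ, ε) ≤ 6 ω(ϱ, ε)` for every `ϱ ∈ L¹(ℝ)` and every `ε > 0`. -/
theorem sigma_omega_equivalence (ρ : ℝ → ℝ) (hρ : Integrable ρ) (ε : ℝ) (hε : 0 < ε) :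
    2⁻¹ * omegaMod ρ (2 * ε) ≤ sigmaMod ρ ε ∧ sigmaMod ρ ε ≤ 6 * omegaMod ρ ε := by
  constructor
  · have : omegaMod ρ (2 * ε) ≤ 2 * sigmaMod ρ ε := by
      refine csSup_le ⟨_, 0, by simp [hε.le], rfl⟩ ?_
      rintro r ⟨h, hh, rfl⟩
      exact translate_le_sigmaMod hρ hh
    linarith
  · have h0 : 0 ≤ omegaMod ρ ε := by
      simpa using le_omegaMod hρ (ε := ε) (h := 0) (by simpa using hε.le)
    refine csSup_le ⟨_, fun _ => 0, contDiff_const, HasCompactSupport.zero,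
      by simp [hε.le], by simp, rfl⟩ ?_
    rintro r ⟨φ, h1, -, h3, h4, rfl⟩
    linarith [pairing_le hρ hε h1 h3 h4]
end
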